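/- (Sewing theorem.) Let f : ℝ → ℝ be a k-quasisymmetric function on the whole real axis for some k > 0. Then there exist functions φ and φ* such that: φ is holomorphic and injective on the open upper half-plane ℍ = {z ∈ ℂ : Im z > 0}, φ* is holomorphic and injective on the open lower half-plane {z ∈ ℂ : Im z < 0}, both extend continuously to the real axis, the images φ(ℍ) and φ*({Im z < 0}) are disjoint open subsets of ℂ, and the boundary values satisfy φ(x) = φ*(f(x)) for every x ∈ ℝ. -/

import Mathlib

/-!
The two half-planes are welded by solving a Beltrami equation.

**Extension.** The Beurling–Ahlfors extension `ba f` of the quasisymmetric function `f` maps the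
upper half-plane homeomorphically onto itself, equals `f` on the real axis, and is `C¹` in the
upper half-plane with `‖dbar‖ ≤ κ ‖dee‖` for some `κ < 1` (`QS.ba_dil`). After composition with
the Cayley transform, `q = cay ∘ ba f` maps the upper half-plane onto the unit disc. It then
suffices to find an injective continuous `F`, holomorphic outside the disc, which solves the
Beltrami equation in the disc with the coefficient `μ` determined by `q`
(`μ (q w) = - dbar q w / conj (dee q w)`): this makes `F ∘ q` holomorphic.

**Beltrami equation.** `F` is the uniform limit of functions `z + cauchyT g`, with `g` a partial
sum of the Neumann series for `g = μ + μ S g`; here `S = dee ∘ cauchyT` is the Beurling transform.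
Instead of Calderón–Zygmund theory in `Lᵖ`, the series is summed in the norm `NN σ`, the supremum
over `a` of the `L²` norms with weight `|z - a| ^ (-2σ)`. An isoperimetric inequality on
circles about `a` bounds `S` in this norm with a constant tending to `1` as `σ → 0`
(`weighted_zero`, `eLpNorm_S_le`), and the norm controls the supremum of the Cauchy transform
(`cauchyT_sup`). Smooth approximate solutions suffice throughout (`Belt.neumann`, `Belt.unif`).

**Injectivity.** A value `F ζ` with `ζ` outside the disc is taken only once (`Belt.exists_F`): the
solution with a pole at `ζ`, multiplied by `F - F ζ`, is constant by Liouville's theorem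
(`prod_limit`). The composition `F ∘ q` is holomorphic by a Morera argument with `L¹` errors
(`morera_limit`, `exists_F_of_q`). Continuous logarithms on circles (`LogEq`, `no_root`), a
substitute for winding numbers, then show that `F ∘ q` is injective (`WeldData.inj_comp`) and that
`F` does not take the value `F 1` at other points of the unit circle (`WeldData.real_ne`).

**Conclusion.** Since `cay ∞ = 1`, the two maps are `φ = 1 / (F ∘ cay ∘ ba f - F 1)` on the upper
half-plane and `φ* = 1 / (F ∘ cay - F 1)` on the lower one (`lowerMap`, with the value `0` at `-i`,
where `cay` has its pole). On the real axis `ba f = f`, so `φ x = φ* (f x)`.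
-/

/-- A continuous, strictly increasing function `f` on an interval `I ⊆ ℝ` is
`k`-quasisymmetric on `I` if
`1/k ≤ (f (x+t) - f x)/(f x - f (x-t)) ≤ k`
for all `x, x - t, x + t ∈ I` with `t > 0`. -/
def QuasisymmetricOn (f : ℝ → ℝ) (k : ℝ) (I : Set ℝ) : Prop :=
  ContinuousOn f I ∧ StrictMonoOn f I ∧
    ∀ x t : ℝ, 0 < t → x ∈ I → x - t ∈ I → x + t ∈ I →
      1 / k ≤ (f (x + t) - f x) / (f x - f (x - t)) ∧
        (f (x + t) - f x) / (f x - f (x - t)) ≤ k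

open Complex MeasureTheory Set Filter Topology
open scoped ContDiff ENNReal Convolution

namespace Sewing

/-! ### Wirtinger derivatives and the Cauchy transform -/

/-- The Wirtinger derivative `∂u/∂z̄`, computed from the real Fréchet derivative. -/
noncomputable def dbar (u : ℂ → ℂ) (z : ℂ) : ℂ := (fderiv ℝ u z 1 + I * fderiv ℝ u z I) / 2

/-- The Wirtinger derivative `∂u/∂z`, computed from the real Fréchet derivative. -/
noncomputable def dee (u : ℂ → ℂ) (z : ℂ) : ℂ := (fderiv ℝ u z 1 - I * fderiv ℝ u z I) / 2

lemma clm_apply (L : ℂ →L[ℝ] ℂ) (v : ℂ) : L v = v.re * L 1 + v.im * L I := by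
  have : v = v.re • (1:ℂ) + v.im • I := by
    simp [Complex.re_add_im]
  conv_lhs => rw [this]
  rw [map_add, map_smul, map_smul, real_smul, real_smul]

lemma fderiv_eq_dee_dbar (u : ℂ → ℂ) (z v : ℂ) :
    fderiv ℝ u z v = dee u z * v + dbar u z * (starRingEnd ℂ) v := by
  rw [clm_apply, dee, dbar]
  apply Complex.ext <;> simp <;> ring

lemma polar_dbar (u : ℂ → ℂ) (z e : ℂ) :
    (fderiv ℝ u z e + I * fderiv ℝ u z (I * e)) = 2 * (dbar u z * (starRingEnd ℂ) e) := by
  rw [fderiv_eq_dee_dbar, fderiv_eq_dee_dbar u z (I * e)]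
  simp only [map_mul, conj_I]
  linear_combination (dee u z * e - dbar u z * (starRingEnd ℂ) e) * I_sq

/-- The Cauchy kernel `1 / (π ζ)`, a fundamental solution of `∂/∂z̄`. -/
noncomputable def kern (ζ : ℂ) : ℂ := (Real.pi * ζ)⁻¹

lemma kern_intOn (r : ℝ) : IntegrableOn kern (Metric.ball 0 r) := by
  have h : IntegrableOn (fun x : ℂ => (fun y : ℝ => (Real.pi * y)⁻¹) ‖x‖) (Metric.ball (0:ℂ) r) := by
    rw [integrableOn_fun_norm_addHaar volume (f := fun y : ℝ => (Real.pi * y)⁻¹)]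
    have : IntegrableOn (fun y : ℝ => (Real.pi)⁻¹) (Ioo 0 r) := by
      simp
    refine this.congr_fun ?_ measurableSet_Ioo
    intro y hy
    have := hy.1.ne'
    have := Real.pi_ne_zero
    simp [Complex.finrank_real_complex]
    field_simp
  refine Integrable.mono' h ?_ ?_
  · exact (Measurable.inv (by fun_prop)).aestronglyMeasurable
  · refine .of_forall fun z => ?_
    simp [kern, abs_of_pos Real.pi_pos]

lemma kern_locInt : LocallyIntegrable kern := by
  rw [locallyIntegrable_iff]
  intro k hk
  obtain ⟨r, hr⟩ := hk.isBounded.subset_ball 0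
  exact (kern_intOn r).mono_set hr

/-- The Cauchy transform of `g`: convolution with the Cauchy kernel. -/
noncomputable def cauchyT (g : ℂ → ℂ) (z : ℂ) : ℂ := ∫ t, kern t * g (z - t)

lemma cauchyT_eq (g : ℂ → ℂ) :
    cauchyT g = (kern ⋆[ContinuousLinearMap.mul ℝ ℂ, volume] g) := rfl

lemma cauchyT_contDiff {g : ℂ → ℂ} (hg : ContDiff ℝ ∞ g) (hc : HasCompactSupport g) :
    ContDiff ℝ ∞ (cauchyT g) := by
  rw [cauchyT_eq]
  exact HasCompactSupport.contDiff_convolution_right _ hc kern_locInt hg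

lemma fderiv_cauchyT {g : ℂ → ℂ} (hg : ContDiff ℝ ∞ g) (hc : HasCompactSupport g) (z v : ℂ) :
    fderiv ℝ (cauchyT g) z v = cauchyT (fun w => fderiv ℝ g w v) z := by
  have h1 : ContDiff ℝ 1 g := hg.of_le (by exact_mod_cast le_top)
  rw [cauchyT_eq, (hc.hasFDerivAt_convolution_right _ kern_locInt h1 z).fderiv,
    convolution_precompR_apply _ kern_locInt (hc.fderiv ℝ) (h1.continuous_fderiv (by simp))]
  rfl

lemma integrable_kern_mul {g : ℂ → ℂ} (hg : Continuous g) (hc : HasCompactSupport g) (z : ℂ) :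
    Integrable (fun t => kern t * g (z - t)) :=
  hc.convolutionExists_right (ContinuousLinearMap.mul ℝ ℂ) kern_locInt hg z

lemma cauchyT_add {g h : ℂ → ℂ} (hg : Continuous g) (hgc : HasCompactSupport g)
    (hh : Continuous h) (hhc : HasCompactSupport h) :
    cauchyT (g + h) = cauchyT g + cauchyT h := by
  ext z
  simp only [cauchyT, Pi.add_apply, mul_add]
  exact integral_add (integrable_kern_mul hg hgc z) (integrable_kern_mul hh hhc z)

lemma cauchyT_const_mul {g : ℂ → ℂ} (c : ℂ) :
    cauchyT (fun z => c * g z) = fun z => c * cauchyT g z := by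
  ext z
  simp only [cauchyT, ← integral_const_mul]
  congr 1; ext t; ring

lemma dbar_cauchyT_comm {g : ℂ → ℂ} (hg : ContDiff ℝ ∞ g) (hc : HasCompactSupport g) :
    dbar (cauchyT g) = cauchyT (dbar g) := by
  have h1 : ContDiff ℝ 1 g := hg.of_le (by exact_mod_cast le_top)
  have hcont := h1.continuous_fderiv (by simp)
  ext z
  rw [dbar, fderiv_cauchyT hg hc, fderiv_cauchyT hg hc]
  simp only [cauchyT, ← integral_const_mul]
  rw [← integral_add, ← integral_div]
  · congr 1; ext t; rw [dbar]; ring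
  · exact integrable_kern_mul (by fun_prop) (hc.fderiv_apply ℝ 1) z
  · exact (integrable_kern_mul (by fun_prop) (hc.fderiv_apply ℝ I) z).const_mul _

lemma hasDerivAt_comp_line {g : ℂ → ℂ} (hg : Differentiable ℝ g) {c : ℝ → ℂ} {c' : ℂ} {t : ℝ}
    (hc : HasDerivAt c c' t) : HasDerivAt (fun s => g (c s)) (fderiv ℝ g (c t) c') t :=
  (hg (c t)).hasFDerivAt.comp_hasDerivAt t hc

/-- `circ θ = e^{iθ}`. -/
noncomputable def circ (θ : ℝ) : ℂ := Complex.exp (θ * I)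

@[fun_prop] lemma circ_cont : Continuous circ := by unfold circ; fun_prop
lemma circ_norm (θ : ℝ) : ‖circ θ‖ = 1 := norm_exp_ofReal_mul_I θ
lemma circ_ne (θ : ℝ) : circ θ ≠ 0 := Complex.exp_ne_zero _
lemma circ_conj (θ : ℝ) : (starRingEnd ℂ) (circ θ) = (circ θ)⁻¹ := by
  rw [Complex.inv_def, normSq_eq_norm_sq, circ_norm]; simp
lemma circ_deriv (θ : ℝ) : HasDerivAt circ (circ θ * I) θ := by
  have h := ((hasDerivAt_id θ).ofReal_comp.mul_const I).cexp
  change HasDerivAt (fun θ : ℝ => Complex.exp (θ * I)) (Complex.exp (θ * I) * I) θ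
  simpa using h
lemma circ_pi : circ (-Real.pi) = circ Real.pi := by
  simp [circ, exp_mul_I]

/-- The measure `dr dθ` on `(0,∞) × (-π,π)`. -/
noncomputable def polarM : Measure (ℝ × ℝ) :=
  (volume.restrict (Ioi 0)).prod (volume.restrict (Ioo (-Real.pi) Real.pi))

lemma polarM_eq : polarM = volume.restrict (Ioi (0:ℝ) ×ˢ Ioo (-Real.pi) Real.pi) := by
  rw [polarM, Measure.prod_restrict, Measure.volume_eq_prod]

lemma polar_integrable {E : Type*} [NormedAddCommGroup E] [NormedSpace ℝ E] {f : ℂ → E}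
    (hf : Integrable f) : Integrable (fun p : ℝ × ℝ => p.1 • f (p.1 * circ p.2)) polarM := by
  rw [polarM_eq]
  have h2 := (integrableOn_image_iff_integrableOn_abs_det_fderiv_smul volume
    (measurableSet_Ioi.prod measurableSet_Ioo :
      MeasurableSet ((Ioi (0:ℝ)) ×ˢ (Ioo (-Real.pi) Real.pi)))
    (fun p _ => (hasFDerivAt_polarCoord_symm p).hasFDerivWithinAt)
    polarCoord.symm.injOn (fun x : ℝ × ℝ => f (x.1 + x.2 * I))).1 ?_
  · refine IntegrableOn.congr_fun h2 ?_ (measurableSet_Ioi.prod measurableSet_Ioo)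
    rintro ⟨r, θ⟩ ⟨hr, hθ⟩
    have hr : 0 < r := hr
    simp only [det_fderivPolarCoordSymm, polarCoord_symm_apply, abs_of_pos hr]
    have : ((r * Real.cos θ : ℝ) : ℂ) + ((r * Real.sin θ : ℝ) : ℂ) * I = r * circ θ := by
      simp only [circ, exp_mul_I]; push_cast; ring
    rw [this]
  · have h3 := (Complex.volume_preserving_equiv_real_prod.symm).integrable_comp_emb
      measurableEquivRealProd.symm.measurableEmbedding (g := f)
    refine Integrable.integrableOn ((h3.2 hf).congr (.of_forall fun x => ?_))
    simp [measurableEquivRealProd_symm_apply, Complex.mk_eq_add_mul_I]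

lemma polar_integral' {E : Type*} [NormedAddCommGroup E] [NormedSpace ℝ E] (f : ℂ → E) :
    ∫ z, f z = ∫ p, p.1 • f (p.1 * circ p.2) ∂polarM := by
  have hpol : ∀ p : ℝ × ℝ, Complex.polarCoord.symm p = p.1 * circ p.2 := fun p => by
    rw [Complex.polarCoord_symm_apply]; simp [circ, exp_mul_I]
  rw [← Complex.integral_comp_polarCoord_symm, polarM_eq]
  simp only [hpol]
  rfl

lemma polar_integral {E : Type*} [NormedAddCommGroup E] [NormedSpace ℝ E] [CompleteSpace E]
    {f : ℂ → E} (hf : Integrable f) :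
    ∫ z, f z = ∫ r in Ioi (0:ℝ), ∫ θ in Ioo (-Real.pi) Real.pi, r • f (r * circ θ) := by
  rw [polar_integral']
  exact integral_prod _ (polar_integrable hf)

/-- The Pompeiu formula: on smooth compactly supported functions the Cauchy transform inverts
`∂/∂z̄`. In polar coordinates around `z` the integrand splits into a radial derivative, which
integrates to `g z`, and an angular derivative, which integrates to zero over each circle. -/
lemma cauchyT_dbar {g : ℂ → ℂ} (hg : ContDiff ℝ ∞ g) (hc : HasCompactSupport g) :
    cauchyT (dbar g) = g := by
  have h1 : ContDiff ℝ 1 g := hg.of_le (by exact_mod_cast le_top)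
  have hcont := h1.continuous_fderiv (by simp)
  have hd : Differentiable ℝ g := h1.differentiable (by simp)
  ext z
  set e : ℝ → ℂ := circ with he
  have hen : ∀ θ, ‖e θ‖ = 1 := circ_norm
  obtain ⟨R, hR0, hR⟩ : ∃ R : ℝ, 0 < R ∧ ∀ w, R ≤ ‖w‖ → g (z - w) = 0 ∧ fderiv ℝ g (z - w) = 0 := by
    obtain ⟨R, hR⟩ := hc.isBounded.subset_closedBall z
    refine ⟨max R 0 + 1, by positivity, fun w hw => ?_⟩
    have : z - w ∉ tsupport g := fun h => by
      have := hR h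
      simp at this
      have := le_max_left R 0
      linarith
    exact ⟨image_eq_zero_of_notMem_tsupport this,
      image_eq_zero_of_notMem_tsupport (fun h => this (tsupport_fderiv_subset ℝ h))⟩
  have hU : ∀ θ r : ℝ, HasDerivAt (fun r : ℝ => g (z - r * e θ)) (fderiv ℝ g (z - r * e θ) (-e θ)) r := by
    intro θ r
    apply hasDerivAt_comp_line hd
    have := ((hasDerivAt_id r).ofReal_comp.mul_const (e θ)).const_sub z
    simpa using this
  have hV : ∀ r θ : ℝ, HasDerivAt (fun θ : ℝ => g (z - r * e θ))
      (fderiv ℝ g (z - r * e θ) (-(r * (e θ * I)))) θ := by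
    intro r θ
    apply hasDerivAt_comp_line hd
    exact ((circ_deriv θ).const_mul (r:ℂ)).const_sub z
  -- In polar coordinates the Jacobian cancels the kernel, leaving a radial and an angular derivative.
  have key : ∀ p : ℝ × ℝ, 0 < p.1 → p.1 • (kern (p.1 * e p.2) * dbar g (z - p.1 * e p.2)) =
      (2 * Real.pi : ℂ)⁻¹ * (-(fderiv ℝ g (z - p.1 * e p.2) (-e p.2))
        - (I / p.1) * fderiv ℝ g (z - p.1 * e p.2) (-(p.1 * (e p.2 * I)))) := by
    rintro ⟨r, θ⟩ hr
    simp only at hr ⊢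
    have h2 := polar_dbar g (z - r * e θ) (e θ)
    have hr' : (r:ℂ) ≠ 0 := by exact_mod_cast hr.ne'
    have hpi : (Real.pi:ℂ) ≠ 0 := by exact_mod_cast Real.pi_ne_zero
    have hconj : (starRingEnd ℂ) (e θ) = (e θ)⁻¹ := circ_conj θ
    have h3 : fderiv ℝ g (z - r * e θ) (-(r * (e θ * I))) =
      - (r * fderiv ℝ g (z - r * e θ) (I * e θ)) := by
      rw [show -(r * (e θ * I)) = -(r • (I * e θ)) by rw [real_smul]; ring]
      rw [map_neg, map_smul, real_smul]
    rw [h3, map_neg]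
    have he0 : e θ ≠ 0 := by rw [← norm_pos_iff, hen]; norm_num
    rw [hconj] at h2
    simp only [kern, real_smul]
    field_simp
    field_simp at h2
    linear_combination (-1:ℂ) * h2
  have hI1 : Integrable (fun p : ℝ × ℝ => fderiv ℝ g (z - p.1 * e p.2) (-e p.2))
      ((volume.restrict (Ioi 0)).prod (volume.restrict (Ioo (-Real.pi) Real.pi))) := by
    rw [Measure.prod_restrict]
    have hcf : Continuous (fun p : ℝ × ℝ => fderiv ℝ g (z - p.1 * e p.2) (-e p.2)) := by fun_prop
    have : IntegrableOn (fun p : ℝ × ℝ => fderiv ℝ g (z - p.1 * e p.2) (-e p.2))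
      (Icc 0 R ×ˢ Icc (-Real.pi) Real.pi) :=
      hcf.continuousOn.integrableOn_compact (isCompact_Icc.prod isCompact_Icc)
    refine this.of_forall_sdiff_eq_zero (measurableSet_Ioi.prod measurableSet_Ioo) ?_
    rintro ⟨r, θ⟩ ⟨⟨h1, h2⟩, h3⟩
    simp only [mem_prod, mem_Icc, mem_Ioi, mem_Ioo] at h1 h2 h3
    have hr : R ≤ r := by
      by_contra hlt
      exact h3 ⟨⟨h1.le, (not_le.1 hlt).le⟩, h2.1.le, h2.2.le⟩
    have := (hR (r * e θ) (by simp [hen, abs_of_pos h1, hr])).2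
    simp [this]
  calc cauchyT (dbar g) z = ∫ w, kern w * dbar g (z - w) := rfl
    _ = ∫ r in Ioi (0:ℝ), ∫ θ in Ioo (-Real.pi) Real.pi,
          r • (kern (r * e θ) * dbar g (z - r * e θ)) := by
        refine polar_integral (integrable_kern_mul (by unfold dbar; fun_prop) ?_ z)
        apply HasCompactSupport.of_support_subset_isCompact (K := tsupport g) hc
        intro w hw
        by_contra h
        apply hw
        have : fderiv ℝ g w = 0 :=
          image_eq_zero_of_notMem_tsupport (fun h' => h (tsupport_fderiv_subset ℝ h'))
        simp [dbar, this]
    _ = ∫ r in Ioi (0:ℝ), (2 * Real.pi : ℂ)⁻¹ * ∫ θ in Ioo (-Real.pi) Real.pi,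
          -(fderiv ℝ g (z - r * e θ) (-e θ)) := by
        refine setIntegral_congr_fun measurableSet_Ioi fun r hr => ?_
        have hr : 0 < r := hr
        have : ∀ θ, r • (kern (r * e θ) * dbar g (z - r * e θ)) = _ := fun θ => key (r, θ) hr
        simp only [this]
        rw [integral_const_mul, integral_sub, integral_const_mul]
        · have : ∫ θ in Ioo (-Real.pi) Real.pi, fderiv ℝ g (z - r * e θ) (-(r * (e θ * I))) = 0 := by
            rw [← integral_Ioc_eq_integral_Ioo,
              ← intervalIntegral.integral_of_le (by linarith [Real.pi_pos]),
              intervalIntegral.integral_eq_sub_of_hasDerivAt (fun θ _ => hV r θ)]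
            · simp [he, circ_pi]
            · apply Continuous.intervalIntegrable; fun_prop
          rw [this]; simp
        · apply IntegrableOn.mono_set (t := Icc (-Real.pi) Real.pi) _ Ioo_subset_Icc_self
          apply Continuous.integrableOn_Icc; fun_prop
        · apply IntegrableOn.mono_set (t := Icc (-Real.pi) Real.pi) _ Ioo_subset_Icc_self
          apply Continuous.integrableOn_Icc; fun_prop
    _ = (2 * Real.pi : ℂ)⁻¹ * ∫ θ in Ioo (-Real.pi) Real.pi, ∫ r in Ioi (0:ℝ),
          -(fderiv ℝ g (z - r * e θ) (-e θ)) := by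
        rw [integral_const_mul, integral_integral_swap]
        exact hI1.neg
    _ = (2 * Real.pi : ℂ)⁻¹ * ∫ θ in Ioo (-Real.pi) Real.pi, g z := by
        congr 1
        refine setIntegral_congr_fun measurableSet_Ioo fun θ _ => ?_
        have h0 : (fun r : ℝ => g (z - r * e θ)) =ᶠ[atTop] fun _ => 0 := by
          filter_upwards [eventually_ge_atTop R] with r hr
          exact (hR _ (by simp [hen, abs_of_pos (hR0.trans_le hr), hr])).1
        rw [integral_neg, integral_Ioi_of_hasDerivAt_of_tendsto' (m := 0) (fun r _ => hU θ r)]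
        · simp
        · have hcf : Continuous (fun r : ℝ => fderiv ℝ g (z - r * e θ) (-e θ)) := by fun_prop
          have := hcf.continuousOn.integrableOn_compact (isCompact_Icc (a := 0) (b := R)) (μ := volume)
          refine this.of_forall_sdiff_eq_zero measurableSet_Ioi ?_
          rintro r ⟨h1, h3⟩
          have h1 : 0 < r := h1
          have hr : R ≤ r := by
            by_contra hlt
            exact h3 ⟨h1.le, (not_le.1 hlt).le⟩
          have := (hR (r * e θ) (by simp [hen, abs_of_pos h1, hr])).2
          simp [this]
        · exact tendsto_const_nhds.congr' (h0.mono fun _ h => h.symm)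
    _ = g z := by
        have hpi : (Real.pi:ℂ) ≠ 0 := by exact_mod_cast Real.pi_ne_zero
        simp only [integral_const, measureReal_restrict_apply_univ]
        rw [Real.volume_real_Ioo_of_le (by linarith [Real.pi_pos]), real_smul]
        push_cast
        field_simp
        ring

lemma cauchyT_continuous {g : ℂ → ℂ} (hg : Continuous g) (hc : HasCompactSupport g) :
    Continuous (cauchyT g) := by
  rw [cauchyT_eq]
  exact hc.continuous_convolution_right _ kern_locInt hg

lemma cauchyT_eq' (g : ℂ → ℂ) (z : ℂ) : cauchyT g z = ∫ w, kern (z - w) * g w := by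
  rw [cauchyT, ← integral_sub_left_eq_self _ volume z]
  simp

lemma cauchyT_decay {g : ℂ → ℂ} (hg : Continuous g) (hc : HasCompactSupport g) :
    ∃ C, 0 ≤ C ∧ ∀ z, ‖cauchyT g z‖ ≤ C / (1 + ‖z‖) := by
  obtain ⟨R, hR⟩ := hc.isBounded.subset_closedBall 0
  set R' := max R 1 with hR'
  have hR1 : 1 ≤ R' := le_max_right _ _
  obtain ⟨B, hB⟩ := (isCompact_closedBall (0:ℂ) (2 * R')).exists_bound_of_continuousOn
    (cauchyT_continuous hg hc).continuousOn
  set L := ∫ w, ‖g w‖ with hL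
  have hL0 : 0 ≤ L := integral_nonneg fun _ => norm_nonneg _
  have hgi : Integrable g := hg.integrable_of_hasCompactSupport hc
  refine ⟨|B| * (1 + 2 * R') + 4 * L, by positivity, fun z => ?_⟩
  rw [le_div_iff₀ (by positivity)]
  rcases le_total ‖z‖ (2 * R') with h | h
  · have h1 := (hB z (by simpa using h)).trans (le_abs_self B)
    calc ‖cauchyT g z‖ * (1 + ‖z‖) ≤ |B| * (1 + 2 * R') := by gcongr
      _ ≤ _ := by linarith
  · have hz : 0 < ‖z‖ := by linarith
    have hb : ‖cauchyT g z‖ ≤ ∫ w, (2 / ‖z‖) * ‖g w‖ := by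
      rw [cauchyT_eq']
      refine norm_integral_le_of_norm_le (hgi.norm.const_mul _) (.of_forall fun w => ?_)
      rw [norm_mul]
      by_cases hw : w ∈ tsupport g
      · gcongr
        have h1 : ‖w‖ ≤ R' := (by simpa using hR hw : ‖w‖ ≤ R).trans (le_max_left _ _)
        have h2 : ‖z‖ / 2 ≤ ‖z - w‖ := by
          have := norm_sub_norm_le z w
          linarith
        have h3 : 0 < ‖z - w‖ := by linarith
        rw [kern, norm_inv, norm_mul, norm_real, Real.norm_of_nonneg Real.pi_pos.le,
          inv_eq_one_div, div_le_div_iff₀ (by have := Real.pi_pos; positivity) hz]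
        have := Real.pi_gt_three
        nlinarith
      · rw [image_eq_zero_of_notMem_tsupport hw]; simp
    rw [integral_const_mul, ← hL] at hb
    calc ‖cauchyT g z‖ * (1 + ‖z‖) ≤ (2 / ‖z‖ * L) * (2 * ‖z‖) := by gcongr; linarith
      _ = 4 * L := by field_simp; ring
      _ ≤ _ := by have : 0 ≤ |B| * (1 + 2 * R') := by positivity
                  linarith

/-! ### The area enclosed by the image of a circle -/

lemma two_le_infty : (2 : WithTop ℕ∞) ≤ ((⊤ : ℕ∞) : WithTop ℕ∞) := by
  change ((2 : ℕ∞) : WithTop ℕ∞) ≤ ((⊤ : ℕ∞) : WithTop ℕ∞)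
  exact WithTop.coe_le_coe.2 le_top

lemma polar_jac (u : ℂ → ℂ) (z : ℂ) (r θ : ℝ) :
    ((starRingEnd ℂ) (fderiv ℝ u z (circ θ)) * fderiv ℝ u z (r * (circ θ * I))).im =
      r * (‖dee u z‖ ^ 2 - ‖dbar u z‖ ^ 2) := by
  rw [fderiv_eq_dee_dbar, fderiv_eq_dee_dbar u z (r * (circ θ * I))]
  simp only [map_mul, map_add, conj_I, circ_conj, map_inv₀, inv_inv, conj_ofReal]
  set d := dee u z
  set b := dbar u z
  have h := circ_ne θ
  have h2 : (starRingEnd ℂ d * (circ θ)⁻¹ + starRingEnd ℂ b * circ θ) *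
      (d * (r * (circ θ * I)) + b * (r * ((circ θ)⁻¹ * -I))) =
      r * I * ((starRingEnd ℂ d * d) - (starRingEnd ℂ b * b)) +
      r * I * (starRingEnd ℂ b * d * (circ θ) ^ 2 - starRingEnd ℂ (starRingEnd ℂ b * d * (circ θ) ^ 2)) := by
    simp only [map_mul, map_pow, circ_conj, conj_conj]
    field_simp
    ring
  rw [h2, ← normSq_eq_conj_mul_self, ← normSq_eq_conj_mul_self, Complex.sub_conj,
    normSq_eq_norm_sq, normSq_eq_norm_sq]
  norm_num [Complex.add_im, Complex.mul_im, Complex.mul_re]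
  left; norm_cast

lemma polar_theta_sq (u : ℂ → ℂ) (z : ℂ) (r θ : ℝ) :
    ‖fderiv ℝ u z (r * (circ θ * I))‖ ^ 2 ≤ 2 * r ^ 2 * (‖dee u z‖ ^ 2 + ‖dbar u z‖ ^ 2) := by
  have h : ‖fderiv ℝ u z (r * (circ θ * I))‖ ≤ |r| * (‖dee u z‖ + ‖dbar u z‖) := by
    rw [fderiv_eq_dee_dbar]
    refine (norm_add_le _ _).trans ?_
    simp [circ_norm]
    linarith
  calc _ ≤ (|r| * (‖dee u z‖ + ‖dbar u z‖)) ^ 2 := by gcongr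
    _ = r ^ 2 * (‖dee u z‖ + ‖dbar u z‖) ^ 2 := by rw [mul_pow, sq_abs]
    _ ≤ _ := by nlinarith [sq_nonneg (‖dee u z‖ - ‖dbar u z‖), sq_nonneg r,
                  mul_nonneg (sq_nonneg r) (sq_nonneg (‖dee u z‖ - ‖dbar u z‖))]

/-- The signed area `½ ∫ Im (ū du)` enclosed by the image under `u` of the circle `‖z‖ = r`. -/
noncomputable def areaF (u : ℂ → ℂ) (r : ℝ) : ℝ :=
  (1 / 2) * ∫ θ in (-Real.pi)..Real.pi,
    ((starRingEnd ℂ) (u (r * circ θ)) * fderiv ℝ u (r * circ θ) (r * (circ θ * I))).im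

lemma hasDerivAt_u_r {u : ℂ → ℂ} (hd : Differentiable ℝ u) (r θ : ℝ) :
    HasDerivAt (fun r : ℝ => u (r * circ θ)) (fderiv ℝ u (r * circ θ) (circ θ)) r := by
  apply hasDerivAt_comp_line hd
  have := ((hasDerivAt_id r).ofReal_comp.mul_const (circ θ))
  simpa using this

lemma hasDerivAt_u_th {u : ℂ → ℂ} (hd : Differentiable ℝ u) (r θ : ℝ) :
    HasDerivAt (fun θ : ℝ => u (r * circ θ)) (fderiv ℝ u (r * circ θ) (r * (circ θ * I))) θ := by
  apply hasDerivAt_comp_line hd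
  exact ((circ_deriv θ).const_mul (r:ℂ))

set_option maxHeartbeats 1000000 in
/-- The derivative of the enclosed area is the integral of the Jacobian `‖dee u‖² - ‖dbar u‖²`
over the circle (see `polar_jac`); this is Green's formula in polar coordinates. -/
lemma hasDerivAt_areaF {u : ℂ → ℂ} (hu : ContDiff ℝ ∞ u) (r : ℝ) :
    HasDerivAt (areaF u) (∫ θ in (-Real.pi)..Real.pi,
      ((starRingEnd ℂ) (fderiv ℝ u (r * circ θ) (circ θ)) *
        fderiv ℝ u (r * circ θ) (r * (circ θ * I))).im) r := by
  have h1 : ContDiff ℝ 1 u := hu.of_le (by exact_mod_cast le_top)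
  have hd : Differentiable ℝ u := h1.differentiable (by simp)
  have hu' : ContDiff ℝ 1 (fderiv ℝ u) := hu.fderiv_right (by rw [one_add_one_eq_two]; exact two_le_infty)
  have hd' : Differentiable ℝ (fderiv ℝ u) := hu'.differentiable (by simp)
  have hc0 : Continuous u := hu.continuous
  have hc1 : Continuous (fderiv ℝ u) := hu'.continuous
  have hc2 : Continuous (fderiv ℝ (fderiv ℝ u)) := hu'.continuous_fderiv (by simp)
  set D2 := fderiv ℝ (fderiv ℝ u) with hD2
  -- `M r θ` is the mixed derivative `∂²/∂r∂θ` of `u (r e^{iθ})`.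
  set M : ℝ → ℝ → ℂ := fun r θ => D2 (r * circ θ) (circ θ) (r * (circ θ * I)) +
    fderiv ℝ u (r * circ θ) (circ θ * I) with hM
  have hMc : Continuous (fun p : ℝ × ℝ => M p.1 p.2) := by
    simp only [hM]
    have : Continuous fun p : ℝ × ℝ => D2 (p.1 * circ p.2) (circ p.2) := by
      exact (hc2.comp (by fun_prop)).clm_apply (by fun_prop)
    exact (this.clm_apply (by fun_prop)).add (by fun_prop)
  have hsymm : ∀ r θ : ℝ, M r θ = D2 (r * circ θ) (r * (circ θ * I)) (circ θ) +
      fderiv ℝ u (r * circ θ) (circ θ * I) := by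
    intro r θ
    simp only [hM]
    have := (hu.contDiffAt (x := (r * circ θ : ℂ))).isSymmSndFDerivAt (by simp [two_le_infty])
    rw [this.eq]
  have hTr : ∀ r θ : ℝ, HasDerivAt (fun r : ℝ => fderiv ℝ u (r * circ θ) (r * (circ θ * I)))
      (M r θ) r := by
    intro r θ
    have hlin : HasDerivAt (fun r : ℝ => (r : ℂ) * circ θ) (circ θ) r := by
      simpa using ((hasDerivAt_id r).ofReal_comp.mul_const (circ θ))
    have hlin2 : HasDerivAt (fun r : ℝ => (r : ℂ) * (circ θ * I)) (circ θ * I) r := by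
      simpa using ((hasDerivAt_id r).ofReal_comp.mul_const (circ θ * I))
    have := (hd' (r * circ θ)).hasFDerivAt.comp_hasDerivAt r hlin
    exact this.clm_apply hlin2
  have hRt : ∀ r θ : ℝ, HasDerivAt (fun θ : ℝ => fderiv ℝ u (r * circ θ) (circ θ)) (M r θ) θ := by
    intro r θ
    rw [hsymm]
    have := (hd' (r * circ θ)).hasFDerivAt.comp_hasDerivAt θ ((circ_deriv θ).const_mul (r:ℂ))
    exact this.clm_apply (circ_deriv θ)
  have hconj : ∀ {c : ℝ → ℂ} {c' : ℂ} {t : ℝ}, HasDerivAt c c' t →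
      HasDerivAt (fun s => (starRingEnd ℂ) (c s)) ((starRingEnd ℂ) c') t := by
    intro c c' t h
    exact h.star
  have him : ∀ {c : ℝ → ℂ} {c' : ℂ} {t : ℝ}, HasDerivAt c c' t →
      HasDerivAt (fun s => (c s).im) c'.im t := by
    intro c c' t h
    exact imCLM.hasFDerivAt.comp_hasDerivAt t h
  set F' : ℝ → ℝ → ℝ := fun r θ => ((starRingEnd ℂ) (fderiv ℝ u (r * circ θ) (circ θ)) *
      fderiv ℝ u (r * circ θ) (r * (circ θ * I)) + (starRingEnd ℂ) (u (r * circ θ)) * M r θ).im with hF'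
  have hF'c : Continuous (fun p : ℝ × ℝ => F' p.1 p.2) := by
    simp only [hF']
    refine continuous_im.comp (Continuous.add (by fun_prop) (Continuous.mul (by fun_prop) hMc))
  have hder : ∀ r θ : ℝ, HasDerivAt (fun r : ℝ => ((starRingEnd ℂ) (u (r * circ θ)) *
      fderiv ℝ u (r * circ θ) (r * (circ θ * I))).im) (F' r θ) r := by
    intro r θ
    exact him ((hconj (hasDerivAt_u_r hd r θ)).mul (hTr r θ))
  obtain ⟨B, hB⟩ := ((isCompact_Icc (a := r - 1) (b := r + 1)).prod
    (isCompact_Icc (a := -Real.pi) (b := Real.pi))).exists_bound_of_continuousOn hF'c.continuousOn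
  have hpi := Real.pi_pos
  have main := intervalIntegral.hasDerivAt_integral_of_dominated_loc_of_deriv_le
    (F := fun (r : ℝ) θ => ((starRingEnd ℂ) (u (r * circ θ)) *
      fderiv ℝ u (r * circ θ) (r * (circ θ * I))).im) (F' := F') (x₀ := r) (μ := volume)
    (s := Icc (r - 1) (r + 1)) (a := -Real.pi) (b := Real.pi) (bound := fun _ => B)
    (Icc_mem_nhds (by linarith) (by linarith))
    (.of_forall fun x => Continuous.aestronglyMeasurable (by fun_prop))
    (Continuous.intervalIntegrable (by fun_prop) _ _)
    (Continuous.aestronglyMeasurable (hF'c.comp (by fun_prop : Continuous fun θ : ℝ => (r, θ))))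
    (.of_forall fun t ht x hx => hB (x, t) ⟨hx, by
      rw [uIoc_of_le (by linarith)] at ht; exact Ioc_subset_Icc_self ht⟩)
    (by simp) (.of_forall fun t _ x _ => hder x t)
  have e1 := main.2.const_mul (1/2 : ℝ)
  convert! e1 using 1
  -- The half of the derivative that contains `M` turns into the other half by partial integration in `θ`.
  have hMr : Continuous (fun θ => M r θ) := hMc.comp (by fun_prop : Continuous fun θ : ℝ => (r, θ))
  have ibp : ∫ θ in (-Real.pi)..Real.pi, ((starRingEnd ℂ) (u (r * circ θ)) * M r θ) =
      - ∫ θ in (-Real.pi)..Real.pi, (starRingEnd ℂ) (fderiv ℝ u (r * circ θ) (r * (circ θ * I))) *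
        fderiv ℝ u (r * circ θ) (circ θ) := by
    rw [intervalIntegral.integral_mul_deriv_eq_deriv_mul
      (fun θ _ => hconj (hasDerivAt_u_th hd r θ)) (fun θ _ => hRt r θ)
      (Continuous.intervalIntegrable (by fun_prop) _ _) (hMr.intervalIntegrable _ _)]
    rw [circ_pi]; simp
  have i1 : IntervalIntegrable (fun θ => (starRingEnd ℂ) (fderiv ℝ u (r * circ θ) (circ θ)) *
      fderiv ℝ u (r * circ θ) (r * (circ θ * I))) volume (-Real.pi) Real.pi :=
    Continuous.intervalIntegrable (by fun_prop) _ _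
  have i2 : IntervalIntegrable (fun θ => (starRingEnd ℂ) (u (r * circ θ)) * M r θ)
      volume (-Real.pi) Real.pi :=
    Continuous.intervalIntegrable (by fun_prop) _ _
  have i3 : IntervalIntegrable (fun θ => (starRingEnd ℂ) (fderiv ℝ u (r * circ θ) (r * (circ θ * I))) *
        fderiv ℝ u (r * circ θ) (circ θ)) volume (-Real.pi) Real.pi :=
    Continuous.intervalIntegrable (by fun_prop) _ _
  have imint : ∀ {g : ℝ → ℂ}, IntervalIntegrable g volume (-Real.pi) Real.pi →
      ∫ θ in (-Real.pi)..Real.pi, (g θ).im = (∫ θ in (-Real.pi)..Real.pi, g θ).im := by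
    intro g hg
    exact imCLM.intervalIntegral_comp_comm hg
  simp only [hF']
  rw [imint i1, imint (i1.add i2), intervalIntegral.integral_add i1 i2, ibp, add_im, neg_im,
    ← imint i1, ← imint i3, ← intervalIntegral.integral_neg]
  have : ∀ θ, -((starRingEnd ℂ) (fderiv ℝ u (r * circ θ) (r * (circ θ * I))) *
        fderiv ℝ u (r * circ θ) (circ θ)).im = ((starRingEnd ℂ) (fderiv ℝ u (r * circ θ) (circ θ)) *
      fderiv ℝ u (r * circ θ) (r * (circ θ * I))).im := by
    intro θ
    simp only [mul_im, conj_re, conj_im]; ring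
  simp only [this]
  ring

lemma sq_integral_le {h : ℝ → ℝ} (hh : Continuous h) :
    (∫ θ in (-Real.pi)..Real.pi, h θ) ^ 2 ≤
      2 * Real.pi * ∫ θ in (-Real.pi)..Real.pi, (h θ) ^ 2 := by
  have hpi := Real.pi_pos
  set L := ∫ θ in (-Real.pi)..Real.pi, h θ with hL
  set m := L / (2 * Real.pi) with hm
  have h0 : 0 ≤ ∫ θ in (-Real.pi)..Real.pi, (h θ - m) ^ 2 :=
    intervalIntegral.integral_nonneg (by linarith) fun _ _ => sq_nonneg _
  have h1 : ∫ θ in (-Real.pi)..Real.pi, (h θ - m) ^ 2 =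
      (∫ θ in (-Real.pi)..Real.pi, (h θ) ^ 2) - 2 * m * L + 2 * Real.pi * m ^ 2 := by
    have : ∀ θ, (h θ - m) ^ 2 = (h θ) ^ 2 - 2 * m * h θ + m ^ 2 := fun θ => by ring
    simp only [this]
    rw [intervalIntegral.integral_add (Continuous.intervalIntegrable (by fun_prop) _ _)
      (by simp), intervalIntegral.integral_sub (Continuous.intervalIntegrable (by fun_prop) _ _)
      (Continuous.intervalIntegrable (by fun_prop) _ _), intervalIntegral.integral_const_mul, ← hL]
    rw [intervalIntegral.integral_const, smul_eq_mul]; ring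
  rw [h1] at h0
  have h2 : 2 * m * L - 2 * Real.pi * m ^ 2 = L ^ 2 / (2 * Real.pi) := by
    rw [hm]; field_simp; ring
  have h3 : L ^ 2 / (2 * Real.pi) ≤ ∫ θ in (-Real.pi)..Real.pi, (h θ) ^ 2 := by linarith
  rw [div_le_iff₀ (by positivity)] at h3
  linarith

/-- A crude isoperimetric inequality: the enclosed area is at most a constant times `r²` times
the energy of `u` on the circle. -/
lemma areaF_bound {u : ℂ → ℂ} (hu : ContDiff ℝ ∞ u) (r : ℝ) :
    |areaF u r| ≤ 2 * Real.pi * r ^ 2 * ∫ θ in (-Real.pi)..Real.pi,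
      (‖dee u (r * circ θ)‖ ^ 2 + ‖dbar u (r * circ θ)‖ ^ 2) := by
  have hpi := Real.pi_pos
  have h1 : ContDiff ℝ 1 u := hu.of_le (by exact_mod_cast le_top)
  have hd : Differentiable ℝ u := h1.differentiable (by simp)
  have hc0 : Continuous u := hu.continuous
  have hc1 : Continuous (fderiv ℝ u) := h1.continuous_fderiv (by simp)
  set V : ℝ → ℂ := fun θ => fderiv ℝ u (r * circ θ) (r * (circ θ * I)) with hV
  have hVc : Continuous V := by fun_prop
  have hder : ∀ θ, HasDerivAt (fun θ : ℝ => u (r * circ θ)) (V θ) θ := hasDerivAt_u_th hd r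
  set c := u (r * circ (-Real.pi)) with hc
  set L := ∫ θ in (-Real.pi)..Real.pi, ‖V θ‖ with hL
  have hV0 : ∫ θ in (-Real.pi)..Real.pi, V θ = 0 := by
    rw [intervalIntegral.integral_eq_sub_of_hasDerivAt (fun θ _ => hder θ)
      (hVc.intervalIntegrable _ _), circ_pi]; simp
  have hdiff : ∀ θ ∈ Icc (-Real.pi) Real.pi, ‖u (r * circ θ) - c‖ ≤ L := by
    intro θ hθ
    rw [hc, ← intervalIntegral.integral_eq_sub_of_hasDerivAt (fun θ _ => hder θ)
      (hVc.intervalIntegrable _ _)]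
    refine (intervalIntegral.norm_integral_le_integral_norm hθ.1).trans ?_
    exact intervalIntegral.integral_mono_interval le_rfl hθ.1 hθ.2
      (.of_forall fun _ => norm_nonneg _) (hVc.norm.intervalIntegrable _ _)
  have hL0 : 0 ≤ L := intervalIntegral.integral_nonneg (by linarith) fun _ _ => norm_nonneg _
  have hA : areaF u r = (1/2) * (∫ θ in (-Real.pi)..Real.pi,
      (starRingEnd ℂ) (u (r * circ θ) - c) * V θ).im := by
    rw [areaF]
    have i1 : IntervalIntegrable (fun θ => (starRingEnd ℂ) (u (r * circ θ)) * V θ)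
      volume (-Real.pi) Real.pi := Continuous.intervalIntegrable (by fun_prop) _ _
    have e1 : ∫ θ in (-Real.pi)..Real.pi, ((starRingEnd ℂ) (u (r * circ θ)) * V θ).im =
      (∫ θ in (-Real.pi)..Real.pi, (starRingEnd ℂ) (u (r * circ θ)) * V θ).im :=
      imCLM.intervalIntegral_comp_comm i1
    rw [e1]
    congr 2
    simp only [map_sub, sub_mul]
    rw [intervalIntegral.integral_sub (Continuous.intervalIntegrable (by fun_prop) _ _)
      (Continuous.intervalIntegrable (by fun_prop) _ _), intervalIntegral.integral_const_mul, hV0]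
    simp
  have hbd : |areaF u r| ≤ (1/2) * L ^ 2 := by
    rw [hA, abs_mul, abs_of_pos (by norm_num : (0:ℝ) < 1/2)]
    gcongr
    refine (Complex.abs_im_le_norm _).trans ?_
    refine (intervalIntegral.norm_integral_le_integral_norm (by linarith)).trans ?_
    calc _ ≤ ∫ θ in (-Real.pi)..Real.pi, L * ‖V θ‖ := by
          refine intervalIntegral.integral_mono_on (by linarith)
            (Continuous.intervalIntegrable (by fun_prop) _ _)
            (Continuous.intervalIntegrable (by fun_prop) _ _) fun θ hθ => ?_
          rw [norm_mul, RCLike.norm_conj]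
          gcongr
          exact hdiff θ hθ
      _ = L ^ 2 := by rw [intervalIntegral.integral_const_mul]; ring
  have hsq := sq_integral_le hVc.norm
  have hsum : ∫ θ in (-Real.pi)..Real.pi, ‖V θ‖ ^ 2 ≤ ∫ θ in (-Real.pi)..Real.pi,
      2 * r ^ 2 * (‖dee u (r * circ θ)‖ ^ 2 + ‖dbar u (r * circ θ)‖ ^ 2) := by
    refine intervalIntegral.integral_mono_on (by linarith)
      (Continuous.intervalIntegrable (by fun_prop) _ _)
      (Continuous.intervalIntegrable (by unfold dee dbar; fun_prop) _ _) fun θ hθ => ?_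
    exact polar_theta_sq u _ r θ
  rw [intervalIntegral.integral_const_mul] at hsum
  have := mul_le_mul_of_nonneg_left hsum hpi.le
  nlinarith

lemma integrable_decay_weight {σ : ℝ} (h0 : 0 < σ) (h1 : σ < 1 / 2) :
    Integrable (fun z : ℂ => (1 + ‖z‖) ^ (-2 : ℝ) * ‖z‖ ^ (-2 * σ)) := by
  rw [integrable_fun_norm_addHaar volume (f := fun y : ℝ => (1 + y) ^ (-2 : ℝ) * y ^ (-2 * σ))]
  simp only [Complex.finrank_real_complex, Nat.add_one_sub_one, pow_one, smul_eq_mul]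
  have hm : ∀ s : Set ℝ, AEStronglyMeasurable
      (fun y : ℝ => y * ((1 + y) ^ (-2 : ℝ) * y ^ (-2 * σ))) (volume.restrict s) :=
    fun s => Measurable.aestronglyMeasurable (by fun_prop)
  rw [← Ioc_union_Ioi_eq_Ioi zero_le_one, integrableOn_union]
  constructor
  · have : IntegrableOn (fun y : ℝ => y ^ (1 - 2 * σ)) (Ioc 0 1) := by
      rw [← intervalIntegrable_iff_integrableOn_Ioc_of_le zero_le_one]
      exact intervalIntegral.intervalIntegrable_rpow' (by linarith)
    refine Integrable.mono' this (hm _) ?_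
    refine (ae_restrict_iff' measurableSet_Ioc).2 (.of_forall fun y hy => ?_)
    have hy0 : 0 < y := hy.1
    rw [Real.norm_of_nonneg (by positivity)]
    have e : y ^ (1 - 2 * σ) = y * y ^ (-2 * σ) := by
      rw [sub_eq_add_neg, Real.rpow_add hy0, Real.rpow_one]; ring_nf
    rw [e]
    gcongr
    have : (1 + y) ^ (-2 : ℝ) ≤ 1 := Real.rpow_le_one_of_one_le_of_nonpos (by linarith) (by norm_num)
    have h2 : 0 ≤ y ^ (-2 * σ) := by positivity
    nlinarith
  · have : IntegrableOn (fun y : ℝ => y ^ (-1 - 2 * σ)) (Ioi 1) :=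
      integrableOn_Ioi_rpow_of_lt (by linarith) zero_lt_one
    refine Integrable.mono' this (hm _) ?_
    refine (ae_restrict_iff' measurableSet_Ioi).2 (.of_forall fun y hy => ?_)
    have hy0 : 0 < y := lt_trans zero_lt_one hy
    rw [Real.norm_of_nonneg (by positivity)]
    have e : y ^ (-1 - 2 * σ) = y * (y ^ (-2 : ℝ) * y ^ (-2 * σ)) := by
      rw [← Real.rpow_add hy0]
      nth_rw 2 [← Real.rpow_one y]
      rw [← Real.rpow_add hy0]; ring_nf
    rw [e]
    gcongr ?_ * (?_ * ?_)
    exact Real.rpow_le_rpow_of_nonpos hy0 (by linarith) (by norm_num)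

/-! ### Weighted energies of the Wirtinger derivatives -/

lemma norm_dee_le (u : ℂ → ℂ) (z : ℂ) : ‖dee u z‖ ≤ ‖fderiv ℝ u z‖ := by
  have h1 := (fderiv ℝ u z).le_opNorm 1
  have h2 := (fderiv ℝ u z).le_opNorm I
  have h3 := norm_sub_le (fderiv ℝ u z 1) (I * fderiv ℝ u z I)
  simp only [norm_one, norm_I, mul_one, one_mul, norm_mul] at h1 h2 h3
  rw [dee, norm_div, Complex.norm_ofNat]
  linarith

lemma norm_dbar_le (u : ℂ → ℂ) (z : ℂ) : ‖dbar u z‖ ≤ ‖fderiv ℝ u z‖ := by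
  have h1 := (fderiv ℝ u z).le_opNorm 1
  have h2 := (fderiv ℝ u z).le_opNorm I
  have h3 := norm_add_le (fderiv ℝ u z 1) (I * fderiv ℝ u z I)
  simp only [norm_one, norm_I, mul_one, one_mul, norm_mul] at h1 h2 h3
  rw [dbar, norm_div, Complex.norm_ofNat]
  linarith

/-- For the weight `‖z‖ ^ (-2σ)` the energies of `dee u` and `dbar u` nearly agree. Their
difference is the integral of `r ^ (-2σ)` against the derivative of the enclosed area, so by
partial integration it is `2σ` times an integral of the area, which `areaF_bound` controls. -/
lemma weighted_zero {u : ℂ → ℂ} (hu : ContDiff ℝ ∞ u) {C : ℝ}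
    (hb : ∀ z, ‖fderiv ℝ u z‖ ≤ C / (1 + ‖z‖)) {σ : ℝ} (h0 : 0 < σ) (h1 : σ < 1 / 2) :
    Integrable (fun z => ‖dee u z‖ ^ 2 * ‖z‖ ^ (-2 * σ)) ∧
    Integrable (fun z => ‖dbar u z‖ ^ 2 * ‖z‖ ^ (-2 * σ)) ∧
    |(∫ z, ‖dee u z‖ ^ 2 * ‖z‖ ^ (-2 * σ)) - ∫ z, ‖dbar u z‖ ^ 2 * ‖z‖ ^ (-2 * σ)| ≤
      4 * Real.pi * σ * ((∫ z, ‖dee u z‖ ^ 2 * ‖z‖ ^ (-2 * σ)) +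
        ∫ z, ‖dbar u z‖ ^ 2 * ‖z‖ ^ (-2 * σ)) := by
  have hpi := Real.pi_pos
  have hu1 : ContDiff ℝ 1 u := hu.of_le (by exact_mod_cast le_top)
  have hd : Differentiable ℝ u := hu1.differentiable (by simp)
  have hc1 : Continuous (fderiv ℝ u) := hu1.continuous_fderiv (by simp)
  have hdc : Continuous (dee u) := by unfold dee; fun_prop
  have hbc : Continuous (dbar u) := by unfold dbar; fun_prop
  have hsq : ∀ z : ℂ, C ^ 2 * ((1 + ‖z‖) ^ (-2 : ℝ)) = (C / (1 + ‖z‖)) ^ 2 := by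
    intro z
    rw [Real.rpow_neg (by positivity), div_pow, div_eq_mul_inv]; norm_cast
  have hbD : ∀ z, ‖dee u z‖ ^ 2 ≤ (C / (1 + ‖z‖)) ^ 2 := fun z =>
    pow_le_pow_left₀ (norm_nonneg _) ((norm_dee_le u z).trans (hb z)) 2
  have hbB : ∀ z, ‖dbar u z‖ ^ 2 ≤ (C / (1 + ‖z‖)) ^ 2 := fun z =>
    pow_le_pow_left₀ (norm_nonneg _) ((norm_dbar_le u z).trans (hb z)) 2
  have hInt : ∀ {g : ℂ → ℝ}, Continuous g → (∀ z, 0 ≤ g z) → (∀ z, g z ≤ (C / (1 + ‖z‖)) ^ 2) →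
      Integrable (fun z => g z * ‖z‖ ^ (-2 * σ)) := by
    intro g hg hg0 hg1
    refine Integrable.mono' ((integrable_decay_weight h0 h1).const_mul (C ^ 2))
      (Measurable.aestronglyMeasurable (by fun_prop)) (.of_forall fun z => ?_)
    rw [Real.norm_of_nonneg (mul_nonneg (hg0 z) (by positivity)), ← mul_assoc, hsq]
    exact mul_le_mul_of_nonneg_right (hg1 z) (by positivity)
  have hID := hInt (by fun_prop : Continuous fun z => ‖dee u z‖ ^ 2) (fun z => by positivity) hbD
  have hIB := hInt (by fun_prop : Continuous fun z => ‖dbar u z‖ ^ 2) (fun z => by positivity) hbB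
  refine ⟨hID, hIB, ?_⟩
  set A' : ℝ → ℝ := fun r => ∫ θ in (-Real.pi)..Real.pi,
      ((starRingEnd ℂ) (fderiv ℝ u (r * circ θ) (circ θ)) *
        fderiv ℝ u (r * circ θ) (r * (circ θ * I))).im with hA'
  have hnrm : ∀ r : ℝ, 0 < r → ∀ θ, ‖(r : ℂ) * circ θ‖ = r := fun r hr θ => by
    simp [circ_norm, abs_of_pos hr]
  have hIoo : ∀ g : ℝ → ℝ, ∫ θ in Ioo (-Real.pi) Real.pi, g θ = ∫ θ in (-Real.pi)..Real.pi, g θ := by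
    intro g
    rw [intervalIntegral.integral_of_le (by linarith), integral_Ioc_eq_integral_Ioo]
  -- In polar coordinates the difference of the energies is `∫ r ^ (-2σ) d(areaF u r)`.
  have hdiffI : Integrable (fun z => ‖dee u z‖ ^ 2 * ‖z‖ ^ (-2 * σ) - ‖dbar u z‖ ^ 2 * ‖z‖ ^ (-2 * σ)) :=
    hID.sub hIB
  have hsumI : Integrable (fun z => ‖dee u z‖ ^ 2 * ‖z‖ ^ (-2 * σ) + ‖dbar u z‖ ^ 2 * ‖z‖ ^ (-2 * σ)) :=
    hID.add hIB
  have hinner : ∀ r ∈ Ioi (0:ℝ), (∫ θ in Ioo (-Real.pi) Real.pi,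
      r • (‖dee u (r * circ θ)‖ ^ 2 * ‖r * circ θ‖ ^ (-2 * σ) -
        ‖dbar u (r * circ θ)‖ ^ 2 * ‖r * circ θ‖ ^ (-2 * σ))) = r ^ (-2 * σ) * A' r := by
    intro r hr
    simp only [hnrm r hr]
    rw [hIoo, hA', ← intervalIntegral.integral_const_mul]
    congr 1; ext θ
    rw [polar_jac, smul_eq_mul]; ring
  have hinner2 : ∀ r ∈ Ioi (0:ℝ), (∫ θ in Ioo (-Real.pi) Real.pi,
      r • (‖dee u (r * circ θ)‖ ^ 2 * ‖r * circ θ‖ ^ (-2 * σ) +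
        ‖dbar u (r * circ θ)‖ ^ 2 * ‖r * circ θ‖ ^ (-2 * σ))) =
      r * r ^ (-2 * σ) * ∫ θ in (-Real.pi)..Real.pi,
      (‖dee u (r * circ θ)‖ ^ 2 + ‖dbar u (r * circ θ)‖ ^ 2) := by
    intro r hr
    simp only [hnrm r hr]
    rw [hIoo, ← intervalIntegral.integral_const_mul]
    congr 1; ext θ
    rw [smul_eq_mul]; ring
  have hIdiff : IntegrableOn (fun r : ℝ => r ^ (-2 * σ) * A' r) (Ioi 0) :=
    IntegrableOn.congr_fun (polar_integrable hdiffI).integral_prod_left hinner measurableSet_Ioi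
  have hIsum : IntegrableOn (fun r : ℝ => r * r ^ (-2 * σ) * ∫ θ in (-Real.pi)..Real.pi,
      (‖dee u (r * circ θ)‖ ^ 2 + ‖dbar u (r * circ θ)‖ ^ 2)) (Ioi 0) :=
    IntegrableOn.congr_fun (polar_integrable hsumI).integral_prod_left hinner2 measurableSet_Ioi
  have hAder : ∀ r, HasDerivAt (areaF u) (A' r) r := fun r => hasDerivAt_areaF hu r
  have hAc : Continuous (areaF u) := continuous_iff_continuousAt.2 fun r => (hAder r).continuousAt
  have hwder : ∀ r ∈ Ioi (0:ℝ), HasDerivAt (fun r : ℝ => r ^ (-2 * σ)) ((-2 * σ) * r ^ (-2 * σ - 1)) r :=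
    fun r hr => Real.hasDerivAt_rpow_const (Or.inl (ne_of_gt hr))
  have hptw : ∀ r ∈ Ioi (0:ℝ), ‖(-2 * σ) * r ^ (-2 * σ - 1) * areaF u r‖ ≤
      4 * Real.pi * σ * (r * r ^ (-2 * σ) * ∫ θ in (-Real.pi)..Real.pi,
      (‖dee u (r * circ θ)‖ ^ 2 + ‖dbar u (r * circ θ)‖ ^ 2)) := by
    intro r hr
    have hr : 0 < r := hr
    have := areaF_bound hu r
    rw [norm_mul, norm_mul, norm_mul, Real.norm_eq_abs, Real.norm_eq_abs, Real.norm_eq_abs,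
      Real.norm_eq_abs, abs_of_pos h0, abs_of_pos (Real.rpow_pos_of_pos hr _)]
    have e : r ^ (-2 * σ) = r * r ^ (-2 * σ - 1) := by
      rw [Real.rpow_sub_one hr.ne']; field_simp
    have hp := Real.rpow_pos_of_pos hr (-2 * σ - 1)
    rw [e]
    refine (mul_le_mul_of_nonneg_left this (by positivity)).trans (le_of_eq ?_)
    ·  rw [abs_of_neg (by norm_num)]; ring
  have hIA : IntegrableOn (fun r : ℝ => (-2 * σ) * r ^ (-2 * σ - 1) * areaF u r) (Ioi 0) := by
    refine Integrable.mono' (hIsum.const_mul (4 * Real.pi * σ)) ?_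
      ((ae_restrict_iff' measurableSet_Ioi).2 (.of_forall hptw))
    exact Measurable.aestronglyMeasurable (by fun_prop)
  -- `areaF u r` is `O(r²)` at `0` and bounded at `∞`, so `r ^ (-2σ) * areaF u r` vanishes at both ends.
  have hbd : ∀ r : ℝ, 0 < r → |areaF u r| ≤ 8 * Real.pi ^ 2 * C ^ 2 * (r / (1 + r)) ^ 2 := by
    intro r hr
    refine (areaF_bound hu r).trans ?_
    have : ∫ θ in (-Real.pi)..Real.pi, (‖dee u (r * circ θ)‖ ^ 2 + ‖dbar u (r * circ θ)‖ ^ 2) ≤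
        ∫ θ in (-Real.pi)..Real.pi, 2 * (C / (1 + r)) ^ 2 := by
      refine intervalIntegral.integral_mono_on (by linarith)
        (Continuous.intervalIntegrable (by fun_prop) _ _) (by simp) fun θ _ => ?_
      have e1 := hbD (r * circ θ)
      have e2 := hbB (r * circ θ)
      rw [hnrm r hr] at e1 e2
      linarith
    rw [intervalIntegral.integral_const, smul_eq_mul] at this
    calc _ ≤ 2 * Real.pi * r ^ 2 * ((Real.pi - -Real.pi) * (2 * (C / (1 + r)) ^ 2)) := by gcongr
      _ = _ := by field_simp; ring
  have hbd1 : ∀ r : ℝ, 0 < r → ‖r ^ (-2 * σ) * areaF u r‖ ≤ 8 * Real.pi ^ 2 * C ^ 2 * r ^ (-2 * σ) := by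
    intro r hr
    have hq : (r / (1 + r)) ^ 2 ≤ 1 := by
      apply pow_le_one₀ (by positivity)
      rw [div_le_one (by positivity)]; linarith
    rw [norm_mul, Real.norm_eq_abs, Real.norm_eq_abs, abs_of_pos (Real.rpow_pos_of_pos hr _)]
    have := (hbd r hr).trans (mul_le_mul_of_nonneg_left hq (by positivity))
    nlinarith [Real.rpow_pos_of_pos hr (-2 * σ)]
  have hbd2 : ∀ r : ℝ, 0 < r → ‖r ^ (-2 * σ) * areaF u r‖ ≤ 8 * Real.pi ^ 2 * C ^ 2 * r ^ (2 - 2 * σ) := by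
    intro r hr
    have hq : (r / (1 + r)) ^ 2 ≤ r ^ 2 := by
      apply pow_le_pow_left₀ (by positivity)
      rw [div_le_iff₀ (by positivity)]; nlinarith
    rw [norm_mul, Real.norm_eq_abs, Real.norm_eq_abs, abs_of_pos (Real.rpow_pos_of_pos hr _)]
    have h3 := (hbd r hr).trans (mul_le_mul_of_nonneg_left hq (by positivity))
    have e : r ^ (2 - 2 * σ) = r ^ (-2 * σ) * r ^ 2 := by
      rw [← Real.rpow_natCast, ← Real.rpow_add hr]; congr 1; push_cast; ring
    rw [e]
    nlinarith [Real.rpow_pos_of_pos hr (-2 * σ)]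
  have ht0 : Tendsto ((fun r : ℝ => r ^ (-2 * σ)) * areaF u) (𝓝[>] 0) (𝓝 0) := by
    apply squeeze_zero_norm' (a := fun r => 8 * Real.pi ^ 2 * C ^ 2 * r ^ (2 - 2 * σ))
    · filter_upwards [self_mem_nhdsWithin] with r hr using hbd2 r hr
    · have : Tendsto (fun r : ℝ => r ^ (2 - 2 * σ)) (𝓝[>] 0) (𝓝 (0 ^ (2 - 2 * σ))) :=
        ((Real.continuousAt_rpow_const 0 (2 - 2 * σ) (Or.inr (by linarith))).tendsto).mono_left
          nhdsWithin_le_nhds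
      rw [Real.zero_rpow (by linarith)] at this
      simpa using this.const_mul (8 * Real.pi ^ 2 * C ^ 2)
  have hti : Tendsto ((fun r : ℝ => r ^ (-2 * σ)) * areaF u) atTop (𝓝 0) := by
    apply squeeze_zero_norm' (a := fun r => 8 * Real.pi ^ 2 * C ^ 2 * r ^ (-2 * σ))
    · filter_upwards [eventually_gt_atTop 0] with r hr using hbd1 r hr
    · have : Tendsto (fun r : ℝ => r ^ (-2 * σ)) atTop (𝓝 0) := by
        rw [neg_mul]; exact tendsto_rpow_neg_atTop (by positivity)
      simpa using this.const_mul (8 * Real.pi ^ 2 * C ^ 2)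
  have ibp := integral_Ioi_mul_deriv_eq_deriv_mul hwder (fun r _ => hAder r) hIdiff hIA ht0 hti
  have e1 : (∫ z, ‖dee u z‖ ^ 2 * ‖z‖ ^ (-2 * σ)) - ∫ z, ‖dbar u z‖ ^ 2 * ‖z‖ ^ (-2 * σ) =
      ∫ r in Ioi (0:ℝ), r ^ (-2 * σ) * A' r := by
    rw [← integral_sub hID hIB, polar_integral hdiffI]
    exact setIntegral_congr_fun measurableSet_Ioi hinner
  have e2 : (∫ z, ‖dee u z‖ ^ 2 * ‖z‖ ^ (-2 * σ)) + ∫ z, ‖dbar u z‖ ^ 2 * ‖z‖ ^ (-2 * σ) =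
      ∫ r in Ioi (0:ℝ), r * r ^ (-2 * σ) * ∫ θ in (-Real.pi)..Real.pi,
      (‖dee u (r * circ θ)‖ ^ 2 + ‖dbar u (r * circ θ)‖ ^ 2) := by
    rw [← integral_add hID hIB, polar_integral hsumI]
    exact setIntegral_congr_fun measurableSet_Ioi hinner2
  rw [e1, e2, ibp, sub_zero, zero_sub, abs_neg, ← integral_const_mul]
  rw [← Real.norm_eq_abs]
  refine norm_integral_le_of_norm_le (hIsum.const_mul _) ?_
  exact (ae_restrict_iff' measurableSet_Ioi).2 (.of_forall hptw)

/-! ### Weighted bounds for the Beurling and Cauchy transforms -/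

lemma fderiv_cauchyT_decay {g : ℂ → ℂ} (hg : ContDiff ℝ ∞ g) (hc : HasCompactSupport g) :
    ∃ C, 0 ≤ C ∧ ∀ z, ‖fderiv ℝ (cauchyT g) z‖ ≤ C / (1 + ‖z‖) := by
  have hs : ∀ v : ℂ, ContDiff ℝ ∞ (fun w => fderiv ℝ g w v) := fun v =>
    (hg.fderiv_right (m := ((⊤:ℕ∞):WithTop ℕ∞)) (by simp)).clm_apply contDiff_const
  have hcs : ∀ v : ℂ, HasCompactSupport (fun w => fderiv ℝ g w v) := fun v => hc.fderiv_apply ℝ v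
  obtain ⟨C1, h1, hC1⟩ := cauchyT_decay (hs 1).continuous (hcs 1)
  obtain ⟨C2, h2, hC2⟩ := cauchyT_decay (hs I).continuous (hcs I)
  refine ⟨C1 + C2, by positivity, fun z => ?_⟩
  refine ContinuousLinearMap.opNorm_le_bound _ (by positivity) fun v => ?_
  have e : fderiv ℝ (cauchyT g) z v = v.re • fderiv ℝ (cauchyT g) z 1 + v.im • fderiv ℝ (cauchyT g) z I := by
    rw [← map_smul, ← map_smul, ← map_add]; congr 1; apply Complex.ext <;> simp
  rw [e, fderiv_cauchyT hg hc, fderiv_cauchyT hg hc]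
  refine (norm_add_le _ _).trans ?_
  rw [norm_smul, norm_smul, Real.norm_eq_abs, Real.norm_eq_abs]
  have := abs_re_le_norm v
  have := abs_im_le_norm v
  have a1 := hC1 z
  have a2 := hC2 z
  calc _ ≤ ‖v‖ * (C1 / (1 + ‖z‖)) + ‖v‖ * (C2 / (1 + ‖z‖)) := by gcongr
    _ = _ := by ring

/-- The measure with density `‖z - a‖ ^ (-2σ)`. -/
noncomputable def nu (σ : ℝ) (a : ℂ) : Measure ℂ :=
  volume.withDensity fun z => ENNReal.ofReal (‖z - a‖ ^ (-2 * σ))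

lemma lintegral_nu (σ : ℝ) (a : ℂ) {h : ℂ → ℝ≥0∞} (hh : Measurable h) :
    ∫⁻ z, h z ∂(nu σ a) = ∫⁻ z, ENNReal.ofReal (‖z - a‖ ^ (-2 * σ)) * h z := by
  rw [nu, lintegral_withDensity_eq_lintegral_mul _ (by fun_prop) hh]; rfl

lemma eLpNorm_nu (σ : ℝ) (a : ℂ) {g : ℂ → ℂ} (hg : Measurable g) :
    eLpNorm g 2 (nu σ a) =
      (∫⁻ z, ENNReal.ofReal (‖z - a‖ ^ (-2 * σ)) * ‖g z‖ₑ ^ 2) ^ (1 / 2 : ℝ) := by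
  rw [eLpNorm_eq_lintegral_rpow_enorm_toReal (by simp) (by simp)]
  rw [lintegral_nu σ a (by fun_prop)]
  norm_num

lemma eLpNorm_nu' (σ : ℝ) (a : ℂ) {g : ℂ → ℂ} (hg : Measurable g) :
    eLpNorm g 2 (nu σ a) =
      (∫⁻ z, ENNReal.ofReal (‖g (a + z)‖ ^ 2 * ‖z‖ ^ (-2 * σ))) ^ (1 / 2 : ℝ) := by
  rw [eLpNorm_nu σ a hg, ← lintegral_add_left_eq_self _ a]
  congr 2; ext z
  rw [add_sub_cancel_left, mul_comm, ENNReal.ofReal_mul (by positivity), ENNReal.ofReal_pow (by positivity),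
    ofReal_norm]

/-- The Beurling transform `g ↦ dee (cauchyT g)` is bounded on the weighted `L²` spaces,
uniformly in the centre `a`, with a bound tending to `1` as `σ → 0`. -/
lemma eLpNorm_S_le {g : ℂ → ℂ} (hg : ContDiff ℝ ∞ g) (hc : HasCompactSupport g) {σ : ℝ}
    (h0 : 0 < σ) (h1 : 4 * Real.pi * σ < 1) (a : ℂ) :
    eLpNorm (dee (cauchyT g)) 2 (nu σ a) ≤
      ENNReal.ofReal (Real.sqrt ((1 + 4 * Real.pi * σ) / (1 - 4 * Real.pi * σ))) * eLpNorm g 2 (nu σ a) := by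
  have hpi := Real.pi_gt_three
  obtain ⟨C, hC0, hC⟩ := fderiv_cauchyT_decay hg hc
  have hsm := cauchyT_contDiff hg hc
  have hu1 : ContDiff ℝ 1 (cauchyT g) := hsm.of_le (by exact_mod_cast le_top)
  have hc1 : Continuous (fderiv ℝ (cauchyT g)) := hu1.continuous_fderiv (by simp)
  have hdc : Continuous (dee (cauchyT g)) := by unfold dee; fun_prop
  set v : ℂ → ℂ := fun z => cauchyT g (a + z) with hv
  have hvs : ContDiff ℝ ∞ v := hsm.comp (contDiff_const.add contDiff_id)
  have hfd : ∀ z, fderiv ℝ v z = fderiv ℝ (cauchyT g) (a + z) := fun z => fderiv_comp_add_left a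
  have hdee : ∀ z, dee v z = dee (cauchyT g) (a + z) := fun z => by simp only [dee, hfd]
  have hdbar : ∀ z, dbar v z = g (a + z) := fun z => by
    rw [← congr_fun (cauchyT_dbar hg hc) (a + z), ← dbar_cauchyT_comm hg hc]; simp only [dbar, hfd]
  have hbv : ∀ z, ‖fderiv ℝ v z‖ ≤ C * (1 + ‖a‖) / (1 + ‖z‖) := by
    intro z
    rw [hfd]
    refine (hC _).trans ?_
    rw [div_le_div_iff₀ (by positivity) (by positivity), mul_assoc]
    refine mul_le_mul_of_nonneg_left ?_ hC0
    have : ‖z‖ ≤ ‖a + z‖ + ‖a‖ := by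
      calc ‖z‖ = ‖(a + z) - a‖ := by ring_nf
        _ ≤ _ := norm_sub_le _ _
    nlinarith [norm_nonneg a, norm_nonneg (a + z)]
  obtain ⟨i1, i2, hle⟩ := weighted_zero hvs hbv h0 (by nlinarith)
  rw [eLpNorm_nu' σ a hdc.measurable, eLpNorm_nu' σ a hg.continuous.measurable]
  simp only [hdee, hdbar] at i1 i2 hle
  rw [← ofReal_integral_eq_lintegral_ofReal i1 (.of_forall fun z => by positivity),
    ← ofReal_integral_eq_lintegral_ofReal i2 (.of_forall fun z => by positivity)]
  set X := ∫ z, ‖dee (cauchyT g) (a + z)‖ ^ 2 * ‖z‖ ^ (-2 * σ)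
  set Y := ∫ z, ‖g (a + z)‖ ^ 2 * ‖z‖ ^ (-2 * σ)
  have hY : 0 ≤ Y := integral_nonneg fun z => by positivity
  have hX : 0 ≤ X := integral_nonneg fun z => by positivity
  have hd : 0 < 1 - 4 * Real.pi * σ := by linarith
  rw [ENNReal.ofReal_rpow_of_nonneg hX (by norm_num), ENNReal.ofReal_rpow_of_nonneg hY (by norm_num),
    ← ENNReal.ofReal_mul (by positivity), ← Real.sqrt_eq_rpow, ← Real.sqrt_eq_rpow, ← Real.sqrt_mul (by positivity)]
  apply ENNReal.ofReal_le_ofReal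
  apply Real.sqrt_le_sqrt
  rw [div_mul_eq_mul_div, le_div_iff₀ hd]
  have := (abs_le.1 hle).2
  nlinarith

lemma weight_bound {s : ℝ} (h0 : 0 ≤ s) (h2 : s < 2) : ∃ C : ℝ≥0∞, C ≠ ⊤ ∧ ∀ a : ℂ,
    ∫⁻ z in Metric.ball (0:ℂ) 1, ENNReal.ofReal (‖z - a‖ ^ (-s)) ≤ C := by
  set K := ∫⁻ z in Metric.ball (0:ℂ) 1, ENNReal.ofReal (‖z‖ ^ (-s)) with hK
  have hKf : K ≠ ⊤ := by
    have : IntegrableOn (fun z : ℂ => ‖z‖ ^ (-s)) (Metric.ball 0 1) := by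
      rw [integrableOn_fun_norm_addHaar volume (f := fun r => r ^ (-s))]
      simp only [finrank_real_complex]
      have : IntegrableOn (fun y : ℝ => y ^ (1 - s)) (Ioo 0 1) := by
        rw [← intervalIntegrable_iff_integrableOn_Ioo_of_le (by norm_num)]
        exact intervalIntegral.intervalIntegrable_rpow' (by linarith)
      refine this.congr_fun (fun y hy => ?_) measurableSet_Ioo
      simp only [smul_eq_mul]
      rw [show 1 - s = 1 + -s by ring, Real.rpow_add hy.1]; simp
    exact (lintegral_ofReal_ne_top_iff_integrable this.aestronglyMeasurable
      (.of_forall fun z => by positivity)).2 this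
  refine ⟨volume (Metric.ball (0:ℂ) 1) + K, ?_, fun a => ?_⟩
  · simp [hKf]
  have hptw : ∀ z, ENNReal.ofReal (‖z - a‖ ^ (-s)) ≤
      1 + (Metric.ball (0:ℂ) 1).indicator (fun z => ENNReal.ofReal (‖z‖ ^ (-s))) (z - a) := by
    intro z
    by_cases hz : z - a ∈ Metric.ball (0:ℂ) 1
    · rw [indicator_of_mem hz]; exact le_add_self
    · rw [indicator_of_notMem hz, add_zero]
      simp only [Metric.mem_ball, dist_zero_right, not_lt] at hz
      rw [ENNReal.ofReal_le_one]
      exact Real.rpow_le_one_of_one_le_of_nonpos hz (by linarith)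
  calc _ ≤ ∫⁻ z in Metric.ball (0:ℂ) 1, (1 + (Metric.ball (0:ℂ) 1).indicator
        (fun z => ENNReal.ofReal (‖z‖ ^ (-s))) (z - a)) := lintegral_mono fun z => hptw z
    _ = volume (Metric.ball (0:ℂ) 1) + ∫⁻ z in Metric.ball (0:ℂ) 1, (Metric.ball (0:ℂ) 1).indicator
        (fun z => ENNReal.ofReal (‖z‖ ^ (-s))) (z - a) := by
          rw [lintegral_add_left measurable_const]; simp
    _ ≤ volume (Metric.ball (0:ℂ) 1) + ∫⁻ z, (Metric.ball (0:ℂ) 1).indicator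
        (fun z => ENNReal.ofReal (‖z‖ ^ (-s))) (z - a) := by gcongr; exact Measure.restrict_le_self
    _ = _ := by
      rw [lintegral_sub_right_eq_self (fun z => (Metric.ball (0:ℂ) 1).indicator
        (fun z => ENNReal.ofReal (‖z‖ ^ (-s))) z) a, lintegral_indicator measurableSet_ball]

/-- By Cauchy–Schwarz, the value of the Cauchy transform at `a` is controlled by the `L²` norm
with weight centred at `a`, since `‖z - a‖ ^ (2σ - 2)` is locally integrable. -/
lemma cauchyT_sup {σ : ℝ} (h0 : 0 < σ) (h1 : σ < 1 / 2) : ∃ K : ℝ≥0∞, K ≠ ⊤ ∧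
    ∀ (g : ℂ → ℂ), Measurable g → (∀ z ∉ Metric.ball (0:ℂ) 1, g z = 0) → ∀ a,
      ‖cauchyT g a‖ₑ ≤ K * eLpNorm g 2 (nu σ a) := by
  obtain ⟨C, hC, hCb⟩ := weight_bound (s := 2 - 2 * σ) (by linarith) (by linarith)
  refine ⟨C ^ (1 / 2 : ℝ), ENNReal.rpow_ne_top_of_nonneg (by norm_num) hC, fun g hg hs a => ?_⟩
  have key : ‖cauchyT g a‖ₑ ≤ ∫⁻ w in Metric.ball (0:ℂ) 1,
      ENNReal.ofReal (‖w - a‖ ^ (σ - 1)) * (ENNReal.ofReal (‖w - a‖ ^ (-σ)) * ‖g w‖ₑ) := by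
    rw [cauchyT_eq']
    refine (enorm_integral_le_lintegral_enorm _).trans ?_
    rw [← lintegral_indicator measurableSet_ball]
    refine lintegral_mono fun w => ?_
    by_cases hw : w ∈ Metric.ball (0:ℂ) 1
    · rw [indicator_of_mem hw, enorm_mul, ← mul_assoc]
      gcongr
      rw [← ENNReal.ofReal_mul (by positivity), ← ofReal_norm]
      apply ENNReal.ofReal_le_ofReal
      rw [kern, norm_inv, norm_mul, norm_real, Real.norm_of_nonneg Real.pi_pos.le, norm_sub_rev]
      rcases eq_or_ne w a with rfl | hne
      · simp; positivity
      have hp : 0 < ‖w - a‖ := norm_pos_iff.2 (sub_ne_zero.2 hne)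
      rw [← Real.rpow_add hp, show σ - 1 + -σ = (-1 : ℝ) by ring, Real.rpow_neg_one]
      apply inv_anti₀ hp
      nlinarith [Real.pi_gt_three]
    · simp [hs w hw]
  refine key.trans ((ENNReal.lintegral_mul_le_Lp_mul_Lq _ Real.HolderConjugate.two_two
    (by fun_prop) (by fun_prop)).trans ?_)
  rw [eLpNorm_nu σ a hg]
  have hsq : ∀ (w : ℂ) (t : ℝ), ENNReal.ofReal (‖w - a‖ ^ t) ^ (2:ℝ) = ENNReal.ofReal (‖w - a‖ ^ (2 * t)) := by
    intro w t
    rw [ENNReal.ofReal_rpow_of_nonneg (by positivity) (by norm_num), ← Real.rpow_mul (by positivity), mul_comm]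
  gcongr
  · refine le_trans (le_of_eq ?_) (hCb a)
    simp only [hsq]
    congr 1; ext w; congr 2; ring
  · exact Measure.restrict_le_self
  · rename_i w
    rw [ENNReal.mul_rpow_of_nonneg _ _ (by norm_num), hsq]
    rw [ENNReal.rpow_two, ← mul_neg_one, ← mul_assoc, mul_comm 2 σ, mul_assoc, mul_comm σ]
    norm_num

/-! ### Test functions and the norm `NN` -/

/-- Smooth functions with compact support in the open unit disc. -/
def IsTest (g : ℂ → ℂ) : Prop := ContDiff ℝ ∞ g ∧ tsupport g ⊆ Metric.ball 0 1

lemma IsTest.cs {g : ℂ → ℂ} (h : IsTest g) : HasCompactSupport g :=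
  (isCompact_closedBall (0:ℂ) 1).of_isClosed_subset (isClosed_tsupport g)
    (h.2.trans Metric.ball_subset_closedBall)

lemma IsTest.zero_off {g : ℂ → ℂ} (h : IsTest g) : ∀ z ∉ Metric.ball (0:ℂ) 1, g z = 0 := fun _ hz =>
  image_eq_zero_of_notMem_tsupport fun h' => hz (h.2 h')

lemma IsTest.meas {g : ℂ → ℂ} (h : IsTest g) : Measurable g := h.1.continuous.measurable

lemma IsTest.add {g h : ℂ → ℂ} (hg : IsTest g) (hh : IsTest h) : IsTest (g + h) :=
  ⟨hg.1.add hh.1, (tsupport_add g h).trans (union_subset hg.2 hh.2)⟩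

lemma IsTest.const_mul {g : ℂ → ℂ} (hg : IsTest g) (c : ℂ) : IsTest (fun z => c * g z) :=
  ⟨contDiff_const.mul hg.1, (tsupport_mul_subset_right (f := fun _ => c)).trans hg.2⟩

/-- The supremum over `a` of the `L²` norms with weight `‖z - a‖ ^ (-2σ)`. The Beurling transform
is nearly contractive for it, and it dominates the supremum of the Cauchy transform. -/
noncomputable def NN (σ : ℝ) (g : ℂ → ℂ) : ℝ≥0∞ := ⨆ a, eLpNorm g 2 (nu σ a)

lemma le_NN (σ : ℝ) (g : ℂ → ℂ) (a : ℂ) : eLpNorm g 2 (nu σ a) ≤ NN σ g := le_iSup (fun a => eLpNorm g 2 (nu σ a)) a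

lemma NN_add_le (σ : ℝ) {g h : ℂ → ℂ} (hg : Measurable g) (hh : Measurable h) :
    NN σ (g + h) ≤ NN σ g + NN σ h :=
  iSup_le fun a => (eLpNorm_add_le hg.aestronglyMeasurable hh.aestronglyMeasurable (by norm_num)).trans
    (add_le_add (le_NN _ _ _) (le_NN _ _ _))

lemma NN_sub_le (σ : ℝ) {g h : ℂ → ℂ} (hg : Measurable g) (hh : Measurable h) :
    NN σ (g - h) ≤ NN σ g + NN σ h :=
  iSup_le fun a => (eLpNorm_sub_le hg.aestronglyMeasurable hh.aestronglyMeasurable (by norm_num)).trans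
    (add_le_add (le_NN _ _ _) (le_NN _ _ _))

lemma NN_mul_le (σ : ℝ) {g h : ℂ → ℂ} {κ : ℝ} (hb : ∀ z, ‖h z‖ ≤ κ * ‖g z‖) :
    NN σ h ≤ ENNReal.ofReal κ * NN σ g :=
  iSup_le fun a => (eLpNorm_le_mul_eLpNorm_of_ae_le_mul (.of_forall hb) 2).trans
    (by gcongr; exact le_NN _ _ _)

/-- The bound for the Beurling transform with respect to `NN σ`. -/
noncomputable def Lam (σ : ℝ) : ℝ := Real.sqrt ((1 + 4 * Real.pi * σ) / (1 - 4 * Real.pi * σ))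

lemma Lam_nonneg (σ : ℝ) : 0 ≤ Lam σ := Real.sqrt_nonneg _

lemma NN_S_le {σ : ℝ} {g : ℂ → ℂ} (hg : IsTest g) (h0 : 0 < σ) (h1 : 4 * Real.pi * σ < 1) :
    NN σ (dee (cauchyT g)) ≤ ENNReal.ofReal (Lam σ) * NN σ g :=
  iSup_le fun a => (eLpNorm_S_le hg.1 hg.cs h0 h1 a).trans (by unfold Lam; gcongr; exact le_NN _ _ _)

lemma sq_rpow_half {x : ℝ≥0∞} : (x ^ (1/2:ℝ)) ^ 2 = x := by
  rw [← ENNReal.rpow_natCast, ← ENNReal.rpow_mul]; norm_num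

lemma NN_le_L4 {σ : ℝ} (h0 : 0 < σ) (h1 : σ < 1 / 2) : ∃ K : ℝ≥0∞, K ≠ ⊤ ∧
    ∀ h : ℂ → ℂ, Measurable h → (∀ z ∉ Metric.ball (0:ℂ) 1, h z = 0) →
      NN σ h ≤ K * eLpNorm h 4 volume := by
  obtain ⟨C, hC, hCb⟩ := weight_bound (s := 4 * σ) (by linarith) (by linarith)
  refine ⟨(C ^ (1 / 2 : ℝ)) ^ (1 / 2 : ℝ), by
    apply ENNReal.rpow_ne_top_of_nonneg (by norm_num)
    exact ENNReal.rpow_ne_top_of_nonneg (by norm_num) hC, fun h hm hs => iSup_le fun a => ?_⟩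
  rw [eLpNorm_nu σ a hm]
  have e4 : eLpNorm h 4 volume = ((∫⁻ z, (‖h z‖ₑ ^ 2) ^ (2:ℝ)) ^ (1 / 2 : ℝ)) ^ (1 / 2 : ℝ) := by
    rw [eLpNorm_eq_lintegral_rpow_enorm_toReal (by simp) (by simp), ← ENNReal.rpow_mul]
    norm_num
    congr 2; ext z
    rw [← pow_mul]
  rw [e4, ← ENNReal.mul_rpow_of_nonneg _ _ (by norm_num)]
  gcongr
  have : ∫⁻ z, ENNReal.ofReal (‖z - a‖ ^ (-2 * σ)) * ‖h z‖ₑ ^ 2 =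
      ∫⁻ z in Metric.ball (0:ℂ) 1, ENNReal.ofReal (‖z - a‖ ^ (-2 * σ)) * ‖h z‖ₑ ^ 2 := by
    rw [← lintegral_indicator measurableSet_ball]
    congr 1; ext z
    by_cases hz : z ∈ Metric.ball (0:ℂ) 1
    · rw [indicator_of_mem hz]
    · rw [indicator_of_notMem hz, hs z hz]; simp
  rw [this]
  refine (ENNReal.lintegral_mul_le_Lp_mul_Lq _ Real.HolderConjugate.two_two
    (by fun_prop) (by fun_prop)).trans ?_
  gcongr
  · refine le_trans (le_of_eq ?_) (hCb a)
    congr 1; ext z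
    rw [ENNReal.ofReal_rpow_of_nonneg (by positivity) (by norm_num), ← Real.rpow_mul (by positivity)]
    congr 2; ring
  · exact Measure.restrict_le_self

lemma L2_le_NN {σ : ℝ} (h0 : 0 < σ) {g : ℂ → ℂ} (hg : Measurable g)
    (hs : ∀ z ∉ Metric.ball (0:ℂ) 1, g z = 0) : eLpNorm g 2 volume ≤ NN σ g := by
  refine le_trans ?_ (le_NN σ g 0)
  rw [eLpNorm_nu σ 0 hg, eLpNorm_eq_lintegral_rpow_enorm_toReal (by simp) (by simp)]
  norm_num
  gcongr ?_ ^ (1 / 2 : ℝ)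
  refine lintegral_mono_ae ?_
  have : ∀ᵐ z : ℂ, z ≠ 0 := by simp [ae_iff, measure_singleton]
  filter_upwards [this] with z hz
  by_cases hzb : z ∈ Metric.ball (0:ℂ) 1
  · refine le_mul_of_one_le_left (by positivity) ?_
    rw [ENNReal.one_le_ofReal]
    apply Real.one_le_rpow_of_pos_of_le_one_of_nonpos (norm_pos_iff.2 hz) _ (by linarith)
    simpa using (Metric.mem_ball.1 hzb).le
  · simp [hs z hzb]

/-- Bounded measurable functions vanishing off the open unit disc. -/
def IsB (ρ : ℂ → ℂ) : Prop :=
  Measurable ρ ∧ (∀ z ∉ Metric.ball (0:ℂ) 1, ρ z = 0) ∧ ∃ M, ∀ z, ‖ρ z‖ ≤ M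

lemma IsTest.isB {g : ℂ → ℂ} (h : IsTest g) : IsB g :=
  ⟨h.meas, h.zero_off, h.cs.exists_bound_of_continuous h.1.continuous⟩

lemma IsB.memLp {ρ : ℂ → ℂ} (h : IsB ρ) (p : ℝ≥0∞) : MemLp ρ p volume := by
  obtain ⟨hm, hz, M, hM⟩ := h
  have : ρ = (Metric.ball (0:ℂ) 1).indicator ρ := by
    ext z
    by_cases hzb : z ∈ Metric.ball (0:ℂ) 1
    · rw [indicator_of_mem hzb]
    · rw [indicator_of_notMem hzb, hz z hzb]
  rw [this, memLp_indicator_iff_restrict measurableSet_ball]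
  have : IsFiniteMeasure (volume.restrict (Metric.ball (0:ℂ) 1)) :=
    ⟨by rw [Measure.restrict_apply_univ]; exact measure_ball_lt_top⟩
  exact MemLp.of_bound hm.aestronglyMeasurable M (.of_forall hM)

lemma IsB.NN_ne_top {σ : ℝ} (h0 : 0 < σ) (h1 : σ < 1 / 2) {ρ : ℂ → ℂ} (h : IsB ρ) : NN σ ρ ≠ ⊤ := by
  obtain ⟨K, hK, hb⟩ := NN_le_L4 h0 h1
  exact ne_top_of_le_ne_top (ENNReal.mul_ne_top hK (h.memLp 4).2.ne) (hb ρ h.1 h.2.1)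

/-- Density of the test functions: cut off near the unit circle, then approximate by a smooth
function and multiply by a bump function. -/
lemma IsB.approx_L4 {ρ : ℂ → ℂ} (h : IsB ρ) {ε : ℝ≥0∞} (hε : ε ≠ 0) :
    ∃ g, IsTest g ∧ eLpNorm (ρ - g) 4 volume ≤ ε := by
  obtain ⟨hm, hz, M, hM⟩ := h
  have hM0 : 0 ≤ M := (norm_nonneg _).trans (hM 0)
  obtain ⟨δ, hδ0, hδ, hδε⟩ : ∃ δ : ℝ, 0 < δ ∧ δ < 1 ∧ ENNReal.ofReal δ + ENNReal.ofReal δ ≤ ε := by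
    obtain ⟨d, hd0, hd⟩ := ENNReal.lt_iff_exists_real_btwn.1 (pos_iff_ne_zero.2 hε)
    have hdp : 0 < d := by simpa using hd.1
    refine ⟨min (d / 2) (1 / 2), by positivity, by linarith [min_le_right (d/2) (1/2:ℝ)], ?_⟩
    rw [← ENNReal.ofReal_add (by positivity) (by positivity)]
    refine le_trans (ENNReal.ofReal_le_ofReal ?_) hd.2.le
    linarith [min_le_left (d/2) (1/2:ℝ)]
  obtain ⟨r, hr0, hr1, hrb⟩ : ∃ r : ℝ, 0 < r ∧ r < 1 ∧
      eLpNorm ((Metric.closedBall (0:ℂ) r)ᶜ.indicator ρ) 4 volume ≤ ENNReal.ofReal δ := by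
    have hLp := (show IsB ρ from ⟨hm, hz, M, hM⟩).memLp 4
    obtain ⟨η, hη, hη2⟩ := hLp.eLpNorm_indicator_le (by norm_num) (by simp) hδ0
    have hcont : Tendsto (fun r : ℝ => volume (Metric.ball (0:ℂ) 1 \ Metric.closedBall 0 r)) (𝓝[<] 1) (𝓝 0) := by
      have : ∀ᶠ r : ℝ in 𝓝[<] 1, ENNReal.ofReal (Real.pi * (1 - r ^ 2)) =
          volume (Metric.ball (0:ℂ) 1 \ Metric.closedBall 0 r) := by
        filter_upwards [Ioo_mem_nhdsLT (show (0:ℝ) < 1 by norm_num)] with r hr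
        rw [measure_sdiff (Metric.closedBall_subset_ball hr.2) measurableSet_closedBall.nullMeasurableSet
          measure_closedBall_lt_top.ne, Complex.volume_ball, Complex.volume_closedBall]
        have e1 : (NNReal.pi : ℝ≥0∞) = ENNReal.ofReal Real.pi := by
          rw [← NNReal.coe_real_pi, ENNReal.ofReal_coe_nnreal]
        have := Real.pi_pos
        rw [e1, ← ENNReal.ofReal_pow (by norm_num), ← ENNReal.ofReal_pow hr.1.le,
          ← ENNReal.ofReal_mul (by positivity), ← ENNReal.ofReal_mul (by have := hr.1; positivity),
          ← ENNReal.ofReal_sub _ (by have := hr.1; positivity)]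
        congr 1; ring
      refine Tendsto.congr' this ?_
      have hc : Continuous fun r : ℝ => ENNReal.ofReal (Real.pi * (1 - r ^ 2)) :=
        ENNReal.continuous_ofReal.comp (by fun_prop)
      have := (hc.tendsto 1).mono_left (nhdsWithin_le_nhds (s := Iio 1))
      simpa using this
    have hev := hcont.eventually (gt_mem_nhds (ENNReal.ofReal_pos.2 hη))
    obtain ⟨r, hrv, hr⟩ := (hev.and (Ioo_mem_nhdsLT (show (0:ℝ) < 1 by norm_num))).exists
    refine ⟨r, hr.1, hr.2, ?_⟩
    have e : (Metric.closedBall (0:ℂ) r)ᶜ.indicator ρ =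
        (Metric.ball (0:ℂ) 1 \ Metric.closedBall 0 r).indicator ρ := by
      ext z
      by_cases hzr : z ∈ Metric.closedBall (0:ℂ) r
      · rw [indicator_of_notMem (show z ∉ (Metric.closedBall (0:ℂ) r)ᶜ from fun h => h hzr),
          indicator_of_notMem (show z ∉ Metric.ball (0:ℂ) 1 \ Metric.closedBall 0 r from fun h => h.2 hzr)]
      · rw [indicator_of_mem (mem_compl hzr)]
        by_cases hzb : z ∈ Metric.ball (0:ℂ) 1
        · rw [indicator_of_mem (show z ∈ _ \ _ from ⟨hzb, hzr⟩)]
        · rw [indicator_of_notMem (show z ∉ Metric.ball (0:ℂ) 1 \ Metric.closedBall 0 r from fun h => hzb h.1), hz z hzb]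
    rw [e]
    exact hη2 _ (measurableSet_ball.diff measurableSet_closedBall) hrv.le
  set ρ1 := (Metric.closedBall (0:ℂ) r).indicator ρ with hρ1
  have hρ1B : IsB ρ1 := ⟨hm.indicator measurableSet_closedBall, fun z hzb => by
    by_cases h : z ∈ Metric.closedBall (0:ℂ) r <;> simp only [hρ1, indicator_of_mem, indicator_of_notMem, h, hz z hzb, not_false_eq_true], M,
    fun z => (norm_indicator_le_norm_self _ _).trans (hM z)⟩
  obtain ⟨g0, hg0c, hg0s, hg0⟩ := (hρ1B.memLp 4).exist_eLpNorm_sub_le (by simp) (by norm_num) hδ0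
  let χ : ContDiffBump (0:ℂ) := ⟨r, (1 + r) / 2, hr0, by linarith⟩
  refine ⟨fun z => (χ z : ℂ) * g0 z, ⟨?_, ?_⟩, ?_⟩
  · exact (ofRealCLM.contDiff.comp χ.contDiff).mul hg0s
  · refine (tsupport_mul_subset_left (f := fun z => (χ z : ℂ))).trans ?_
    have : tsupport (fun z => (χ z : ℂ)) ⊆ tsupport χ :=
      closure_mono fun z hz => by simpa using hz
    refine this.trans ?_
    rw [χ.tsupport_eq]
    exact Metric.closedBall_subset_ball (show (1 + r) / 2 < 1 by linarith)
  · have e : ρ - (fun z => (χ z : ℂ) * g0 z) =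
        (Metric.closedBall (0:ℂ) r)ᶜ.indicator ρ + fun z => (χ z : ℂ) * (ρ1 - g0) z := by
      ext z
      by_cases hzr : z ∈ Metric.closedBall (0:ℂ) r
      · have : χ z = 1 := χ.one_of_mem_closedBall hzr
        simp only [Pi.sub_apply, Pi.add_apply, hρ1, indicator_of_mem hzr, this,
          indicator_of_notMem (show z ∉ (Metric.closedBall (0:ℂ) r)ᶜ from fun h => h hzr)]
        simp
      · simp only [Pi.sub_apply, Pi.add_apply, hρ1, indicator_of_notMem hzr, indicator_of_mem (mem_compl hzr)]
        ring
    rw [e]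
    refine (eLpNorm_add_le (hm.indicator measurableSet_closedBall.compl).aestronglyMeasurable
      (Measurable.aestronglyMeasurable ?_) (by norm_num)).trans (le_trans (add_le_add hrb ?_) hδε)
    · have h1 := hρ1B.1
      have h2 := hg0s.continuous.measurable
      have h3 : Measurable fun z => (χ z : ℂ) := (continuous_ofReal.comp χ.continuous).measurable
      exact h3.mul (h1.sub h2)
    · refine le_trans (eLpNorm_mono fun z => ?_) hg0
      rw [norm_mul, norm_real, Real.norm_of_nonneg χ.nonneg]
      exact mul_le_of_le_one_left (norm_nonneg _) χ.le_one

lemma IsB.approx {σ : ℝ} (h0 : 0 < σ) (h1 : σ < 1 / 2) {ρ : ℂ → ℂ} (h : IsB ρ) {ε : ℝ≥0∞} (hε : ε ≠ 0) :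
    ∃ g, IsTest g ∧ NN σ (ρ - g) ≤ ε := by
  obtain ⟨K, hK, hb⟩ := NN_le_L4 h0 h1
  rcases eq_or_ne ε ⊤ with rfl | hεt
  · obtain ⟨g, hg, _⟩ := h.approx_L4 hε
    exact ⟨g, hg, le_top⟩
  obtain ⟨g, hg, hgε⟩ := h.approx_L4 (ε := ε / K) (by simp [hε, hK])
  refine ⟨g, hg, (hb _ (h.1.sub hg.meas) fun z hz => by simp [h.2.1 z hz, hg.zero_off z hz]).trans ?_⟩
  calc K * _ ≤ K * (ε / K) := by gcongr
    _ ≤ ε := ENNReal.mul_div_le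

/-! ### The Neumann series for the Beltrami equation -/

/-- `μ` is a Beltrami coefficient supported in the unit disc, bounded by `κ`, and `σ` is so small
that `g ↦ μ * dee (cauchyT g)` is a contraction for the norm `NN σ`. -/
structure Belt (μ : ℂ → ℂ) (κ σ : ℝ) : Prop where
  meas : Measurable μ
  bd : ∀ z, ‖μ z‖ ≤ κ
  off : ∀ z ∉ Metric.ball (0:ℂ) 1, μ z = 0
  σpos : 0 < σ
  σlt : 4 * Real.pi * σ < 1
  contr : κ * Lam σ < 1

namespace Belt
variable {μ : ℂ → ℂ} {κ σ : ℝ}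

lemma κ0 (h : Belt μ κ σ) : 0 ≤ κ := (norm_nonneg _).trans (h.bd 0)
lemma σhalf (h : Belt μ κ σ) : σ < 1 / 2 := by
  have := h.σlt; have := h.σpos; nlinarith [Real.pi_gt_three]
lemma isB (h : Belt μ κ σ) : IsB μ := ⟨h.meas, h.off, κ, h.bd⟩
end Belt

/-- The operator `g ↦ g - μ * dee (cauchyT g)`. If `RR μ g = μ`, then `z + cauchyT g z` solves the
Beltrami equation `dbar F = μ * dee F`. -/
noncomputable def RR (μ g : ℂ → ℂ) : ℂ → ℂ := fun z => g z - μ z * dee (cauchyT g) z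

lemma IsTest.dee_cont {g : ℂ → ℂ} (hg : IsTest g) : Continuous (dee (cauchyT g)) := by
  have hu1 : ContDiff ℝ 1 (cauchyT g) := (cauchyT_contDiff hg.1 hg.cs).of_le (by exact_mod_cast le_top)
  have hc1 : Continuous (fderiv ℝ (cauchyT g)) := hu1.continuous_fderiv (by simp)
  unfold dee; fun_prop

lemma IsTest.dee_bdd {g : ℂ → ℂ} (hg : IsTest g) : ∃ M, 0 ≤ M ∧ ∀ z, ‖dee (cauchyT g) z‖ ≤ M := by
  obtain ⟨C, hC0, hC⟩ := fderiv_cauchyT_decay hg.1 hg.cs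
  refine ⟨C, hC0, fun z => (norm_dee_le _ z).trans ((hC z).trans ?_)⟩
  exact div_le_self hC0 (by linarith [norm_nonneg z])

lemma dee_add {g h : ℂ → ℂ} {z : ℂ} (hg : DifferentiableAt ℝ g z) (hh : DifferentiableAt ℝ h z) :
    dee (g + h) z = dee g z + dee h z := by
  simp only [dee, fderiv_add hg hh, _root_.add_apply]; ring

lemma dee_const_mul {g : ℂ → ℂ} {z : ℂ} (hg : DifferentiableAt ℝ g z) (c : ℂ) :
    dee (fun w => c * g w) z = c * dee g z := by
  simp only [dee, fderiv_const_mul hg c, _root_.smul_apply, smul_eq_mul]; ring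

lemma IsTest.diff {g : ℂ → ℂ} (hg : IsTest g) : Differentiable ℝ (cauchyT g) :=
  (cauchyT_contDiff hg.1 hg.cs).differentiable (by simp)

lemma RR_add (μ : ℂ → ℂ) {g h : ℂ → ℂ} (hg : IsTest g) (hh : IsTest h) :
    RR μ (g + h) = RR μ g + RR μ h := by
  ext z
  have : cauchyT (g + h) = cauchyT g + cauchyT h := cauchyT_add hg.1.continuous hg.cs hh.1.continuous hh.cs
  simp only [RR, this, dee_add (hg.diff z) (hh.diff z), Pi.add_apply]; ring

lemma RR_const_mul (μ : ℂ → ℂ) {g : ℂ → ℂ} (hg : IsTest g) (c : ℂ) :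
    RR μ (fun z => c * g z) = fun z => c * RR μ g z := by
  ext z
  have : cauchyT (fun z => c * g z) = fun z => c * cauchyT g z := cauchyT_const_mul c
  simp only [RR, this, dee_const_mul (hg.diff z)]; ring

namespace Belt
variable {μ : ℂ → ℂ} {κ σ : ℝ}

lemma RR_isB (h : Belt μ κ σ) {g : ℂ → ℂ} (hg : IsTest g) : IsB (RR μ g) := by
  obtain ⟨M, hM⟩ := hg.isB.2.2
  obtain ⟨M', hM0', hM'⟩ := hg.dee_bdd
  refine ⟨hg.meas.sub (h.meas.mul hg.dee_cont.measurable), fun z hz => by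
    simp [RR, h.off z hz, hg.zero_off z hz], M + κ * M', fun z => ?_⟩
  refine (norm_sub_le _ _).trans (add_le_add (hM z) ?_)
  rw [norm_mul]
  exact mul_le_mul (h.bd z) (hM' z) (norm_nonneg _) h.κ0

lemma NN_muS (h : Belt μ κ σ) {g : ℂ → ℂ} (hg : IsTest g) :
    NN σ (fun z => μ z * dee (cauchyT g) z) ≤ ENNReal.ofReal (κ * Lam σ) * NN σ g := by
  refine (NN_mul_le (κ := κ) σ (g := dee (cauchyT g)) fun z => ?_).trans ?_
  · rw [norm_mul]; exact mul_le_mul_of_nonneg_right (h.bd z) (norm_nonneg _)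
  · rw [ENNReal.ofReal_mul h.κ0, mul_assoc]
    gcongr
    exact NN_S_le hg h.σpos h.σlt

/-- The a priori estimate expressing that `RR μ` is bounded below. -/
lemma NN_le (h : Belt μ κ σ) {g : ℂ → ℂ} (hg : IsTest g) :
    NN σ g ≤ ENNReal.ofReal (1 / (1 - κ * Lam σ)) * NN σ (RR μ g) := by
  have hfin := hg.isB.NN_ne_top h.σpos h.σhalf
  have hfin2 := (h.RR_isB hg).NN_ne_top h.σpos h.σhalf
  have e : g = RR μ g + fun z => μ z * dee (cauchyT g) z := by ext z; simp [RR]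
  have h1 : NN σ g ≤ NN σ (RR μ g) + ENNReal.ofReal (κ * Lam σ) * NN σ g := by
    conv_lhs => rw [e]
    exact (NN_add_le σ (h.RR_isB hg).1 (h.meas.mul hg.dee_cont.measurable)).trans (by gcongr; exact h.NN_muS hg)
  have hp : 0 < 1 - κ * Lam σ := by linarith [h.contr]
  have hq : 0 ≤ κ * Lam σ := mul_nonneg h.κ0 (Lam_nonneg σ)
  lift NN σ g to NNReal using hfin with x
  lift NN σ (RR μ g) to NNReal using hfin2 with y
  rw [← ENNReal.ofReal_coe_nnreal, ← ENNReal.ofReal_coe_nnreal (p := y), ← ENNReal.ofReal_mul hq,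
    ← ENNReal.ofReal_add (by positivity) (by positivity), ENNReal.ofReal_le_ofReal_iff (by positivity)] at h1
  rw [← ENNReal.ofReal_coe_nnreal, ← ENNReal.ofReal_coe_nnreal (p := y), ← ENNReal.ofReal_mul (by positivity)]
  apply ENNReal.ofReal_le_ofReal
  rw [div_mul_eq_mul_div, le_div_iff₀ hp]
  linarith

/-- Induction on the length of the Neumann series: the error `NN σ ρ` of the zero function is
reduced by the factor `(1 + κ * Lam σ) / 2` at each step; the slack between this factor and
`κ * Lam σ` pays for replacing the residual by a test function. -/
lemma neumann_step (h : Belt μ κ σ) (n : ℕ) : ∀ ρ : ℂ → ℂ, IsB ρ → ∀ t : ℝ, 0 < t →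
    NN σ ρ ≤ ENNReal.ofReal t →
    ∃ g, IsTest g ∧ NN σ (ρ - RR μ g) ≤ ENNReal.ofReal (((1 + κ * Lam σ) / 2) ^ n * t) := by
  have hq : 0 ≤ κ * Lam σ := mul_nonneg h.κ0 (Lam_nonneg σ)
  have hq1 := h.contr
  induction n with
  | zero =>
    intro ρ hρ t ht hN
    refine ⟨fun _ => 0, ⟨contDiff_const, by simp [tsupport]⟩, ?_⟩
    have : ρ - RR μ (fun _ => 0) = ρ := by
      ext z
      have : cauchyT (fun _ => 0) = fun _ => 0 := by ext z; simp [cauchyT]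
      simp [RR, this, dee]
    rw [this]; simpa using hN
  | succ n ih =>
    intro ρ hρ t ht hN
    set q := κ * Lam σ
    set ε := (1 - q) / (2 * (1 + q)) * t with hε
    have hε0 : 0 < ε := by have : 0 < 1 - q := by linarith
                           positivity
    obtain ⟨g, hg, hgε⟩ := hρ.approx h.σpos h.σhalf (ε := ENNReal.ofReal ε) (by simpa using hε0)
    have hNg : NN σ g ≤ ENNReal.ofReal (t + ε) := by
      have : g = ρ - (ρ - g) := by simp
      rw [this, ENNReal.ofReal_add ht.le hε0.le]
      exact (NN_sub_le σ hρ.1 (hρ.1.sub hg.meas)).trans (add_le_add hN hgε)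
    have hN' : NN σ (ρ - RR μ g) ≤ ENNReal.ofReal ((1 + q) / 2 * t) := by
      have : ρ - RR μ g = (ρ - g) + fun z => μ z * dee (cauchyT g) z := by
        ext z; simp [RR]; ring
      rw [this]
      refine (NN_add_le σ (hρ.1.sub hg.meas) (h.meas.mul hg.dee_cont.measurable)).trans
        ((add_le_add hgε ((h.NN_muS hg).trans (mul_le_mul_right hNg _))).trans (le_of_eq ?_))
      rw [← ENNReal.ofReal_mul hq, ← ENNReal.ofReal_add hε0.le (by positivity)]
      congr 1
      rw [hε]; field_simp; ring
    have hB : IsB (ρ - RR μ g) := by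
      obtain ⟨a1, a2, M, a3⟩ := hρ
      obtain ⟨b1, b2, M', b3⟩ := h.RR_isB hg
      exact ⟨a1.sub b1, fun z hz => by simp [a2 z hz, b2 z hz], M + M', fun z =>
        (norm_sub_le _ _).trans (add_le_add (a3 z) (b3 z))⟩
    obtain ⟨G, hG, hGN⟩ := ih (ρ - RR μ g) hB ((1 + q) / 2 * t) (by positivity) hN'
    refine ⟨g + G, hg.add hG, ?_⟩
    rw [RR_add μ hg hG, ← sub_sub, pow_succ, mul_assoc]
    exact hGN

/-- Partial sums of the Neumann series, mollified at each step, solve `RR μ g = ρ` up to an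
arbitrarily small error while remaining test functions. -/
lemma neumann (h : Belt μ κ σ) {ρ : ℂ → ℂ} (hρ : IsB ρ) :
    ∃ g : ℕ → ℂ → ℂ, (∀ n, IsTest (g n)) ∧
      Tendsto (fun n => NN σ (ρ - RR μ (g n))) atTop (𝓝 0) := by
  have hfin := hρ.NN_ne_top h.σpos h.σhalf
  have hq : 0 ≤ κ * Lam σ := mul_nonneg h.κ0 (Lam_nonneg σ)
  have hq1 := h.contr
  have := fun n => h.neumann_step n ρ hρ ((NN σ ρ).toReal + 1) (by positivity) (by
    rw [ENNReal.le_ofReal_iff_toReal_le hfin (by positivity)]; linarith)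
  choose g hg hgN using this
  refine ⟨g, hg, tendsto_of_tendsto_of_tendsto_of_le_of_le tendsto_const_nhds ?_ (fun n => zero_le) hgN⟩
  rw [← ENNReal.ofReal_zero]
  apply ENNReal.tendsto_ofReal
  have := (tendsto_pow_atTop_nhds_zero_of_lt_one (r := (1 + κ * Lam σ) / 2) (by positivity) (by linarith)).mul_const
    ((NN σ ρ).toReal + 1)
  simpa using this

/-- The defect `RR μ g` controls the supremum of the Cauchy transform of `g`. -/
lemma sup_bound (h : Belt μ κ σ) : ∃ K : ℝ≥0∞, K ≠ ⊤ ∧ ∀ g, IsTest g → ∀ a,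
    ‖cauchyT g a‖ₑ ≤ K * NN σ (RR μ g) := by
  obtain ⟨K, hK, hb⟩ := cauchyT_sup h.σpos h.σhalf
  refine ⟨K * ENNReal.ofReal (1 / (1 - κ * Lam σ)), ENNReal.mul_ne_top hK ENNReal.ofReal_ne_top,
    fun g hg a => (hb g hg.meas hg.zero_off a).trans ?_⟩
  rw [mul_assoc]
  gcongr
  exact (le_NN σ g a).trans (h.NN_le hg)

/-- The Cauchy transforms of approximate solutions form a uniform Cauchy sequence. -/
lemma unif (h : Belt μ κ σ) {ρ : ℂ → ℂ} (hρ : IsB ρ) {g : ℕ → ℂ → ℂ} (hg : ∀ n, IsTest (g n))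
    (ht : Tendsto (fun n => NN σ (ρ - RR μ (g n))) atTop (𝓝 0)) :
    ∃ u : ℂ → ℂ, TendstoUniformly (fun n => cauchyT (g n)) u atTop := by
  obtain ⟨K, hK, hb⟩ := h.sup_bound
  have key : ∀ n m a, edist (cauchyT (g n) a) (cauchyT (g m) a) ≤
      K * (NN σ (ρ - RR μ (g n)) + NN σ (ρ - RR μ (g m))) := by
    intro n m a
    have hm1 : IsTest (fun z => (-1) * g m z) := (hg m).const_mul (-1)
    have e : cauchyT (g n) a - cauchyT (g m) a = cauchyT (g n + fun z => (-1) * g m z) a := by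
      have : cauchyT (g n + fun z => (-1) * g m z) = cauchyT (g n) + cauchyT (fun z => (-1) * g m z) :=
        cauchyT_add (hg n).1.continuous (hg n).cs hm1.1.continuous hm1.cs
      rw [this, Pi.add_apply, cauchyT_const_mul]; ring
    rw [edist_eq_enorm_sub, e]
    refine (hb _ ((hg n).add hm1) a).trans ?_
    gcongr
    have e2 : RR μ (g n + fun z => (-1) * g m z) = (ρ - RR μ (g m)) - (ρ - RR μ (g n)) := by
      rw [RR_add μ (hg n) hm1, RR_const_mul μ (hg m)]; ext z; simp; ring
    rw [e2, add_comm]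
    exact NN_sub_le σ (hρ.1.sub (h.RR_isB (hg m)).1) (hρ.1.sub (h.RR_isB (hg n)).1)
  have hcs : UniformCauchySeqOn (fun n => cauchyT (g n)) atTop univ := by
    rw [Metric.uniformCauchySeqOn_iff]
    intro ε hε
    have hd := ENNReal.Tendsto.const_mul ht (Or.inr hK)
    rw [mul_zero] at hd
    obtain ⟨N, hN⟩ := eventually_atTop.1
      (hd.eventually (gt_mem_nhds (ENNReal.ofReal_pos.2 (half_pos hε))))
    refine ⟨N, fun m hm n hn x _ => ?_⟩
    rw [← edist_lt_ofReal, ← add_halves ε, ENNReal.ofReal_add (by positivity) (by positivity)]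
    refine (key m n x).trans_lt ?_
    rw [mul_add]
    exact ENNReal.add_lt_add (hN m hm) (hN n hn)
  refine ⟨fun z => limUnder atTop fun n => cauchyT (g n) z, ?_⟩
  rw [← tendstoUniformlyOn_univ]
  refine hcs.tendstoUniformlyOn_of_tendsto fun z _ => ?_
  exact (hcs.cauchySeq (mem_univ z)).tendsto_limUnder

end Belt

/-! ### Calculus of Wirtinger derivatives and Liouville's theorem -/

lemma differentiableAt_of_dbar {u : ℂ → ℂ} {z : ℂ} (h : DifferentiableAt ℝ u z) (h0 : dbar u z = 0) :
    DifferentiableAt ℂ u z := by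
  have : HasFDerivAt u ((ContinuousLinearMap.toSpanSingleton ℂ (dee u z))) z := by
    refine hasFDerivAt_of_restrictScalars ℝ h.hasFDerivAt ?_
    ext v
    rw [fderiv_eq_dee_dbar, h0]; simp [mul_comm]
  exact this.differentiableAt

lemma dbar_of_differentiableAt {u : ℂ → ℂ} {z : ℂ} (h : DifferentiableAt ℂ u z) : dbar u z = 0 := by
  have := h.hasDerivAt.hasFDerivAt.restrictScalars ℝ
  simp only [dbar, this.fderiv]
  simp [← mul_assoc]

lemma dee_of_hasDerivAt {u : ℂ → ℂ} {z d : ℂ} (h : HasDerivAt u d z) : dee u z = d := by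
  have := h.hasFDerivAt.restrictScalars ℝ
  simp only [dee, this.fderiv]
  simp [← mul_assoc]

lemma dbar_mul {g h : ℂ → ℂ} {z : ℂ} (hg : DifferentiableAt ℝ g z) (hh : DifferentiableAt ℝ h z) :
    dbar (fun w => g w * h w) z = dbar g z * h z + g z * dbar h z := by
  simp only [dbar, fderiv_fun_mul hg hh, _root_.add_apply, _root_.smul_apply, smul_eq_mul]; ring

lemma dee_mul {g h : ℂ → ℂ} {z : ℂ} (hg : DifferentiableAt ℝ g z) (hh : DifferentiableAt ℝ h z) :
    dee (fun w => g w * h w) z = dee g z * h z + g z * dee h z := by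
  simp only [dee, fderiv_fun_mul hg hh, _root_.add_apply, _root_.smul_apply, smul_eq_mul]; ring

lemma dbar_fun_add {g h : ℂ → ℂ} {z : ℂ} (hg : DifferentiableAt ℝ g z) (hh : DifferentiableAt ℝ h z) :
    dbar (fun w => g w + h w) z = dbar g z + dbar h z := by
  simp only [dbar, fderiv_fun_add hg hh, _root_.add_apply]; ring

lemma dee_fun_add {g h : ℂ → ℂ} {z : ℂ} (hg : DifferentiableAt ℝ g z) (hh : DifferentiableAt ℝ h z) :
    dee (fun w => g w + h w) z = dee g z + dee h z := by
  simp only [dee, fderiv_fun_add hg hh, _root_.add_apply]; ring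

lemma dbar_fun_sub {g h : ℂ → ℂ} {z : ℂ} (hg : DifferentiableAt ℝ g z) (hh : DifferentiableAt ℝ h z) :
    dbar (fun w => g w - h w) z = dbar g z - dbar h z := by
  simp only [dbar, fderiv_fun_sub hg hh, _root_.sub_apply]; ring

lemma dee_fun_sub {g h : ℂ → ℂ} {z : ℂ} (hg : DifferentiableAt ℝ g z) (hh : DifferentiableAt ℝ h z) :
    dee (fun w => g w - h w) z = dee g z - dee h z := by
  simp only [dee, fderiv_fun_sub hg hh, _root_.sub_apply]; ring

lemma IsTest.dbar_cauchyT {g : ℂ → ℂ} (hg : IsTest g) : dbar (cauchyT g) = g := by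
  rw [dbar_cauchyT_comm hg.1 hg.cs, cauchyT_dbar hg.1 hg.cs]

lemma IsTest.holo_off {g : ℂ → ℂ} (hg : IsTest g) : DifferentiableOn ℂ (cauchyT g) {z | 1 < ‖z‖} := by
  intro z hz
  refine (differentiableAt_of_dbar (hg.diff z) ?_).differentiableWithinAt
  rw [hg.dbar_cauchyT]
  exact hg.zero_off z (by simpa using le_of_lt hz)

lemma IsTest.cauchyT_bdd {g : ℂ → ℂ} (hg : IsTest g) : ∃ M, 0 ≤ M ∧ ∀ z, ‖cauchyT g z‖ ≤ M := by
  obtain ⟨C, hC0, hC⟩ := cauchyT_decay hg.1.continuous hg.cs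
  exact ⟨C, hC0, fun z => (hC z).trans (div_le_self hC0 (by linarith [norm_nonneg z]))⟩

lemma isOpen_ext : IsOpen {z : ℂ | 1 < ‖z‖} := isOpen_lt continuous_const continuous_norm

lemma isPreconnected_ext : IsPreconnected {z : ℂ | 1 < ‖z‖} := by
  have : {z : ℂ | 1 < ‖z‖} = (fun p : ℝ × ℝ => (p.1 : ℂ) * circ p.2) '' (Ioi 1 ×ˢ univ) := by
    ext z
    simp only [mem_ofPred_eq, mem_image, mem_prod, mem_Ioi, mem_univ, and_true, Prod.exists]
    constructor
    · intro h
      exact ⟨‖z‖, arg z, h, by unfold circ; exact norm_mul_exp_arg_mul_I z⟩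
    · rintro ⟨r, θ, hr, rfl⟩
      rw [norm_mul, circ_norm, mul_one, norm_real, Real.norm_of_nonneg (by linarith)]; exact hr
  rw [this]
  exact (isPreconnected_Ioi.prod isPreconnected_univ).image _ (by fun_prop)

lemma unif_limit {g : ℕ → ℂ → ℂ} (hg : ∀ n, IsTest (g n)) {u : ℂ → ℂ}
    (hu : TendstoUniformly (fun n => cauchyT (g n)) u atTop) :
    Continuous u ∧ DifferentiableOn ℂ u {z | 1 < ‖z‖} ∧ ∃ B, 0 ≤ B ∧ (∀ z, ‖u z‖ ≤ B) ∧
      ∀ᶠ n in atTop, ∀ z, ‖cauchyT (g n) z‖ ≤ B := by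
  refine ⟨hu.continuous (Frequently.of_forall fun n => (hg n).diff.continuous), ?_, ?_⟩
  · refine TendstoLocallyUniformlyOn.differentiableOn (φ := atTop) (F := fun n => cauchyT (g n)) ?_
      (.of_forall fun n => (hg n).holo_off) isOpen_ext
    exact hu.tendstoUniformlyOn.tendstoLocallyUniformlyOn
  · have hev := Metric.tendstoUniformly_iff.1 hu 1 one_pos
    obtain ⟨n, hn⟩ := hev.exists
    obtain ⟨M, hM0, hM⟩ := (hg n).cauchyT_bdd
    have hub : ∀ z, ‖u z‖ ≤ M + 1 := fun z => by
      have := hn z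
      rw [dist_eq_norm] at this
      have h2 := norm_le_norm_sub_add (u z) (cauchyT (g n) z)
      linarith [hM z]
    refine ⟨M + 2, by linarith, fun z => by linarith [hub z], hev.mono fun m hm z => ?_⟩
    have := hm z
    rw [dist_comm, dist_eq_norm] at this
    have h2 := norm_le_norm_sub_add (cauchyT (g m) z) (u z)
    linarith [hub z]

/-- Liouville's theorem on a punctured plane. -/
lemma const_of_bdd_punctured {H : ℂ → ℂ} {ζ : ℂ} {M : ℝ} (hd : ∀ z ≠ ζ, DifferentiableAt ℂ H z)
    (hb : ∀ z ≠ ζ, ‖H z‖ ≤ M) : ∃ c, ∀ z ≠ ζ, H z = c := by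
  have h1 := Complex.differentiableOn_update_limUnder_of_bddAbove (f := H) (s := univ) (c := ζ) univ_mem
    (fun z hz => (hd z (by simpa using hz)).differentiableWithinAt)
    ⟨M, by rintro _ ⟨z, hz, rfl⟩; exact hb z (by simpa using hz)⟩
  set H' := Function.update H ζ (limUnder (𝓝[≠] ζ) H) with hH'
  have hbd : Bornology.IsBounded (range H') := by
    rw [isBounded_iff_forall_norm_le]
    refine ⟨max M ‖H' ζ‖, ?_⟩
    rintro _ ⟨z, rfl⟩
    rcases eq_or_ne z ζ with rfl | hz
    · exact le_max_right _ _
    · refine le_max_of_le_left ?_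
      rw [hH', Function.update_of_ne hz]; exact hb z hz
  refine ⟨H' ζ, fun z hz => ?_⟩
  rw [← (differentiableOn_univ.1 h1).apply_eq_apply_of_bounded hbd z ζ, hH', Function.update_of_ne hz]

/-! ### Products with a solution having a pole -/

namespace Belt
variable {μ : ℂ → ℂ} {κ σ : ℝ}

/-- The right-hand side of the equation `RR μ h = ρ` for which `(z - ζ)⁻¹ + cauchyT h z` solves the
Beltrami equation is admissible, since the pole lies outside the disc. -/
lemma pole_isB (h : Belt μ κ σ) {ζ : ℂ} (hζ : 1 < ‖ζ‖) : IsB (fun z => -(μ z / (z - ζ) ^ 2)) := by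
  refine ⟨(h.meas.div (by fun_prop)).neg, fun z hz => by simp [h.off z hz], κ / (‖ζ‖ - 1) ^ 2, fun z => ?_⟩
  have hp : 0 < ‖ζ‖ - 1 := by linarith
  by_cases hz : z ∈ Metric.ball (0:ℂ) 1
  · have : ‖ζ‖ - 1 ≤ ‖z - ζ‖ := by
      have h1 := norm_sub_norm_le ζ z
      rw [norm_sub_rev] at h1
      have : ‖z‖ < 1 := by simpa using hz
      linarith
    rw [norm_neg, norm_div, norm_pow]
    have := h.κ0
    have := h.bd z
    gcongr
  · have := h.κ0
    simp only [h.off z hz, zero_div, neg_zero, norm_zero]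
    positivity

/-- The `z̄`-derivative of the product of `z + cauchyT g z - b` and `(z - ζ)⁻¹ + cauchyT h z` is a
test function: the pole lies outside the disc. -/
lemma prod_test {g h : ℂ → ℂ} (hg : IsTest g) (hh : IsTest h) {ζ : ℂ} (hζ : 1 < ‖ζ‖) (b : ℂ) :
    IsTest (fun z => g z * ((z - ζ)⁻¹ + cauchyT h z) + (z + cauchyT g z - b) * h z) := by
  have hsg := cauchyT_contDiff hg.1 hg.cs
  have hsh := cauchyT_contDiff hh.1 hh.cs
  have h1 : IsTest (fun z => g z * ((z - ζ)⁻¹ + cauchyT h z)) := by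
    have ht : tsupport (fun z => g z * ((z - ζ)⁻¹ + cauchyT h z)) ⊆ tsupport g := tsupport_mul_subset_left
    refine ⟨contDiff_iff_contDiffAt.2 fun z => ?_, ht.trans hg.2⟩
    by_cases hz : z ∈ tsupport g
    swap
    · have hev : (fun z => g z * ((z - ζ)⁻¹ + cauchyT h z)) =ᶠ[𝓝 z] fun _ => 0 := by
        filter_upwards [notMem_tsupport_iff_eventuallyEq.1 hz] with w hw
        simp [hw]
      exact contDiffAt_const.congr_of_eventuallyEq hev
    have hz1 : ‖z‖ < 1 := by simpa using hg.2 hz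
    have hne : z - ζ ≠ 0 := fun h => by
      rw [sub_eq_zero] at h; rw [h] at hz1; linarith
    exact hg.1.contDiffAt.mul (((contDiffAt_id.sub contDiffAt_const).inv hne).add hsh.contDiffAt)
  have h2 : IsTest (fun z => (z + cauchyT g z - b) * h z) :=
    ⟨((contDiff_id.add hsg).sub contDiff_const).mul hh.1, tsupport_mul_subset_right.trans hh.2⟩
  exact h1.add h2

lemma lip {g : ℂ → ℂ} (hg : IsTest g) : ∃ L, 0 ≤ L ∧ ∀ z w, ‖(z + cauchyT g z) - (w + cauchyT g w)‖ ≤ L * ‖z - w‖ := by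
  obtain ⟨C, hC0, hC⟩ := fderiv_cauchyT_decay hg.1 hg.cs
  refine ⟨1 + C, by positivity, fun z w => ?_⟩
  have h1 := convex_univ.norm_image_sub_le_of_norm_fderiv_le (𝕜 := ℝ) (f := cauchyT g) (C := C)
    (fun x _ => hg.diff x) (fun x _ => (hC x).trans (div_le_self hC0 (by linarith [norm_nonneg x])))
    (mem_univ w) (mem_univ z)
  calc _ = ‖(z - w) + (cauchyT g z - cauchyT g w)‖ := by ring_nf
    _ ≤ ‖z - w‖ + C * ‖z - w‖ := (norm_add_le _ _).trans (by gcongr)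
    _ = _ := by ring

/-- The product of `F - F ζ` and `(z - ζ)⁻¹ + cauchyT h z`, where `F z = z + cauchyT g z`, equals the
Cauchy transform of its `z̄`-derivative up to a constant, by Liouville's theorem. -/
lemma prod_const {g h : ℂ → ℂ} (hg : IsTest g) (hh : IsTest h) {ζ : ℂ} (hζ : 1 < ‖ζ‖) :
    ∃ c, ∀ z ≠ ζ, (z + cauchyT g z - (ζ + cauchyT g ζ)) * ((z - ζ)⁻¹ + cauchyT h z) -
      cauchyT (fun z => g z * ((z - ζ)⁻¹ + cauchyT h z) + (z + cauchyT g z - (ζ + cauchyT g ζ)) * h z) z = c := by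
  set b := ζ + cauchyT g ζ with hb
  have hE := prod_test hg hh hζ b
  set E := fun z => g z * ((z - ζ)⁻¹ + cauchyT h z) + (z + cauchyT g z - b) * h z with hEdef
  obtain ⟨L, hL0, hL⟩ := lip hg
  obtain ⟨C, hC0, hC⟩ := cauchyT_decay hh.1.continuous hh.cs
  obtain ⟨M, hM0, hM⟩ := hE.cauchyT_bdd
  refine const_of_bdd_punctured (M := L + L * (1 + ‖ζ‖) * C + M) (fun z hz => ?_) (fun z hz => ?_)
  · have hne : z - ζ ≠ 0 := sub_ne_zero.2 hz
    have d1 : DifferentiableAt ℝ (fun z => z + cauchyT g z - b) z :=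
      (differentiableAt_fun_id.fun_add (hg.diff z)).sub (differentiableAt_const _)
    have c2 : DifferentiableAt ℂ (fun z => (z - ζ)⁻¹) z := (differentiableAt_id.sub (differentiableAt_const _)).inv hne
    have d2' : DifferentiableAt ℝ (fun z => (z - ζ)⁻¹) z := c2.restrictScalars ℝ
    have d2 : DifferentiableAt ℝ (fun z => (z - ζ)⁻¹ + cauchyT h z) z := d2'.add (hh.diff z)
    refine differentiableAt_of_dbar ((d1.fun_mul d2).sub (hE.diff z)) ?_
    have e1 : dbar (fun z => z + cauchyT g z - b) z = g z := by
      rw [dbar_fun_sub (differentiableAt_fun_id.fun_add (hg.diff z)) (differentiableAt_const _),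
        dbar_fun_add (differentiableAt_fun_id) (hg.diff z), hg.dbar_cauchyT,
        dbar_of_differentiableAt (u := fun w => w) differentiableAt_id,
        dbar_of_differentiableAt (differentiableAt_const _)]; simp
    rw [dbar_fun_sub (d1.fun_mul d2) (hE.diff z), hE.dbar_cauchyT, dbar_mul d1 d2, e1,
      dbar_fun_add d2' (hh.diff z), dbar_of_differentiableAt c2, hh.dbar_cauchyT]
    simp [hEdef]
  · have hne : 0 < ‖z - ζ‖ := norm_pos_iff.2 (sub_ne_zero.2 hz)
    refine (norm_sub_le _ _).trans (add_le_add ?_ (hM z))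
    rw [norm_mul]
    calc _ ≤ (L * ‖z - ζ‖) * (‖z - ζ‖⁻¹ + C / (1 + ‖z‖)) := by
          gcongr
          · exact hL z ζ
          · refine (norm_add_le _ _).trans (add_le_add (by rw [norm_inv]) (hC z))
      _ = L + L * (‖z - ζ‖ / (1 + ‖z‖)) * C := by field_simp
      _ ≤ _ := by
        gcongr
        rw [div_le_iff₀ (by positivity)]
        nlinarith [norm_sub_le z ζ, norm_nonneg z, norm_nonneg ζ]

/-- The product of two approximate solutions of the Beltrami equation is again one: its defect is
a combination of the defects of the factors. -/
lemma prod_RR (hB : Belt μ κ σ) {g h : ℂ → ℂ} (hg : IsTest g) (hh : IsTest h) {ζ : ℂ} (hζ : 1 < ‖ζ‖) :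
    RR μ (fun z => g z * ((z - ζ)⁻¹ + cauchyT h z) + (z + cauchyT g z - (ζ + cauchyT g ζ)) * h z) =
    (fun z => -((z - ζ)⁻¹ + cauchyT h z) * (μ - RR μ g) z) +
      fun z => -(z + cauchyT g z - (ζ + cauchyT g ζ)) * ((fun z => -(μ z / (z - ζ) ^ 2)) - RR μ h) z := by
  obtain ⟨c, hc⟩ := prod_const hg hh hζ
  set b := ζ + cauchyT g ζ with hb
  have hE := prod_test hg hh hζ b
  set E := fun z => g z * ((z - ζ)⁻¹ + cauchyT h z) + (z + cauchyT g z - b) * h z with hEdef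
  ext z
  by_cases hz : z ∈ Metric.ball (0:ℂ) 1
  swap
  · simp [RR, hB.off z hz, hE.zero_off z hz, hg.zero_off z hz, hh.zero_off z hz]
  have hzζ : z ≠ ζ := fun h => by
    have : ‖z‖ < 1 := by simpa using hz
    rw [h] at this; linarith
  have hne : z - ζ ≠ 0 := sub_ne_zero.2 hzζ
  have d1 : DifferentiableAt ℝ (fun z => z + cauchyT g z - b) z :=
    (differentiableAt_fun_id.fun_add (hg.diff z)).sub (differentiableAt_const _)
  have c2 : HasDerivAt (fun z => (z - ζ)⁻¹) (-1 / (z - ζ) ^ 2) z := ((hasDerivAt_id z).sub_const ζ).fun_inv hne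
  have d2' : DifferentiableAt ℝ (fun z => (z - ζ)⁻¹) z := c2.differentiableAt.restrictScalars ℝ
  have d2 : DifferentiableAt ℝ (fun z => (z - ζ)⁻¹ + cauchyT h z) z := d2'.add (hh.diff z)
  have e1 : dee (fun z => z + cauchyT g z - b) z = 1 + dee (cauchyT g) z := by
    rw [dee_fun_sub (differentiableAt_fun_id.fun_add (hg.diff z)) (differentiableAt_const _),
      dee_fun_add (differentiableAt_fun_id) (hg.diff z), dee_of_hasDerivAt (hasDerivAt_id' z),
      dee_of_hasDerivAt (hasDerivAt_const z b)]; simp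
  have e2 : dee (cauchyT E) z = (1 + dee (cauchyT g) z) * ((z - ζ)⁻¹ + cauchyT h z) +
      (z + cauchyT g z - b) * (-1 / (z - ζ) ^ 2 + dee (cauchyT h) z) := by
    have hev : cauchyT E =ᶠ[𝓝 z] fun z => (z + cauchyT g z - b) * ((z - ζ)⁻¹ + cauchyT h z) - c := by
      filter_upwards [isOpen_ne.mem_nhds hzζ] with w hw
      rw [← hc w hw]; ring
    have : dee (cauchyT E) z = dee (fun z => (z + cauchyT g z - b) * ((z - ζ)⁻¹ + cauchyT h z) - c) z := by
      simp only [dee, hev.fderiv_eq]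
    rw [this, dee_fun_sub (d1.fun_mul d2) (differentiableAt_const _), dee_mul d1 d2, e1,
      dee_fun_add d2' (hh.diff z), dee_of_hasDerivAt c2, dee_of_hasDerivAt (hasDerivAt_const z c)]
    ring
  have hEz : E z = g z * ((z - ζ)⁻¹ + cauchyT h z) + (z + cauchyT g z - b) * h z := rfl
  simp only [RR, Pi.add_apply, Pi.sub_apply]
  rw [e2, hEz]
  ring

end Belt

/-! ### The solution of the Beltrami equation -/

namespace Belt
variable {μ : ℂ → ℂ} {κ σ : ℝ}

/-- In the limit, `F - F ζ` times the solution with a pole at `ζ` solves the Beltrami equation,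
is bounded, and is therefore constant. -/
lemma prod_limit (hB : Belt μ κ σ) {g : ℕ → ℂ → ℂ} (hg : ∀ n, IsTest (g n))
    (hgt : Tendsto (fun n => NN σ (μ - RR μ (g n))) atTop (𝓝 0)) {u : ℂ → ℂ}
    (hu : TendstoUniformly (fun n => cauchyT (g n)) u atTop) {ζ : ℂ} (hζ : 1 < ‖ζ‖) :
    ∃ (v : ℂ → ℂ) (B : ℝ) (c : ℂ), (∀ z, ‖v z‖ ≤ B) ∧
      ∀ z ≠ ζ, (z + u z - (ζ + u ζ)) * ((z - ζ)⁻¹ + v z) = c := by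
  obtain ⟨h, hh, hht⟩ := hB.neumann (hB.pole_isB hζ)
  obtain ⟨v, hv⟩ := hB.unif (hB.pole_isB hζ) hh hht
  obtain ⟨-, -, B, hB0, hvB, hvn⟩ := unif_limit hh hv
  obtain ⟨-, -, A, hA0, huA, hun⟩ := unif_limit hg hu
  have hp : 0 < ‖ζ‖ - 1 := by linarith
  set E : ℕ → ℂ → ℂ := fun n z => g n z * ((z - ζ)⁻¹ + cauchyT (h n) z) +
    (z + cauchyT (g n) z - (ζ + cauchyT (g n) ζ)) * h n z with hE
  have hEt : ∀ n, IsTest (E n) := fun n => prod_test (hg n) (hh n) hζ _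
  obtain ⟨K, hK, hKb⟩ := hB.sup_bound
  set M1 := (‖ζ‖ - 1)⁻¹ + B
  set M2 := 1 + A + (‖ζ‖ + A)
  have hNle : ∀ᶠ n in atTop, NN σ (RR μ (E n)) ≤ ENNReal.ofReal M1 * NN σ (μ - RR μ (g n)) +
      ENNReal.ofReal M2 * NN σ ((fun z => -(μ z / (z - ζ) ^ 2)) - RR μ (h n)) := by
    filter_upwards [hvn, hun] with n hvn hun
    rw [hE, hB.prod_RR (hg n) (hh n) hζ]
    have m1 : Measurable (μ - RR μ (g n)) := hB.meas.sub (hB.RR_isB (hg n)).1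
    have m2 : Measurable ((fun z => -(μ z / (z - ζ) ^ 2)) - RR μ (h n)) :=
      (hB.pole_isB hζ).1.sub (hB.RR_isB (hh n)).1
    have m3 := (hh n).diff.continuous.measurable
    have m4 := (hg n).diff.continuous.measurable
    refine (NN_add_le σ (Measurable.mul (by fun_prop) m1) (Measurable.mul (by fun_prop) m2)).trans
      (add_le_add (NN_mul_le σ fun z => ?_) (NN_mul_le σ fun z => ?_))
    · by_cases hz : z ∈ Metric.ball (0:ℂ) 1
      swap
      · simp [hB.off z hz, (hB.RR_isB (hg n)).2.1 z hz]
      rw [Pi.mul_apply, norm_mul]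
      gcongr
      rw [norm_neg]; refine (norm_add_le _ _).trans (add_le_add ?_ (hvn z))
      rw [norm_inv]
      apply inv_anti₀ hp
      have h1 := norm_sub_norm_le ζ z
      rw [norm_sub_rev] at h1
      have : ‖z‖ < 1 := by simpa using hz
      linarith
    · by_cases hz : z ∈ Metric.ball (0:ℂ) 1
      swap
      · simp [hB.off z hz, (hB.RR_isB (hh n)).2.1 z hz]
      have : ‖z‖ < 1 := by simpa using hz
      rw [Pi.mul_apply, norm_mul]
      gcongr
      rw [norm_neg]; refine (norm_sub_le _ _).trans (add_le_add ((norm_add_le _ _).trans ?_) ((norm_add_le _ _).trans ?_))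
      · exact add_le_add this.le (hun z)
      · exact add_le_add le_rfl (hun ζ)
  have hNt : Tendsto (fun n => NN σ (RR μ (E n))) atTop (𝓝 0) := by
    have h1 := (ENNReal.Tendsto.const_mul hgt (Or.inr ENNReal.ofReal_ne_top)).add
      (ENNReal.Tendsto.const_mul hht (Or.inr ENNReal.ofReal_ne_top)) (a := ENNReal.ofReal M1 * 0)
      (b := ENNReal.ofReal M2 * 0)
    simp only [mul_zero, add_zero] at h1
    exact tendsto_of_tendsto_of_tendsto_of_le_of_le' tendsto_const_nhds h1 (.of_forall fun n => zero_le) hNle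
  have hCE : ∀ z, Tendsto (fun n => cauchyT (E n) z) atTop (𝓝 0) := by
    intro z
    rw [tendsto_zero_iff_enorm_tendsto_zero]
    have h1 := ENNReal.Tendsto.const_mul hNt (Or.inr hK)
    rw [mul_zero] at h1
    exact tendsto_of_tendsto_of_tendsto_of_le_of_le tendsto_const_nhds h1 (fun n => zero_le)
      fun n => hKb _ (hEt n) z
  choose c hc using fun n => prod_const (hg n) (hh n) hζ
  have hlim : ∀ z ≠ ζ, Tendsto c atTop (𝓝 ((z + u z - (ζ + u ζ)) * ((z - ζ)⁻¹ + v z))) := by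
    intro z hz
    have h1 : Tendsto (fun n => (z + cauchyT (g n) z - (ζ + cauchyT (g n) ζ)) * ((z - ζ)⁻¹ + cauchyT (h n) z) -
        cauchyT (E n) z) atTop (𝓝 ((z + u z - (ζ + u ζ)) * ((z - ζ)⁻¹ + v z) - 0)) := by
      refine Tendsto.sub (Tendsto.mul ?_ ?_) (hCE z)
      · exact ((hu.tendsto_at z).const_add z).sub ((hu.tendsto_at ζ).const_add ζ)
      · exact (hv.tendsto_at z).const_add _
    rw [sub_zero] at h1
    exact h1.congr fun n => hc n z hz
  refine ⟨v, B, limUnder atTop c, hvB, fun z hz => ?_⟩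
  exact ((hlim z hz).limUnder_eq).symm

/-- The solution `F` of the Beltrami equation, as a uniform limit of smooth approximate solutions.
The constant in `prod_limit` is nonzero, for otherwise `F` would be constant near `ζ`, hence
outside the disc, contradicting the boundedness of `F z - z`. So `F - F ζ` has no zero
other than the simple one at `ζ`. -/
theorem exists_F (hB : Belt μ κ σ) : ∃ (g : ℕ → ℂ → ℂ) (F : ℂ → ℂ), (∀ n, IsTest (g n)) ∧
    Tendsto (fun n => NN σ (μ - RR μ (g n))) atTop (𝓝 0) ∧
    TendstoUniformly (fun n z => z + cauchyT (g n) z) F atTop ∧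
    Continuous F ∧ DifferentiableOn ℂ F {z | 1 < ‖z‖} ∧ (∃ B, ∀ z, ‖F z - z‖ ≤ B) ∧
    ∀ ζ, 1 < ‖ζ‖ → deriv F ζ ≠ 0 ∧ ∀ z ≠ ζ, F z ≠ F ζ := by
  obtain ⟨g, hg, hgt⟩ := hB.neumann hB.isB
  obtain ⟨u, hu⟩ := hB.unif hB.isB hg hgt
  obtain ⟨hc, hd, A, hA0, huA, -⟩ := unif_limit hg hu
  have hFd : DifferentiableOn ℂ (fun z => z + u z) {z | 1 < ‖z‖} := differentiableOn_id.add hd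
  refine ⟨g, fun z => z + u z, hg, hgt, ?_, by fun_prop, hFd, ⟨A, by simpa using huA⟩, ?_⟩
  · rw [Metric.tendstoUniformly_iff] at hu ⊢
    simpa using hu
  intro ζ hζ
  obtain ⟨v, B, c, hvB, hv⟩ := hB.prod_limit hg hgt hu hζ
  have hBp : 0 ≤ B := (norm_nonneg _).trans (hvB 0)
  have hc0 : c ≠ 0 := by
    rintro rfl
    have hev : (fun z => z + u z) =ᶠ[𝓝 ζ] fun _ => ζ + u ζ := by
      filter_upwards [Metric.ball_mem_nhds ζ (show 0 < (B + 1)⁻¹ by positivity)] with z hz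
      rcases eq_or_ne z ζ with rfl | hne
      · rfl
      rcases mul_eq_zero.1 (hv z hne) with h | h
      · exact sub_eq_zero.1 h
      · exfalso
        have h1 : v z = -(z - ζ)⁻¹ := by linear_combination h
        have h2 := hvB z
        rw [h1, norm_neg, norm_inv] at h2
        rw [Metric.mem_ball, dist_eq_norm] at hz
        have h3 : 0 < ‖z - ζ‖ := norm_pos_iff.2 (sub_ne_zero.2 hne)
        have h4 := inv_strictAnti₀ h3 hz
        rw [inv_inv] at h4
        linarith
    have hE := (hFd.analyticOnNhd isOpen_ext).eqOn_of_preconnected_of_eventuallyEq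
      analyticOnNhd_const isPreconnected_ext hζ hev
    set R : ℝ := ‖ζ + u ζ‖ + A + 2
    have hRp : 0 < R := by positivity
    have hR : ‖(R : ℂ)‖ = R := by rw [norm_real, Real.norm_of_nonneg hRp.le]
    have h1 := hE (show (R : ℂ) ∈ {z : ℂ | 1 < ‖z‖} by
      change 1 < ‖(R:ℂ)‖
      rw [hR]; linarith [norm_nonneg (ζ + u ζ)])
    simp only at h1
    have h2 := norm_sub_le (ζ + u ζ) (u R)
    rw [← h1, add_sub_cancel_right, h1, hR] at h2
    linarith [huA R]
  constructor
  · have hda : HasDerivAt (fun z => z + u z) (deriv (fun z => z + u z) ζ) ζ :=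
      (hFd.differentiableAt (isOpen_ext.mem_nhds hζ)).hasDerivAt
    have hs := hasDerivAt_iff_tendsto_slope.1 hda
    have hs2 : Tendsto (slope (fun z => z + u z) ζ) (𝓝[≠] ζ) (𝓝 c) := by
      have h1 : Tendsto (fun z => c - (z + u z - (ζ + u ζ)) * v z) (𝓝[≠] ζ) (𝓝 (c - 0)) := by
        refine tendsto_const_nhds.sub ?_
        have h0 : Tendsto (fun z => (z + u z - (ζ + u ζ))) (𝓝[≠] ζ) (𝓝 0) := by
          have : Continuous fun z => (z + u z - (ζ + u ζ)) := by fun_prop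
          have h2 := (this.tendsto ζ).mono_left (nhdsWithin_le_nhds (s := {ζ}ᶜ))
          simpa using h2
        refine h0.zero_mul_isBoundedUnder_le ⟨B, ?_⟩
        simp only [eventually_map, Function.comp]
        exact .of_forall hvB
      rw [sub_zero] at h1
      refine h1.congr' ?_
      filter_upwards [self_mem_nhdsWithin] with z hz
      rw [← hv z hz, slope_def_field]; ring
    rw [tendsto_nhds_unique hs hs2]
    exact hc0
  · intro z hz h
    have h1 := hv z hz
    simp only at h
    rw [h, sub_self, zero_mul] at h1
    exact hc0 h1.symm

end Belt

/-! ### The Beurling–Ahlfors extension -/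

/-- Quasisymmetry on the whole real line, written without quotients. -/
structure QS (f : ℝ → ℝ) (k : ℝ) : Prop where
  cont : Continuous f
  mono : StrictMono f
  one_le : 1 ≤ k
  up : ∀ x t, 0 < t → f (x + t) - f x ≤ k * (f x - f (x - t))
  dn : ∀ x t, 0 < t → f x - f (x - t) ≤ k * (f (x + t) - f x)

/-- The mean of `f` over the interval between `x` and `x + y`; for `y = 0` it is `f x`. -/
noncomputable def avg (f : ℝ → ℝ) (x y : ℝ) : ℝ := ∫ s in (0:ℝ)..1, f (x + s * y)

section avg
variable {f : ℝ → ℝ}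

lemma avg_cont (hf : Continuous f) : Continuous fun p : ℝ × ℝ => avg f p.1 p.2 := by
  unfold avg
  apply intervalIntegral.continuous_parametric_intervalIntegral_of_continuous'
  fun_prop

lemma avg_eq (hf : Continuous f) (x : ℝ) {y : ℝ} (hy : y ≠ 0) :
    avg f x y = ((∫ s in (0:ℝ)..(x + y), f s) - ∫ s in (0:ℝ)..x, f s) / y := by
  rw [intervalIntegral.integral_interval_sub_left (hf.intervalIntegrable _ _) (hf.intervalIntegrable _ _)]
  unfold avg
  have := intervalIntegral.integral_comp_add_mul (a := 0) (b := 1) f hy x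
  simp only [mul_comm _ y]
  rw [this]; simp [div_eq_inv_mul]

lemma avg_zero (x : ℝ) : avg f x 0 = f x := by simp [avg]

lemma avg_lt (hf : Continuous f) (hm : StrictMono f) {x y x' y' : ℝ} (h1 : x ≤ x') (h2 : x + y ≤ x' + y')
    (h3 : x < x' ∨ x + y < x' + y') : avg f x y < avg f x' y' := by
  have key : ∀ s ∈ Icc (0:ℝ) 1, x + s * y ≤ x' + s * y' := by
    intro s hs
    nlinarith [mul_nonneg hs.1 (sub_nonneg.2 h2), mul_nonneg (sub_nonneg.2 hs.2) (sub_nonneg.2 h1)]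
  refine intervalIntegral.integral_lt_integral_of_continuousOn_of_le_of_exists_lt zero_lt_one
    (by fun_prop) (by fun_prop) (fun s hs => hm.monotone (key s ⟨hs.1.le, hs.2⟩)) ?_
  refine ⟨1/2, ⟨by norm_num, by norm_num⟩, hm ?_⟩
  rcases h3 with h3 | h3 <;> linarith

lemma avg_half (hf : Continuous f) (x : ℝ) {y : ℝ} (hy : y ≠ 0) :
    avg f x y = (avg f x (y / 2) + avg f (x + y / 2) (y / 2)) / 2 := by
  have h2 : y / 2 ≠ 0 := by positivity
  rw [avg_eq hf x hy, avg_eq hf x h2, avg_eq hf _ h2, show x + y / 2 + y / 2 = x + y by ring]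
  field_simp
  ring

lemma avg_contDiffAt (hf : Continuous f) (c : ℝ) {w : ℂ} (hw : c * w.im ≠ 0) :
    ContDiffAt ℝ 1 (fun w : ℂ => avg f w.re (c * w.im)) w := by
  have hF : ContDiff ℝ 1 (fun x => ∫ s in (0:ℝ)..x, f s) := by
    rw [contDiff_one_iff_deriv]
    have hd : ∀ x, HasDerivAt (fun x => ∫ s in (0:ℝ)..x, f s) (f x) x := fun x =>
      intervalIntegral.integral_hasDerivAt_right (hf.intervalIntegrable _ _)
        hf.aestronglyMeasurable.stronglyMeasurableAtFilter hf.continuousAt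
    refine ⟨fun x => (hd x).differentiableAt, ?_⟩
    rwa [show deriv (fun x => ∫ s in (0:ℝ)..x, f s) = f from funext fun x => (hd x).deriv]
  have hre : ContDiff ℝ 1 (fun w : ℂ => w.re) := reCLM.contDiff
  have him : ContDiff ℝ 1 (fun w : ℂ => c * w.im) := contDiff_const.mul imCLM.contDiff
  have hev : (fun w : ℂ => avg f w.re (c * w.im)) =ᶠ[𝓝 w] fun w =>
      ((∫ s in (0:ℝ)..(w.re + c * w.im), f s) - ∫ s in (0:ℝ)..w.re, f s) / (c * w.im) := by
    filter_upwards [him.continuous.continuousAt.eventually_ne hw] with z hz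
    exact avg_eq hf _ hz
  refine ContDiffAt.congr_of_eventuallyEq ?_ hev
  exact (((hF.comp (hre.add him)).sub (hF.comp hre)).contDiffAt).div him.contDiffAt hw

lemma avg_fderiv (hf : Continuous f) (c : ℝ) {w : ℂ} (hw : c * w.im ≠ 0) (v : ℂ) :
    fderiv ℝ (fun w : ℂ => avg f w.re (c * w.im)) w v =
      v.re * ((f (w.re + c * w.im) - f w.re) / (c * w.im)) +
      c * v.im * ((f (w.re + c * w.im) - avg f w.re (c * w.im)) / (c * w.im)) := by
  have hd : ∀ x, HasDerivAt (fun x => ∫ s in (0:ℝ)..x, f s) (f x) x := fun x =>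
    intervalIntegral.integral_hasDerivAt_right (hf.intervalIntegrable _ _)
        hf.aestronglyMeasurable.stronglyMeasurableAtFilter hf.continuousAt
  have hdiff := (avg_contDiffAt hf c hw).differentiableAt one_ne_zero
  have hline : HasDerivAt (fun t : ℝ => w + t * v) v 0 := by
    simpa using ((ofRealCLM.hasDerivAt (x := (0:ℝ))).mul_const v).const_add w
  have h1 : HasDerivAt (fun t : ℝ => avg f (w + t * v).re (c * (w + t * v).im))
      (fderiv ℝ (fun w : ℂ => avg f w.re (c * w.im)) w v) 0 := by
    have := HasFDerivAt.comp_hasDerivAt (x := (0:ℝ)) (f := fun t : ℝ => w + t * v) (l := fun w : ℂ => avg f w.re (c * w.im))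
      (l' := fderiv ℝ (fun w : ℂ => avg f w.re (c * w.im)) w) (by simpa using hdiff.hasFDerivAt) hline
    exact this
  refine h1.unique ?_
  have hx : HasDerivAt (fun t : ℝ => w.re + t * v.re) v.re 0 := by
    simpa using ((hasDerivAt_id (0:ℝ)).mul_const v.re).const_add w.re
  have hy : HasDerivAt (fun t : ℝ => c * (w.im + t * v.im)) (c * v.im) 0 := by
    simpa using (((hasDerivAt_id (0:ℝ)).mul_const v.im).const_add w.im).const_mul c
  have h2 := (((hd _).comp (0:ℝ) (hx.add hy)).sub ((hd _).comp (0:ℝ) hx)).div hy (by simpa using hw)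
  have hev : (fun t : ℝ => avg f (w + t * v).re (c * (w + t * v).im)) =ᶠ[𝓝 0] fun t =>
     ((∫ s in (0:ℝ)..(w.re + t * v.re + c * (w.im + t * v.im)), f s) - ∫ s in (0:ℝ)..(w.re + t * v.re), f s) / (c * (w.im + t * v.im)) := by
    have hc : ContinuousAt (fun t : ℝ => c * (w.im + t * v.im)) 0 := by fun_prop
    filter_upwards [hc.eventually_ne (show c * (w.im + 0 * v.im) ≠ 0 by simpa using hw)] with t ht
    rw [show (w + t * v).re = w.re + t * v.re by simp, show (w + t * v).im = w.im + t * v.im by simp]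
    exact avg_eq hf _ ht
  refine HasDerivAt.congr_of_eventuallyEq ?_ hev
  refine HasDerivAt.congr_deriv h2 ?_
  rw [avg_eq hf _ hw]
  simp
  have h3 : c ≠ 0 := left_ne_zero_of_mul hw
  have h4 : w.im ≠ 0 := right_ne_zero_of_mul hw
  field_simp
  ring
end avg

namespace QS
variable {f : ℝ → ℝ} {k : ℝ}

lemma neg (h : QS f k) : QS (fun x => -f (-x)) k where
  cont := by have := h.cont; fun_prop
  mono := fun x y hxy => neg_lt_neg (h.mono (neg_lt_neg hxy))
  one_le := h.one_le
  up := fun x t ht => by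
    have := h.dn (-x) t ht
    rw [show -(x + t) = -x - t by ring, show -(x - t) = -x + t by ring]; linarith
  dn := fun x t ht => by
    have := h.up (-x) t ht
    rw [show -(x + t) = -x - t by ring, show -(x - t) = -x + t by ring]; linarith

/-- A quasisymmetric function is unbounded: by quasisymmetry at `2 ^ n`, each doubling of the
argument raises `f` by at least `(f 1 - f 0) / k`. -/
lemma unbdd (h : QS f k) (C : ℝ) : ∃ x, C < f x := by
  have hk : 0 < k := by linarith [h.one_le]
  set δ := (f 1 - f 0) / k
  have hδ : 0 < δ := div_pos (sub_pos.2 (h.mono zero_lt_one)) hk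
  have key : ∀ n : ℕ, f 1 + n * δ ≤ f (2 ^ n) := by
    intro n
    induction n with
    | zero => simp
    | succ n ih =>
      have h1 := h.dn (2 ^ n) (2 ^ n) (by positivity)
      rw [sub_self] at h1
      have h2 : f 1 ≤ f (2 ^ n) := h.mono.monotone (one_le_pow₀ (by norm_num))
      have h3 : δ ≤ f (2 ^ n + 2 ^ n) - f (2 ^ n) := by
        rw [div_le_iff₀ hk]; linarith
      rw [pow_succ, mul_two]; push_cast; linarith
  obtain ⟨n, hn⟩ := exists_nat_gt ((C - f 1) / δ)
  rw [div_lt_iff₀ hδ] at hn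
  exact ⟨_, lt_of_lt_of_le (by linarith) (key n)⟩

lemma bound_of (h : QS f k) (C : ℝ) : ∃ R, 0 ≤ R ∧ ∀ x, |f x| ≤ C → |x| ≤ R := by
  obtain ⟨a, ha⟩ := h.unbdd C
  obtain ⟨b, hb⟩ := h.neg.unbdd C
  refine ⟨|a| + |b|, by positivity, fun x hx => ?_⟩
  rw [abs_le] at hx ⊢
  have h1 : x < a := h.mono.lt_iff_lt.1 (by linarith)
  have h2 : -b < x := h.mono.lt_iff_lt.1 (by linarith)
  constructor <;> linarith [le_abs_self a, le_abs_self b, abs_nonneg a, abs_nonneg b]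
end QS

/-- The Beurling–Ahlfors extension of `f`, built from the means of `f` over `[x, x + y]` and
`[x - y, x]`, where `w = x + i y`. -/
noncomputable def ba (f : ℝ → ℝ) (w : ℂ) : ℂ :=
  (((avg f w.re w.im + avg f w.re (-w.im)) / 2 : ℝ) : ℂ) +
    (((avg f w.re w.im - avg f w.re (-w.im)) / 2 : ℝ) : ℂ) * I

lemma ba_re (f : ℝ → ℝ) (w : ℂ) : (ba f w).re = (avg f w.re w.im + avg f w.re (-w.im)) / 2 := by
  simp only [ba, add_re, ofReal_re, re_ofReal_mul, I_re]; ring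
lemma ba_im (f : ℝ → ℝ) (w : ℂ) : (ba f w).im = (avg f w.re w.im - avg f w.re (-w.im)) / 2 := by
  simp only [ba, add_im, ofReal_im, im_ofReal_mul, I_im]; ring

namespace QS
variable {f : ℝ → ℝ} {k : ℝ}

lemma ba_cont (h : QS f k) : Continuous (ba f) := by
  have h1 : Continuous fun w : ℂ => avg f w.re w.im :=
    (avg_cont h.cont).comp (by fun_prop : Continuous fun w : ℂ => (w.re, w.im))
  have h2 : Continuous fun w : ℂ => avg f w.re (-w.im) :=
    (avg_cont h.cont).comp (by fun_prop : Continuous fun w : ℂ => (w.re, -w.im))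
  unfold ba
  fun_prop

lemma ba_real (x : ℝ) : ba f x = f x := by
  apply Complex.ext <;> simp [ba_re, ba_im, avg_zero]

lemma ba_inj (h : QS f k) : Function.Injective (ba f) := by
  have key : ∀ w w', ba f w = ba f w' → ¬ w.re < w'.re := by
    intro w w' e hlt
    have hr := congrArg Complex.re e
    have hi := congrArg Complex.im e
    rw [ba_re, ba_re] at hr
    rw [ba_im, ba_im] at hi
    have h1 : w'.re + w'.im < w.re + w.im := by
      by_contra hc
      have := avg_lt h.cont h.mono hlt.le (not_lt.1 hc) (Or.inl hlt)
      linarith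
    have h2 : w'.re + -w'.im < w.re + -w.im := by
      by_contra hc
      have := avg_lt h.cont h.mono hlt.le (not_lt.1 hc) (Or.inl hlt)
      linarith
    linarith
  have key2 : ∀ w w', ba f w = ba f w' → w.re = w'.re → ¬ w.im < w'.im := by
    intro w w' e he hlt
    have hr := congrArg Complex.re e
    have hi := congrArg Complex.im e
    rw [ba_re, ba_re] at hr
    rw [ba_im, ba_im] at hi
    have := avg_lt h.cont h.mono he.le (y := w.im) (y' := w'.im) (by linarith) (Or.inr (by linarith))
    linarith
  intro w w' e
  have hre : w.re = w'.re := le_antisymm (not_lt.1 (key _ _ e.symm)) (not_lt.1 (key _ _ e))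
  exact Complex.ext hre (le_antisymm (not_lt.1 (key2 _ _ e.symm hre.symm)) (not_lt.1 (key2 _ _ e hre)))

lemma ba_im_pos (h : QS f k) {w : ℂ} (hw : 0 < w.im) : 0 < (ba f w).im := by
  rw [ba_im]
  have := avg_lt h.cont h.mono (le_refl w.re) (y := -w.im) (y' := w.im) (by linarith) (Or.inr (by linarith))
  linarith

lemma ba_contDiffAt (h : QS f k) {w : ℂ} (hw : 0 < w.im) : ContDiffAt ℝ 1 (ba f) w := by
  have h1 := avg_contDiffAt h.cont 1 (w := w) (by simpa using hw.ne')
  have h2 := avg_contDiffAt h.cont (-1) (w := w) (by simpa using hw.ne')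
  simp only [one_mul, neg_mul] at h1 h2
  unfold ba
  exact (ofRealCLM.contDiff.contDiffAt.comp w ((h1.add h2).div_const 2)).add
    ((ofRealCLM.contDiff.contDiffAt.comp w ((h1.sub h2).div_const 2)).mul contDiffAt_const)

lemma ba_fderiv (h : QS f k) {w : ℂ} (hw : 0 < w.im) (v : ℂ) : fderiv ℝ (ba f) w v =
    (((fderiv ℝ (fun w : ℂ => avg f w.re (1 * w.im)) w v +
      fderiv ℝ (fun w : ℂ => avg f w.re (-1 * w.im)) w v) / 2 : ℝ) : ℂ) +
    (((fderiv ℝ (fun w : ℂ => avg f w.re (1 * w.im)) w v -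
      fderiv ℝ (fun w : ℂ => avg f w.re (-1 * w.im)) w v) / 2 : ℝ) : ℂ) * I := by
  have h1 := ((avg_contDiffAt h.cont 1 (w := w) (by simpa using hw.ne')).differentiableAt one_ne_zero).hasFDerivAt
  have h2 := ((avg_contDiffAt h.cont (-1) (w := w) (by simpa using hw.ne')).differentiableAt one_ne_zero).hasFDerivAt
  have h3 := (ofRealCLM.hasFDerivAt.comp w ((h1.add h2).mul_const 2⁻¹)).add
    ((ofRealCLM.hasFDerivAt.comp w ((h1.sub h2).mul_const 2⁻¹)).mul_const I)
  have h4 : HasFDerivAt (ba f) _ w := h3.congr_of_eventuallyEq (.of_forall fun z => by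
    simp [ba, div_eq_mul_inv])
  rw [h4.fderiv]
  simp [div_eq_mul_inv]
  ring

/-- The inequality behind the dilatation bound: `a`, `b` are the `x`-derivatives and `c`, `d` the
`y`-derivatives of the two means `avg f x y` and `avg f x (-y)`, so that `b * c - a * d` is twice
the Jacobian of the Beurling–Ahlfors extension. -/
lemma dil_ineq {k a b c d : ℝ} (hk : 1 ≤ k) (ha0 : 0 < a) (hb0 : 0 < b) (hab : a ≤ k * b)
    (hba : b ≤ k * a) (hca : c ≤ a) (hdb : -b ≤ d) (hc : a ≤ 2 * (k + 1) * c)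
    (hd : b ≤ 2 * (k + 1) * (-d)) : 0 < b * c - a * d ∧
    a ^ 2 + b ^ 2 + c ^ 2 + d ^ 2 ≤ 4 * k * (k + 1) * (b * c - a * d) := by
  have hc0 : 0 < c := by
    by_contra h0
    nlinarith
  have hd0 : d < 0 := by
    by_contra h0
    nlinarith
  have hj : 0 < b * c - a * d := by nlinarith [mul_pos hb0 hc0, mul_pos ha0 (neg_pos.2 hd0)]
  have hj2 : a * b ≤ (k + 1) * (b * c - a * d) := by
    nlinarith [mul_le_mul_of_nonneg_left hc hb0.le, mul_le_mul_of_nonneg_left hd ha0.le]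
  have hS : a ^ 2 + b ^ 2 + c ^ 2 + d ^ 2 ≤ 4 * k * (a * b) := by
    have h1 : c ^ 2 ≤ a ^ 2 := by gcongr
    have h2 : d ^ 2 ≤ b ^ 2 := by nlinarith
    nlinarith [mul_le_mul_of_nonneg_left hab ha0.le, mul_le_mul_of_nonneg_left hba hb0.le]
  have hS2 : a ^ 2 + b ^ 2 + c ^ 2 + d ^ 2 ≤ 4 * k * (k + 1) * (b * c - a * d) := by
    nlinarith [mul_le_mul_of_nonneg_left hj2 (show 0 ≤ 4 * k by linarith)]
  exact ⟨hj, hS2⟩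

/-- The Beurling–Ahlfors extension is orientation preserving with dilatation bounded by a constant
less than `1` that depends only on `k`. -/
lemma ba_dil (h : QS f k) {w : ℂ} (hw : 0 < w.im) : 0 < ‖dee (ba f) w‖ ∧
    ‖dbar (ba f) w‖ ≤ √((2 * k * (k + 1) - 1) / (2 * k * (k + 1) + 1)) * ‖dee (ba f) w‖ := by
  obtain ⟨x, y⟩ := w
  simp only at hw
  have hk := h.one_le
  set P := f (x + y) - f x
  set Q := f x - f (x - y)
  have hP : 0 < P := sub_pos.2 (h.mono (by linarith))
  have hQ : 0 < Q := sub_pos.2 (h.mono (by linarith))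
  have hPQ : P ≤ k * Q := h.up x y hw
  have hQP : Q ≤ k * P := h.dn x y hw
  set a := P / y
  set b := Q / y
  set c := (f (x + y) - avg f x y) / y
  set d := (f (x - y) - avg f x (-y)) / y
  have ha0 : 0 < a := by positivity
  have hb0 : 0 < b := by positivity
  have hab : a ≤ k * b := by
    rw [← mul_div_assoc]; exact (div_le_div_iff_of_pos_right hw).2 hPQ
  have hba : b ≤ k * a := by
    rw [← mul_div_assoc]; exact (div_le_div_iff_of_pos_right hw).2 hQP
  have hA1 : f x < avg f x y := by
    have := avg_lt h.cont h.mono (le_refl x) (y := 0) (y' := y) (by linarith) (Or.inr (by linarith))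
    rwa [avg_zero] at this
  have hB1 : avg f x (-y) < f x := by
    have := avg_lt h.cont h.mono (le_refl x) (y := -y) (y' := 0) (by linarith) (Or.inr (by linarith))
    rwa [avg_zero] at this
  have hca : c ≤ a := (div_le_div_iff_of_pos_right hw).2 (by simp only [P]; linarith)
  have hdb : -b ≤ d := by
    rw [← neg_div]; exact (div_le_div_iff_of_pos_right hw).2 (by simp only [Q]; linarith)
  have hA2 : f (x + y / 2) - f x ≤ k * (f (x + y) - f (x + y / 2)) := by
    have := h.dn (x + y / 2) (y / 2) (by linarith)
    rwa [show x + y / 2 + y / 2 = x + y by ring, show x + y / 2 - y / 2 = x by ring] at this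
  have hB2 : f x - f (x - y / 2) ≤ k * (f (x - y / 2) - f (x - y)) := by
    have := h.up (x - y / 2) (y / 2) (by linarith)
    rwa [show x - y / 2 + y / 2 = x by ring, show x - y / 2 - y / 2 = x - y by ring] at this
  have hA3 : avg f x y ≤ (f (x + y / 2) + f (x + y)) / 2 := by
    rw [avg_half h.cont x hw.ne']
    have h1 := avg_lt h.cont h.mono (x := x) (y := y / 2) (x' := x + y / 2) (y' := 0) (by linarith) (by linarith) (Or.inl (by linarith))
    have h2 := avg_lt h.cont h.mono (x := x + y / 2) (y := y / 2) (x' := x + y) (y' := 0) (by linarith) (by linarith) (Or.inl (by linarith))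
    rw [avg_zero] at h1 h2
    linarith
  have hB3 : (f (x - y / 2) + f (x - y)) / 2 ≤ avg f x (-y) := by
    rw [avg_half h.cont x (neg_ne_zero.2 hw.ne')]
    have h1 := avg_lt h.cont h.mono (x := x - y / 2) (y := 0) (x' := x) (y' := -y / 2) (by linarith) (by linarith) (Or.inl (by linarith))
    have h2 := avg_lt h.cont h.mono (x := x - y) (y := 0) (x' := x + -y / 2) (y' := -y / 2) (by linarith) (by linarith) (Or.inl (by linarith))
    rw [avg_zero] at h1 h2
    linarith
  have hc : a ≤ 2 * (k + 1) * c := by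
    rw [← mul_div_assoc]; refine (div_le_div_iff_of_pos_right hw).2 ?_; simp only [P]; nlinarith
  have hd : b ≤ 2 * (k + 1) * (-d) := by
    rw [← neg_div, ← mul_div_assoc]; refine (div_le_div_iff_of_pos_right hw).2 ?_; simp only [Q]; nlinarith
  have e1 : fderiv ℝ (ba f) ⟨x, y⟩ 1 = (((a + b) / 2 : ℝ) : ℂ) + (((a - b) / 2 : ℝ) : ℂ) * I := by
    rw [h.ba_fderiv hw, avg_fderiv h.cont _ (by simpa using hw.ne'), avg_fderiv h.cont _ (by simpa using hw.ne')]
    have : (f (x + -y) - f x) / (-y) = b := by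
      simp only [b, Q]; rw [← sub_eq_add_neg, div_neg, ← neg_div]; ring
    simp only [one_re, one_im, one_mul, mul_zero, zero_mul, add_zero, neg_one_mul]
    rw [this]
  have e2 : fderiv ℝ (ba f) ⟨x, y⟩ I = (((c + d) / 2 : ℝ) : ℂ) + (((c - d) / 2 : ℝ) : ℂ) * I := by
    rw [h.ba_fderiv hw, avg_fderiv h.cont _ (by simpa using hw.ne'), avg_fderiv h.cont _ (by simpa using hw.ne')]
    have : -((f (x + -y) - avg f x (-y)) / (-y)) = d := by
      simp only [d]; rw [← sub_eq_add_neg, div_neg, neg_neg]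
    simp only [I_re, I_im, one_mul, mul_one, zero_mul, zero_add, neg_one_mul]
    rw [this]
  have n1 : ‖dbar (ba f) ⟨x, y⟩‖ ^ 2 = (a ^ 2 + b ^ 2 + c ^ 2 + d ^ 2 - 2 * (b * c - a * d)) / 8 := by
    rw [dbar, e1, e2, ← Complex.normSq_eq_norm_sq,
      show ((((a + b) / 2 : ℝ) : ℂ) + (((a - b) / 2 : ℝ) : ℂ) * I + I * ((((c + d) / 2 : ℝ) : ℂ) + (((c - d) / 2 : ℝ) : ℂ) * I)) / 2
       = (((a + b - c + d) / 4 : ℝ) : ℂ) + (((a - b + c + d) / 4 : ℝ) : ℂ) * I by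
        push_cast; linear_combination ((c - d : ℂ) / 4) * I_sq, normSq_add_mul_I]
    ring
  have n2 : ‖dee (ba f) ⟨x, y⟩‖ ^ 2 = (a ^ 2 + b ^ 2 + c ^ 2 + d ^ 2 + 2 * (b * c - a * d)) / 8 := by
    rw [dee, e1, e2, ← Complex.normSq_eq_norm_sq,
      show ((((a + b) / 2 : ℝ) : ℂ) + (((a - b) / 2 : ℝ) : ℂ) * I - I * ((((c + d) / 2 : ℝ) : ℂ) + (((c - d) / 2 : ℝ) : ℂ) * I)) / 2
       = (((a + b + c - d) / 4 : ℝ) : ℂ) + (((a - b - c - d) / 4 : ℝ) : ℂ) * I by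
        push_cast; linear_combination (-(c - d : ℂ) / 4) * I_sq, normSq_add_mul_I]
    ring
  obtain ⟨hj, hS2⟩ := dil_ineq hk ha0 hb0 hab hba hca hdb hc hd
  set S := a ^ 2 + b ^ 2 + c ^ 2 + d ^ 2
  have hS0 : 0 ≤ S := by positivity
  clear_value S a b c d
  have hM : 0 ≤ 2 * k * (k + 1) - 1 := by nlinarith
  constructor
  · have : 0 < ‖dee (ba f) ⟨x, y⟩‖ ^ 2 := by rw [n2]; positivity
    exact norm_pos_iff.2 fun h0 => by simp [h0] at this
  · apply le_of_sq_le_sq _ (by positivity)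
    rw [mul_pow, Real.sq_sqrt (by positivity), n1, n2, div_mul_eq_mul_div, le_div_iff₀ (by positivity)]
    linear_combination (1 / 4) * hS2

lemma ba_bdd (h : QS f k) (C : ℝ) : ∃ R, ∀ w : ℂ, 0 ≤ w.im → ‖ba f w‖ ≤ C → ‖w‖ ≤ R := by
  obtain ⟨R, hR0, hR⟩ := h.bound_of (6 * |C|)
  refine ⟨R + 4 * R, fun w hw hb => ?_⟩
  have hC := le_abs_self C
  have hr := (abs_re_le_norm _).trans (hb.trans hC)
  have hi := (abs_im_le_norm _).trans (hb.trans hC)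
  rw [ba_re, abs_le] at hr
  rw [ba_im, abs_le] at hi
  have h1 : f w.re ≤ avg f w.re w.im := by
    rcases hw.eq_or_lt with h0 | h0
    · rw [← h0, avg_zero]
    have := avg_lt h.cont h.mono (le_refl w.re) (y := 0) (y' := w.im) (by linarith) (Or.inr (by linarith))
    rw [avg_zero] at this; exact this.le
  have h2 : avg f w.re (-w.im) ≤ f w.re := by
    rcases hw.eq_or_lt with h0 | h0
    · rw [← h0, neg_zero, avg_zero]
    have := avg_lt h.cont h.mono (le_refl w.re) (y := -w.im) (y' := 0) (by linarith) (Or.inr (by linarith))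
    rw [avg_zero] at this; exact this.le
  have h3 : f w.re + f (w.re + w.im / 2) ≤ 2 * avg f w.re w.im := by
    rcases hw.eq_or_lt with h0 | h0
    · rw [← h0, avg_zero, zero_div, add_zero]; linarith
    rw [avg_half h.cont w.re h0.ne']
    have h1 := avg_lt h.cont h.mono (x := w.re) (y := 0) (x' := w.re) (y' := w.im / 2) (by linarith) (by linarith) (Or.inr (by linarith))
    have h2 := avg_lt h.cont h.mono (x := w.re + w.im / 2) (y := 0) (x' := w.re + w.im / 2) (y' := w.im / 2) (by linarith) (by linarith) (Or.inr (by linarith))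
    rw [avg_zero] at h1 h2
    linarith
  have h4 : f w.re ≤ f (w.re + w.im / 2) := h.mono.monotone (by linarith)
  have hx := hR w.re (abs_le.2 ⟨by linarith, by linarith⟩)
  have hy := hR (w.re + w.im / 2) (abs_le.2 ⟨by linarith, by linarith⟩)
  rw [abs_le] at hy
  refine (norm_le_abs_re_add_abs_im w).trans (add_le_add hx ?_)
  rw [abs_of_nonneg hw]
  rw [abs_le] at hx
  linarith

lemma ba_nhds (h : QS f k) {w : ℂ} (hw : 0 < w.im) : map (ba f) (𝓝 w) = 𝓝 (ba f w) := by
  obtain ⟨hd, hl⟩ := h.ba_dil hw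
  have hs := (h.ba_contDiffAt hw).hasStrictFDerivAt one_ne_zero
  have hk := h.one_le
  have hκ : √((2 * k * (k + 1) - 1) / (2 * k * (k + 1) + 1)) < 1 := by
    rw [Real.sqrt_lt' one_pos, one_pow, div_lt_one (by positivity)]; linarith
  have hinj : Function.Injective (fderiv ℝ (ba f) w) := by
    rw [injective_iff_map_eq_zero]
    intro v hv
    rw [fderiv_eq_dee_dbar] at hv
    by_contra hv0
    have hvp : 0 < ‖v‖ := norm_pos_iff.2 hv0
    have h1 : ‖dee (ba f) w * v‖ = ‖dbar (ba f) w * (starRingEnd ℂ) v‖ := by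
      rw [eq_neg_of_add_eq_zero_left hv, norm_neg]
    rw [norm_mul, norm_mul, RCLike.norm_conj] at h1
    have h2 := mul_right_cancel₀ hvp.ne' h1
    nlinarith
  have hsurj : Function.Surjective (fderiv ℝ (ba f) w).toLinearMap := LinearMap.injective_iff_surjective.1 hinj
  exact hs.map_nhds_eq_of_surj (LinearMap.range_eq_top.2 hsurj)

/-- The extension is open and proper, hence onto the half-plane. -/
lemma ba_surj (h : QS f k) : SurjOn (ba f) {w | 0 < w.im} {w | 0 < w.im} := by
  have hpre : IsPreconnected {w : ℂ | 0 < w.im} := (convex_halfSpace_im_gt 0).isPreconnected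
  have ho : IsOpen (ba f '' {w | 0 < w.im}) := by
    rw [isOpen_iff_mem_nhds]
    rintro _ ⟨w, hw, rfl⟩
    rw [← h.ba_nhds hw]
    exact image_mem_map ((isOpen_lt continuous_const continuous_im).mem_nhds hw)
  refine hpre.subset_of_closure_inter_subset ho ?_ ?_
  · exact ⟨ba f I, h.ba_im_pos (by simp), I, by simp, rfl⟩
  rintro η ⟨hη, hη0⟩
  obtain ⟨R, hR⟩ := h.ba_bdd (‖η‖ + 1)
  set K := {w : ℂ | 0 ≤ w.im} ∩ {w | ‖ba f w‖ ≤ ‖η‖ + 1}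
  have hK : IsCompact K := by
    refine (isCompact_closedBall (0:ℂ) R).of_isClosed_subset ?_ fun w hw => by simpa using hR w hw.1 hw.2
    exact (isClosed_le continuous_const continuous_im).inter (isClosed_le h.ba_cont.norm continuous_const)
  have hcl : η ∈ closure (ba f '' K) := by
    rw [mem_closure_iff_nhds] at hη ⊢
    intro t ht
    obtain ⟨z, hz, w, hw, rfl⟩ := hη (t ∩ Metric.ball η 1) (inter_mem ht (Metric.ball_mem_nhds _ one_pos))
    refine ⟨_, hz.1, w, ⟨show 0 ≤ w.im from le_of_lt hw, ?_⟩, rfl⟩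
    have h1 := hz.2
    rw [Metric.mem_ball, dist_eq_norm] at h1
    have h2 := norm_sub_norm_le (ba f w) η
    change ‖ba f w‖ ≤ _
    linarith
  rw [(hK.image h.ba_cont).isClosed.closure_eq] at hcl
  obtain ⟨w, hw, rfl⟩ := hcl
  rcases (show 0 ≤ w.im from hw.1).eq_or_lt with h0 | h0
  · have : w = (w.re : ℂ) := Complex.ext (by simp) (by simp [← h0])
    rw [this, ba_real] at hη0
    simp at hη0
  · exact ⟨w, h0, rfl⟩

end QS

/-! ### Holomorphy of the composition `F ∘ q` -/

lemma enorm_intervalIntegral_le (φ : ℝ → ℂ) (a b : ℝ) :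
    ‖∫ x in a..b, φ x‖ₑ ≤ ∫⁻ x in uIcc a b, ‖φ x‖ₑ := by
  have h1 : ‖∫ x in a..b, φ x‖ₑ = ‖∫ x in uIoc a b, φ x‖ₑ := by
    rw [← ofReal_norm, ← ofReal_norm, intervalIntegral.norm_intervalIntegral_eq]
  rw [h1]
  exact (enorm_integral_le_lintegral_enorm _).trans (lintegral_mono_set uIoc_subset_uIcc)

/-- An iterated integral over a rectangle is bounded by the `L¹` norm there. -/
lemma enorm_rect_le {h : ℂ → ℂ} {z w : ℂ} (hh : ContinuousOn h ((uIcc z.re w.re) ×ℂ (uIcc z.im w.im))) :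
    ‖∫ x : ℝ in z.re..w.re, ∫ y : ℝ in z.im..w.im, h (x + y * I)‖ₑ ≤
      ∫⁻ ζ in (uIcc z.re w.re) ×ℂ (uIcc z.im w.im), ‖h ζ‖ₑ := by
  have hms : MeasurableSet ((uIcc z.re w.re) ×ˢ (uIcc z.im w.im)) := measurableSet_uIcc.prod measurableSet_uIcc
  have hmr : MeasurableSet ((uIcc z.re w.re) ×ℂ (uIcc z.im w.im)) := by
    exact (measurableSet_uIcc.preimage measurable_re).inter (measurableSet_uIcc.preimage measurable_im)
  refine (enorm_intervalIntegral_le _ _ _).trans ?_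
  refine (lintegral_mono fun x => enorm_intervalIntegral_le _ _ _).trans ?_
  have e := (volume_preserving_equiv_real_prod.symm).setLIntegral_comp_preimage_emb
    measurableEquivRealProd.symm.measurableEmbedding (fun ζ => ‖h ζ‖ₑ) ((uIcc z.re w.re) ×ℂ (uIcc z.im w.im))
  have hpre : measurableEquivRealProd.symm ⁻¹' ((uIcc z.re w.re) ×ℂ (uIcc z.im w.im)) =
      (uIcc z.re w.re) ×ˢ (uIcc z.im w.im) := by
    ext p
    exact Iff.rfl
  rw [hpre] at e
  have hc : ContinuousOn (fun p : ℝ × ℝ => h (p.1 + p.2 * I)) ((uIcc z.re w.re) ×ˢ (uIcc z.im w.im)) := by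
    refine hh.comp (by fun_prop) fun p hp => ?_
    exact ⟨by simpa using hp.1, by simpa using hp.2⟩
  rw [← e, Measure.volume_eq_prod, ← Measure.prod_restrict, lintegral_prod]
  · apply le_of_eq
    refine lintegral_congr fun x => lintegral_congr fun y => ?_
    rw [measurableEquivRealProd_symm_apply]
    simp [mk_eq_add_mul_I]
  · rw [Measure.prod_restrict]
    have := (hc.aemeasurable hms (μ := volume)).enorm
    refine this.congr (.of_forall fun p => ?_)
    simp only
    rw [measurableEquivRealProd_symm_apply]
    simp [mk_eq_add_mul_I]

/-- A uniform limit of `C¹` functions whose `z̄`-derivatives tend to zero in `L¹` on compact sets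
is holomorphic, by Green's formula on rectangles and Morera's theorem. -/
lemma morera_limit {U : Set ℂ} (hU : IsOpen U) {G : ℕ → ℂ → ℂ} {H : ℂ → ℂ}
    (hG : ∀ n, ContDiffOn ℝ 1 (G n) U) (hu : TendstoUniformlyOn G H atTop U)
    (hdb : ∀ K ⊆ U, IsCompact K → Tendsto (fun n => ∫⁻ z in K, ‖dbar (G n) z‖ₑ) atTop (𝓝 0)) :
    DifferentiableOn ℂ H U := by
  have hHc : ContinuousOn H U := hu.continuousOn (Eventually.frequently (.of_forall fun n => (hG n).continuousOn))
  refine (isConservativeOn_and_continuousOn_iff_isDifferentiableOn hU).1 ⟨fun z w hzw => ?_, hHc⟩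
  rw [← add_eq_zero_iff_eq_neg, wedgeIntegral_add_wedgeIntegral_eq]
  have hzw' : (uIcc z.re w.re) ×ℂ (uIcc z.im w.im) ⊆ U := hzw
  have hK : IsCompact ((uIcc z.re w.re) ×ℂ (uIcc z.im w.im)) := isCompact_uIcc.reProdIm isCompact_uIcc
  have hhor : ∀ y ∈ (uIcc z.im w.im), Tendsto (fun n => ∫ x : ℝ in z.re..w.re, G n (x + y * I)) atTop
      (𝓝 (∫ x : ℝ in z.re..w.re, H (x + y * I))) := by
    intro y hy
    have hmap : MapsTo (fun x : ℝ => (x + y * I : ℂ)) (uIcc z.re w.re) U := fun x hx =>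
      hzw' (by simpa [mem_reProdIm] using ⟨hx, hy⟩)
    refine TendstoUniformlyOn.tendsto_intervalIntegral_of_continuousOn (.of_forall fun n => ?_) ?_
    · exact (hG n).continuousOn.comp (by fun_prop) hmap
    · exact (hu.comp (fun x : ℝ => (x + y * I : ℂ))).mono hmap
  have hver : ∀ x ∈ (uIcc z.re w.re), Tendsto (fun n => ∫ y : ℝ in z.im..w.im, G n (x + y * I)) atTop
      (𝓝 (∫ y : ℝ in z.im..w.im, H (x + y * I))) := by
    intro x hx
    have hmap : MapsTo (fun y : ℝ => (x + y * I : ℂ)) (uIcc z.im w.im) U := fun y hy =>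
      hzw' (by simpa [mem_reProdIm] using ⟨hx, hy⟩)
    refine TendstoUniformlyOn.tendsto_intervalIntegral_of_continuousOn (.of_forall fun n => ?_) ?_
    · exact (hG n).continuousOn.comp (by fun_prop) hmap
    · exact (hu.comp (fun y : ℝ => (x + y * I : ℂ))).mono hmap
  have hlim := (((hhor _ left_mem_uIcc).sub (hhor _ right_mem_uIcc)).add
    ((hver _ right_mem_uIcc).const_smul I)).sub ((hver _ left_mem_uIcc).const_smul I)
  refine tendsto_nhds_unique hlim ?_
  rw [tendsto_zero_iff_enorm_tendsto_zero]
  have h2 := ENNReal.Tendsto.const_mul (hdb _ hzw' hK) (Or.inr (show (2:ℝ≥0∞) ≠ ⊤ by simp))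
  rw [mul_zero] at h2
  refine tendsto_of_tendsto_of_tendsto_of_le_of_le tendsto_const_nhds h2 (fun n => zero_le) fun n => ?_
  have hfd : ContinuousOn (fderiv ℝ (G n)) U := (hG n).continuousOn_fderiv_of_isOpen hU le_rfl
  have hcont : ContinuousOn (fun ζ => I • fderiv ℝ (G n) ζ 1 - fderiv ℝ (G n) ζ I)
      ((uIcc z.re w.re) ×ℂ (uIcc z.im w.im)) := by
    have := hfd.mono hzw'
    fun_prop
  have hR := integral_boundary_rect_of_differentiableOn_real (G n) z w
    (((hG n).differentiableOn one_ne_zero).mono hzw') (hcont.integrableOn_compact hK)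
  simp only
  rw [hR]
  refine (enorm_rect_le (h := fun ζ => I • fderiv ℝ (G n) ζ 1 - fderiv ℝ (G n) ζ I) hcont).trans ?_
  rw [← lintegral_const_mul' _ _ (by simp)]
  refine lintegral_mono fun ζ => le_of_eq ?_
  have : I • fderiv ℝ (G n) ζ 1 - fderiv ℝ (G n) ζ I = 2 * (I * dbar (G n) ζ) := by
    rw [dbar, smul_eq_mul]; linear_combination (fderiv ℝ (G n) ζ I) * (-I_sq)
  rw [this, enorm_mul, enorm_mul, show ‖(2:ℂ)‖ₑ = 2 by rw [← ofReal_norm]; simp,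
    show ‖I‖ₑ = 1 by rw [← ofReal_norm]; simp, one_mul]

lemma det_dee_dbar (u : ℂ → ℂ) (z : ℂ) : (fderiv ℝ u z).det = ‖dee u z‖ ^ 2 - ‖dbar u z‖ ^ 2 := by
  rw [ContinuousLinearMap.det, ← LinearMap.det_toMatrix basisOneI, Matrix.det_fin_two]
  simp only [LinearMap.toMatrix_apply, coe_basisOneI, coe_basisOneI_repr]
  simp only [Matrix.cons_val_zero, Matrix.cons_val_one, ContinuousLinearMap.coe_coe]
  rw [fderiv_eq_dee_dbar, fderiv_eq_dee_dbar, ← normSq_eq_norm_sq, ← normSq_eq_norm_sq]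
  simp [normSq_apply]
  ring

lemma dbar_comp {F q : ℂ → ℂ} {w : ℂ} (hF : DifferentiableAt ℝ F (q w)) (hq : DifferentiableAt ℝ q w) :
    dbar (F ∘ q) w = dee F (q w) * dbar q w + dbar F (q w) * (starRingEnd ℂ) (dee q w) := by
  rw [dbar, fderiv_comp w hF hq]
  simp only [ContinuousLinearMap.comp_apply]
  rw [fderiv_eq_dee_dbar F, fderiv_eq_dee_dbar F, fderiv_eq_dee_dbar q, fderiv_eq_dee_dbar q]
  simp only [map_add, map_mul, conj_I, map_one, map_neg, neg_neg]
  linear_combination ((dee F (q w) * (dee q w - dbar q w) + dbar F (q w) * ((starRingEnd ℂ) (dbar q w) - (starRingEnd ℂ) (dee q w))) / 2) * I_sq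

lemma exists_sigma {κ : ℝ} (h1 : κ < 1) : ∃ σ, 0 < σ ∧ 4 * Real.pi * σ < 1 ∧ κ * Lam σ < 1 := by
  have hc : ContinuousAt (fun σ => κ * Lam σ) 0 := by
    unfold Lam
    refine continuousAt_const.mul (Real.continuous_sqrt.continuousAt.comp ?_)
    exact ContinuousAt.div (by fun_prop) (by fun_prop) (by simp)
  have hc2 : ContinuousAt (fun σ : ℝ => 4 * Real.pi * σ) 0 := by fun_prop
  have e1 : ∀ᶠ σ in 𝓝 (0:ℝ), κ * Lam σ < 1 := hc.eventually_lt continuousAt_const (by simpa [Lam] using h1)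
  have e2 : ∀ᶠ σ in 𝓝 (0:ℝ), 4 * Real.pi * σ < 1 := hc2.eventually_lt continuousAt_const (by simp)
  obtain ⟨σ, ⟨h1, h2⟩, h3⟩ := (((e1.and e2).filter_mono nhdsWithin_le_nhds).and
    (self_mem_nhdsWithin (s := Ioi (0:ℝ)) (a := 0))).exists
  exact ⟨σ, h3, h2, h1⟩

/-- Change of variables for `q`: bounded dilatation makes `‖dee q‖²` comparable to the Jacobian. -/
lemma dil_estimate {q : ℂ → ℂ} {κ : ℝ} (hκ0 : 0 ≤ κ) (hκ1 : κ < 1) {U : Set ℂ} (hU : IsOpen U)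
    (hq : DifferentiableOn ℝ q U) (hinj : InjOn q U)
    (hdil : ∀ w ∈ U, ‖dbar q w‖ ≤ κ * ‖dee q w‖) (E : ℂ → ℂ) {K : Set ℂ} (hK : K ⊆ U) (hKm : MeasurableSet K) :
    ∫⁻ w in K, ‖dee q w‖ₑ ^ 2 * ‖E (q w)‖ₑ ^ 2 ≤ ENNReal.ofReal (1 - κ ^ 2)⁻¹ * ∫⁻ z, ‖E z‖ₑ ^ 2 := by
  have hp : 0 < 1 - κ ^ 2 := by nlinarith
  have h1 := lintegral_image_eq_lintegral_abs_det_fderiv_mul volume hKm (f := q) (f' := fderiv ℝ q)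
    (fun w hw => ((hq w (hK hw)).differentiableAt (hU.mem_nhds (hK hw))).hasFDerivAt.hasFDerivWithinAt)
    (hinj.mono hK) (fun z => ‖E z‖ₑ ^ 2)
  calc _ ≤ ∫⁻ w in K, ENNReal.ofReal (1 - κ ^ 2)⁻¹ * (ENNReal.ofReal |(fderiv ℝ q w).det| * ‖E (q w)‖ₑ ^ 2) := by
        refine setLIntegral_mono' hKm fun w hw => ?_
        rw [← mul_assoc]
        gcongr
        rw [← ENNReal.ofReal_mul (by positivity), ← ofReal_norm, ← ENNReal.ofReal_pow (norm_nonneg _)]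
        apply ENNReal.ofReal_le_ofReal
        rw [det_dee_dbar, ← div_eq_inv_mul, le_div_iff₀ hp]
        refine le_trans ?_ (le_abs_self _)
        have h3 : ‖dbar q w‖ ^ 2 ≤ (κ * ‖dee q w‖) ^ 2 := by gcongr; exact hdil w (hK hw)
        nlinarith
    _ = ENNReal.ofReal (1 - κ ^ 2)⁻¹ * ∫⁻ z in q '' K, ‖E z‖ₑ ^ 2 := by
        rw [h1, lintegral_const_mul' _ _ ENNReal.ofReal_ne_top]
    _ ≤ _ := by gcongr; exact Measure.restrict_le_self

/-- A solution of the Beltrami equation whose coefficient at `q w` is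
`-dbar q w / conj (dee q w)`; this is the choice for which `F ∘ q` is holomorphic. -/
theorem exists_F_of_q {q : ℂ → ℂ} {κ : ℝ} (hκ0 : 0 ≤ κ) (hκ1 : κ < 1) {U : Set ℂ} (hU : IsOpen U)
    (hq : ∀ w ∈ U, ContDiffAt ℝ 1 q w) (hinj : InjOn q U) (himg : q '' U = Metric.ball 0 1)
    (hnhds : ∀ w ∈ U, map q (𝓝 w) = 𝓝 (q w))
    (hdee : ∀ w ∈ U, dee q w ≠ 0) (hdil : ∀ w ∈ U, ‖dbar q w‖ ≤ κ * ‖dee q w‖) :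
    ∃ F : ℂ → ℂ, Continuous F ∧ DifferentiableOn ℂ F {z | 1 < ‖z‖} ∧ (∃ B, ∀ z, ‖F z - z‖ ≤ B) ∧
    (∀ ζ, 1 < ‖ζ‖ → deriv F ζ ≠ 0 ∧ ∀ z ≠ ζ, F z ≠ F ζ) ∧ DifferentiableOn ℂ (F ∘ q) U := by
  classical
  obtain ⟨σ, hσ0, hσ1, hσ2⟩ := exists_sigma hκ1
  have hqc : ContDiffOn ℝ 1 q U := fun w hw => (hq w hw).contDiffWithinAt
  have hqd : DifferentiableOn ℝ q U := hqc.differentiableOn one_ne_zero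
  have hqda : ∀ w ∈ U, DifferentiableAt ℝ q w := fun w hw => (hqd w hw).differentiableAt (hU.mem_nhds hw)
  have hfd : ContinuousOn (fderiv ℝ q) U := hqc.continuousOn_fderiv_of_isOpen hU le_rfl
  have hdeec : ContinuousOn (dee q) U := by unfold dee; fun_prop
  have hdbarc : ContinuousOn (dbar q) U := by unfold dbar; fun_prop
  set p := Function.invFunOn q U
  have hpU : ∀ z ∈ Metric.ball (0:ℂ) 1, p z ∈ U ∧ q (p z) = z := by
    intro z hz
    rw [← himg] at hz
    exact ⟨Function.invFunOn_mem hz, Function.invFunOn_eq hz⟩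
  have hpq : ∀ w ∈ U, p (q w) = w := fun w hw => hinj.leftInvOn_invFunOn hw
  have hpc : ContinuousOn p (Metric.ball 0 1) := by
    intro z hz
    apply ContinuousAt.continuousWithinAt
    obtain ⟨h1, h2⟩ := hpU z hz
    rw [ContinuousAt, ← h2, ← hnhds _ h1, hpq _ h1, tendsto_map'_iff]
    refine tendsto_id.congr' ?_
    filter_upwards [hU.mem_nhds h1] with w hw
    exact (hpq w hw).symm
  set m : ℂ → ℂ := fun w => -(dbar q w / (starRingEnd ℂ) (dee q w))
  have hmc : ContinuousOn m U := by
    refine (hdbarc.div (continuous_conj.comp_continuousOn hdeec) fun w hw => ?_).neg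
    simpa using hdee w hw
  set μ : ℂ → ℂ := (Metric.ball (0:ℂ) 1).piecewise (m ∘ p) (fun _ => 0)
  have hμq : ∀ w ∈ U, μ (q w) = m w := by
    intro w hw
    have : q w ∈ Metric.ball (0:ℂ) 1 := himg ▸ mem_image_of_mem q hw
    simp only [μ]
    rw [piecewise_eq_of_mem _ _ _ this, Function.comp_apply, hpq w hw]
  have hoff : ∀ z ∉ Metric.ball (0:ℂ) 1, μ z = 0 := fun z hz => piecewise_eq_of_notMem _ _ _ hz
  have hB : Belt μ κ σ := by
    refine ⟨?_, ?_, hoff, hσ0, hσ1, hσ2⟩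
    · exact ContinuousOn.measurable_piecewise (hmc.comp hpc fun z hz => (hpU z hz).1) continuousOn_const
        Metric.isOpen_ball.measurableSet
    · intro z
      by_cases hz : z ∈ Metric.ball (0:ℂ) 1
      · obtain ⟨h1, h2⟩ := hpU z hz
        rw [← h2, hμq _ h1, norm_neg, norm_div, RCLike.norm_conj, div_le_iff₀ (norm_pos_iff.2 (hdee _ h1))]
        exact hdil _ h1
      · rw [hoff z hz, norm_zero]; exact hκ0
  obtain ⟨g, F, hg, hgt, hu, hFc, hFd, hFb, hFi⟩ := hB.exists_F
  refine ⟨F, hFc, hFd, hFb, hFi, ?_⟩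
  have hFn : ∀ n, ContDiff ℝ 1 (fun z => z + cauchyT (g n) z) := fun n =>
    contDiff_id.add ((cauchyT_contDiff (hg n).1 (hg n).cs).of_le (by exact_mod_cast le_top))
  have hFnd : ∀ n, Differentiable ℝ (cauchyT (g n)) := fun n =>
    ((cauchyT_contDiff (hg n).1 (hg n).cs).of_le (m := 1) (by exact_mod_cast le_top)).differentiable one_ne_zero
  refine morera_limit hU (G := fun n => (fun z => z + cauchyT (g n) z) ∘ q) (fun n => (hFn n).comp_contDiffOn hqc)
    (hu.comp q).tendstoUniformlyOn fun K hK hKc => ?_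
  have hkey : ∀ n, ∀ w ∈ U, ‖dbar ((fun z => z + cauchyT (g n) z) ∘ q) w‖ₑ =
      ‖dee q w‖ₑ * ‖(μ - RR μ (g n)) (q w)‖ₑ := by
    intro n w hw
    rw [dbar_comp ((hFn n).differentiable one_ne_zero _) (hqda w hw),
      dbar_fun_add differentiableAt_fun_id (hFnd n _), dee_fun_add differentiableAt_fun_id (hFnd n _),
      (hg n).dbar_cauchyT, Pi.sub_apply, RR, hμq w hw]
    have e1 : dee (fun z : ℂ => z) (q w) = 1 := dee_of_hasDerivAt (hasDerivAt_id _)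
    have e2 : dbar (fun z : ℂ => z) (q w) = 0 := dbar_of_differentiableAt differentiableAt_fun_id
    have hc0 : (starRingEnd ℂ) (dee q w) ≠ 0 := by simpa using hdee w hw
    rw [e1, e2, ← enorm_neg, show ‖dee q w‖ₑ = ‖(starRingEnd ℂ) (dee q w)‖ₑ by
      rw [← ofReal_norm, ← ofReal_norm, RCLike.norm_conj], ← enorm_mul]
    congr 1
    simp only [m]
    field_simp
    ring
  set C : ℝ≥0∞ := (ENNReal.ofReal (1 - κ ^ 2)⁻¹) ^ ((1:ℝ) / 2) * (volume K) ^ ((1:ℝ) / 2)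
  have hC : C ≠ ⊤ := ENNReal.mul_ne_top (ENNReal.rpow_ne_top_of_nonneg (by norm_num) ENNReal.ofReal_ne_top)
    (ENNReal.rpow_ne_top_of_nonneg (by norm_num) hKc.measure_lt_top.ne)
  have h2 := ENNReal.Tendsto.const_mul hgt (Or.inr hC)
  rw [mul_zero] at h2
  refine tendsto_of_tendsto_of_tendsto_of_le_of_le tendsto_const_nhds h2 (fun n => zero_le) fun n => ?_
  simp only
  set G := (fun z => z + cauchyT (g n) z) ∘ q
  have hGc : ContDiffOn ℝ 1 G U := (hFn n).comp_contDiffOn hqc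
  have hGd : ContinuousOn (dbar G) U := by
    have := hGc.continuousOn_fderiv_of_isOpen hU le_rfl
    unfold dbar; fun_prop
  have hae : AEStronglyMeasurable (dbar G) (volume.restrict K) :=
    (hGd.mono hK).aestronglyMeasurable hKc.measurableSet
  have s1 := eLpNorm_le_eLpNorm_mul_rpow_measure_univ (p := 1) (q := 2) (by norm_num) hae
  rw [eLpNorm_one_eq_lintegral_enorm] at s1
  refine s1.trans ?_
  have s2 : eLpNorm (dbar G) 2 (volume.restrict K) ≤
      (ENNReal.ofReal (1 - κ ^ 2)⁻¹) ^ ((1:ℝ) / 2) * NN σ (μ - RR μ (g n)) := by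
    refine le_trans ?_ (mul_le_mul_right (L2_le_NN hσ0 (hB.meas.sub (hB.RR_isB (hg n)).1) fun z hz => ?_) _)
    · rw [eLpNorm_eq_lintegral_rpow_enorm_toReal (by simp) (by simp),
        eLpNorm_eq_lintegral_rpow_enorm_toReal (by simp) (by simp)]
      simp only [ENNReal.toReal_ofNat, ENNReal.rpow_ofNat]
      rw [← ENNReal.mul_rpow_of_nonneg _ _ (by norm_num)]
      apply ENNReal.rpow_le_rpow _ (by norm_num)
      refine le_trans (le_of_eq ?_) (dil_estimate hκ0 hκ1 hU hqd hinj hdil (μ - RR μ (g n)) hK hKc.measurableSet)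
      refine setLIntegral_congr_fun hKc.measurableSet fun w hw => ?_
      rw [hkey n w (hK hw), mul_pow]
    · simp [hoff z hz, (hB.RR_isB (hg n)).2.1 z hz]
  refine (mul_le_mul_left s2 _).trans (le_of_eq ?_)
  rw [Measure.restrict_apply_univ]
  simp only [C, ENNReal.toReal_one, ENNReal.toReal_ofNat]
  rw [show (1 / 1 - 1 / 2 : ℝ) = 1 / 2 by norm_num]
  ring

/-! ### Continuous logarithms on circles -/

/-- `z - a` has no continuous `m`-th root on a circle around `a` when `m ≥ 2`. -/
lemma no_root {a : ℂ} {r : ℝ} (hr : 0 < r) {m : ℕ} (hm : 2 ≤ m) {g : ℂ → ℂ}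
    (hg : ContinuousOn g (Metric.sphere a r)) (h : ∀ z ∈ Metric.sphere a r, z - a = g z ^ m) :
    False := by
  have hm0 : (m : ℂ) ≠ 0 := by exact_mod_cast (by omega : m ≠ 0)
  have hmem : ∀ θ, circleMap a r θ ∈ Metric.sphere a r := fun θ => circleMap_mem_sphere a hr.le θ
  have hgc : Continuous fun θ : ℝ => g (circleMap a r θ) :=
    hg.comp_continuous (continuous_circleMap a r) hmem
  let K : ℝ → ℂ := fun θ => g (circleMap a r θ) * exp (-(θ * I / m))
  have hK : Continuous K := by
    refine hgc.mul ?_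
    fun_prop
  have hKm : ∀ θ, K θ ^ m = r := by
    intro θ
    have h1 := h _ (hmem θ)
    simp only [K, mul_pow, ← h1, ← Complex.exp_nat_mul]
    rw [circleMap]
    have : (m : ℂ) * -(θ * I / m) = -(θ * I) := by field_simp
    rw [this, add_sub_cancel_left, mul_assoc, ← Complex.exp_add]; simp
  have hfin : ({x : ℂ | x ^ m = r}).Finite := by
    have : {x : ℂ | x ^ m = r} ⊆ ((Polynomial.nthRoots m (r : ℂ)).toFinset : Set ℂ) := by
      intro x hx
      simp only [Finset.mem_coe, Multiset.mem_toFinset]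
      exact (Polynomial.mem_nthRoots (by omega)).2 hx
    exact (Finset.finite_toSet _).subset this
  have hsub : (K '' univ).Subsingleton := by
    have hpre : IsPreconnected (K '' univ) := isPreconnected_univ.image K hK.continuousOn
    have hf2 : (K '' univ).Finite := hfin.subset (by rintro _ ⟨θ, -, rfl⟩; exact hKm θ)
    exact hf2.countable.isTotallyDisconnected _ Subset.rfl hpre
  have h0 : K 0 = K (2 * Real.pi) := hsub (mem_image_of_mem _ (mem_univ _)) (mem_image_of_mem _ (mem_univ _))
  have hne : g (circleMap a r 0) ≠ 0 := by
    intro h1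
    have h2 := hKm 0
    simp only [K, h1, zero_mul] at h2
    rw [zero_pow (by omega)] at h2
    exact hr.ne' (by exact_mod_cast h2.symm)
  have hper : circleMap a r (2 * Real.pi) = circleMap a r 0 := by
    have := periodic_circleMap a r 0
    simpa using this
  simp only [K, hper] at h0
  have h3 := mul_left_cancel₀ hne h0
  simp only [ofReal_zero, zero_mul, zero_div, neg_zero, Complex.exp_zero] at h3
  obtain ⟨n, hn⟩ := Complex.exp_eq_one_iff.1 h3.symm
  have hpi : (2 * Real.pi * I : ℂ) ≠ 0 := Complex.two_pi_I_ne_zero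
  have h4 : (n : ℂ) * m = -1 := by
    apply mul_right_cancel₀ hpi
    have : -((2 * Real.pi * I : ℂ) / m) * m = n * (2 * Real.pi * I) * m := by
      rw [← hn]; push_cast; ring
    rw [neg_mul, div_mul_cancel₀ _ hm0] at this
    linear_combination -this
  have h5 : n * (m : ℤ) = -1 := by exact_mod_cast h4
  have h6 : (m : ℤ) ∣ 1 := ⟨-n, by linarith⟩
  have := Int.le_of_dvd one_pos h6
  omega

/-- Two functions are logarithmically equivalent on `C` if they differ there by the exponential
of a continuous function. -/
def LogEq (C : Set ℂ) (a b : ℂ → ℂ) : Prop :=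
  ∃ l : ℂ → ℂ, ContinuousOn l C ∧ ∀ z ∈ C, a z = b z * exp (l z)

namespace LogEq
variable {C C' : Set ℂ} {a b c d : ℂ → ℂ}

lemma refl : LogEq C a a := ⟨fun _ => 0, continuousOn_const, by simp⟩

lemma symm (h : LogEq C a b) : LogEq C b a := by
  obtain ⟨l, hl, h⟩ := h
  refine ⟨fun z => - l z, hl.neg, fun z hz => ?_⟩
  rw [h z hz, mul_assoc, ← Complex.exp_add]; simp

lemma trans (h : LogEq C a b) (h' : LogEq C b c) : LogEq C a c := by
  obtain ⟨l, hl, h⟩ := h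
  obtain ⟨l', hl', h'⟩ := h'
  refine ⟨fun z => l z + l' z, hl.add hl', fun z hz => ?_⟩
  rw [h z hz, h' z hz, Complex.exp_add]; ring

lemma mul (h : LogEq C a b) (h' : LogEq C c d) :
    LogEq C (fun z => a z * c z) (fun z => b z * d z) := by
  obtain ⟨l, hl, h⟩ := h
  obtain ⟨l', hl', h'⟩ := h'
  refine ⟨fun z => l z + l' z, hl.add hl', fun z hz => ?_⟩
  beta_reduce
  rw [h z hz, h' z hz, Complex.exp_add]; ring

lemma pow (h : LogEq C a b) (n : ℕ) : LogEq C (fun z => a z ^ n) (fun z => b z ^ n) := by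
  obtain ⟨l, hl, h⟩ := h
  refine ⟨fun z => n * l z, continuousOn_const.mul hl, fun z hz => ?_⟩
  beta_reduce
  rw [h z hz, Complex.exp_nat_mul]; ring

lemma congr (h : LogEq C a b) (ha : ∀ z ∈ C, a z = c z) (hb : ∀ z ∈ C, b z = d z) :
    LogEq C c d := by
  obtain ⟨l, hl, h⟩ := h
  exact ⟨l, hl, fun z hz => by rw [← ha z hz, ← hb z hz, h z hz]⟩

lemma prod {s : Finset ℂ} {a : ℂ → ℂ → ℂ} {n : ℂ → ℕ}
    (h : ∀ u ∈ s, LogEq C (a u) b) :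
    LogEq C (fun z => ∏ u ∈ s, a u z ^ n u) (fun z => b z ^ (∑ u ∈ s, n u)) := by
  classical
  induction s using Finset.induction_on with
  | empty => simpa using refl
  | insert u s hu ih =>
    have h1 := (h u (by simp)).pow (n u)
    have h2 := ih fun v hv => h v (by simp [hv])
    refine (h1.mul h2).congr (fun z _ => ?_) (fun z _ => ?_)
    · rw [Finset.prod_insert hu]
    · rw [Finset.sum_insert hu, pow_add]

/-- A quotient avoiding the negative real axis has a continuous logarithm. -/
lemma of_slit (ha : ContinuousOn a C) (hb : ContinuousOn b C)
    (hb0 : ∀ z ∈ C, b z ≠ 0) (h : ∀ z ∈ C, a z / b z ∈ slitPlane) : LogEq C a b := by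
  refine ⟨fun z => Complex.log (a z / b z), (ha.div hb hb0).clog h, fun z hz => ?_⟩
  rw [Complex.exp_log (slitPlane_ne_zero (h z hz)), mul_div_cancel₀ _ (hb0 z hz)]

/-- Nonvanishing continuous functions on convex open sets have continuous logarithms. -/
lemma of_convex {U : Set ℂ} (hU : IsOpen U) (hc : Convex ℝ U) (hne : U.Nonempty)
    (ha : ContinuousOn a U) (h0 : ∀ z ∈ U, a z ≠ 0) (hCU : C ⊆ U) : LogEq C a (fun _ => 1) := by
  have hs : IsSimplyConnected U := by
    have := hc.contractibleSpace hne
    exact SimplyConnectedSpace.ofContractible U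
  obtain ⟨l, hl, h⟩ := Complex.exists_continuousOn_eqOn_exp_comp hs hU ha
    (by rintro ⟨z, hz, h⟩; exact h0 z hz h)
  exact ⟨l, hl.mono hCU, fun z hz => by rw [one_mul]; exact (h (hCU hz)).symm⟩

lemma comp {p : ℂ → ℂ} (h : LogEq C a b) (hp : ContinuousOn p C') (hm : MapsTo p C' C) :
    LogEq C' (fun z => a (p z)) (fun z => b (p z)) := by
  obtain ⟨l, hl, h⟩ := h
  exact ⟨fun z => l (p z), hl.comp hp hm, fun z hz => h _ (hm hz)⟩

/-- On a circle around `x`, the class of `z - x` is not an `m`-th power when `m ≥ 2`. -/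
lemma no_pow {x : ℂ} {r : ℝ} (hr : 0 < r) {m : ℕ} (hm : 2 ≤ m)
    (hb : ContinuousOn b (Metric.sphere x r))
    (h : LogEq (Metric.sphere x r) (fun z => z - x) (fun z => b z ^ m)) : False := by
  obtain ⟨l, hl, h⟩ := h
  have hm0 : (m : ℂ) ≠ 0 := by exact_mod_cast (by omega : m ≠ 0)
  refine no_root hr hm (g := fun z => b z * exp (l z / m)) (hb.mul (hl.div_const _).cexp) ?_
  intro z hz
  have h1 : z - x = b z ^ m * exp (l z) := h z hz
  rw [h1, mul_pow, ← Complex.exp_nat_mul, mul_div_cancel₀ _ hm0]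

end LogEq

/-- A holomorphic function with finitely many zeros is a zero-free function times linear factors. -/
lemma factor_zeros {U : Set ℂ} (hU : IsOpen U) (s : Finset ℂ) :
    ∀ g : ℂ → ℂ, DifferentiableOn ℂ g U → (∀ z ∈ U, g z = 0 ↔ z ∈ s) → (∀ z ∈ s, z ∈ U) →
    ∃ (d : ℂ → ℕ) (e : ℂ → ℂ), (∀ u ∈ s, 1 ≤ d u) ∧ DifferentiableOn ℂ e U ∧ (∀ z ∈ U, e z ≠ 0) ∧
      ∀ z ∈ U, g z = e z * ∏ u ∈ s, (z - u) ^ d u := by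
  classical
  induction s using Finset.induction_on with
  | empty =>
    intro g hg h0 _
    exact ⟨fun _ => 0, g, by simp, hg, fun z hz h => by simpa using (h0 z hz).1 h, by simp⟩
  | insert u s hu ih =>
    intro g hg h0 hsU
    have huU : u ∈ U := hsU u (by simp)
    have han : AnalyticAt ℂ g u := hg.analyticAt (hU.mem_nhds huU)
    have hnz : ¬ ∀ᶠ z in 𝓝 u, g z = 0 := by
      intro hev
      have h1 : ∀ᶠ z in 𝓝 u, z ∈ (insert u s : Finset ℂ) := by
        filter_upwards [hev, hU.mem_nhds huU] with z h1 h2 using (h0 z h2).1 h1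
      have h2 : ((insert u s : Finset ℂ) : Set ℂ) ∈ 𝓝 u := h1
      exact (infinite_of_mem_nhds u h2) (Finset.finite_toSet _)
    obtain ⟨n, g0, hg0, hg0u, hev⟩ := han.exists_eventuallyEq_pow_smul_nonzero_iff.2 hnz
    have hn : 1 ≤ n := by
      rcases Nat.eq_zero_or_pos n with h | h
      · exfalso
        have := hev.self_of_nhds
        rw [h] at this
        simp only [pow_zero, one_smul] at this
        exact hg0u (this ▸ (h0 u huU).2 (by simp))
      · exact h
    let G : ℂ → ℂ := fun z => if z = u then g0 u else g z / (z - u) ^ n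
    have hGu : G =ᶠ[𝓝 u] g0 := by
      filter_upwards [hev] with z hz
      by_cases h : z = u
      · simp [G, h]
      · simp only [G, h, if_false, hz, smul_eq_mul]
        rw [mul_div_cancel_left₀]
        exact pow_ne_zero _ (sub_ne_zero.2 h)
    have hGd : DifferentiableOn ℂ G U := by
      intro z hz
      by_cases h : z = u
      · subst h
        exact (hg0.differentiableAt.congr_of_eventuallyEq hGu).differentiableWithinAt
      · have h1 : G =ᶠ[𝓝 z] fun z => g z / (z - u) ^ n := by
          filter_upwards [isOpen_ne.mem_nhds h] with y hy
          simp only [G]; rw [if_neg hy]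
        refine (DifferentiableAt.congr_of_eventuallyEq ?_ h1).differentiableWithinAt
        exact (hg.differentiableAt (hU.mem_nhds hz)).fun_div (by fun_prop)
          (pow_ne_zero _ (sub_ne_zero.2 h))
    have hG0 : ∀ z ∈ U, G z = 0 ↔ z ∈ s := by
      intro z hz
      by_cases h : z = u
      · subst h; simp [G, hg0u, hu]
      · have h1 : (z - u) ^ n ≠ 0 := pow_ne_zero _ (sub_ne_zero.2 h)
        simp only [G, if_neg h, div_eq_zero_iff, h1, or_false]
        rw [h0 z hz]; simp [h]
    obtain ⟨d, e, hd, he, he0, hfac⟩ := ih G hGd hG0 (fun z hz => hsU z (by simp [hz]))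
    refine ⟨fun v => if v = u then n else d v, e, ?_, he, he0, ?_⟩
    · intro v hv
      by_cases h : v = u
      · simp [h, hn]
      · simp only [if_neg h]; exact hd v (by simpa [h] using hv)
    · intro z hz
      rw [Finset.prod_insert hu]
      have hpr : ∏ v ∈ s, (z - v) ^ (if v = u then n else d v) = ∏ v ∈ s, (z - v) ^ d v := by
        refine Finset.prod_congr rfl fun v hv => ?_
        rw [if_neg]; rintro rfl; exact hu hv
      beta_reduce
      rw [hpr, if_pos rfl, mul_left_comm, ← hfac z hz]
      by_cases h : z = u
      · subst h
        rw [(h0 z huU).2 (by simp), sub_self, zero_pow (by omega), zero_mul]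
      · simp only [G, if_neg h]
        rw [mul_div_cancel₀ _ (pow_ne_zero _ (sub_ne_zero.2 h))]

/-! ### Values of `F` outside the disc and on the unit circle -/

/-- Perturbations smaller than the function itself do not change its logarithmic class. -/
lemma LogEq.of_close {C : Set ℂ} {a b : ℂ → ℂ} (ha : ContinuousOn a C) (hb : ContinuousOn b C)
    (h : ∀ z ∈ C, ‖a z - b z‖ < ‖b z‖) : LogEq C a b := by
  have hb0 : ∀ z ∈ C, b z ≠ 0 := fun z hz => norm_pos_iff.1 ((norm_nonneg _).trans_lt (h z hz))
  refine LogEq.of_slit ha hb hb0 fun z hz => ?_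
  have h1 : a z / b z = 1 + (a z - b z) / b z := by
    have := hb0 z hz
    field_simp; ring
  rw [h1]
  apply Complex.mem_slitPlane_of_norm_lt_one
  rw [norm_div, div_lt_one (norm_pos_iff.2 (hb0 z hz))]
  exact h z hz

lemma div_mem_slitPlane {p u v : ℂ} (hp : p ∉ segment ℝ v u) : (p - u) / (p - v) ∈ slitPlane := by
  have hpv : p - v ≠ 0 := by
    intro h; exact hp (by rw [sub_eq_zero.1 h]; exact left_mem_segment ℝ v u)
  by_contra hcon
  rw [Complex.mem_slitPlane_iff] at hcon
  push Not at hcon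
  obtain ⟨h1, h2⟩ := hcon
  set t : ℝ := -((p - u) / (p - v)).re with ht
  have ht0 : 0 ≤ t := by linarith
  have h3 : (p - u) / (p - v) = ((-t : ℝ) : ℂ) := by
    apply Complex.ext
    · simp [ht]
    · rw [h2]; simp
  rw [div_eq_iff hpv] at h3
  apply hp
  clear_value t
  have ht1 : (1 + t : ℝ) ≠ 0 := by positivity
  have ht1' : (1 + t : ℂ) ≠ 0 := by exact_mod_cast ht1
  refine ⟨t / (1 + t), 1 / (1 + t), by positivity, by positivity, by field_simp; ring, ?_⟩
  rw [real_smul, real_smul]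
  push_cast at h3 ⊢
  field_simp
  linear_combination -h3

/-- The properties of the solution `F` of the Beltrami equation used by the topological part:
`F` is conformal outside the closed unit disc, with values there taken only once. -/
structure Weld (F : ℂ → ℂ) : Prop where
  cont : Continuous F
  diff : DifferentiableOn ℂ F {z | 1 < ‖z‖}
  bdd : ∃ B, ∀ z, ‖F z - z‖ ≤ B
  der : ∀ z, 1 < ‖z‖ → deriv F z ≠ 0
  inj : ∀ z, 1 < ‖z‖ → ∀ y ≠ z, F y ≠ F z

lemma isOpen_out : IsOpen {z : ℂ | 1 < ‖z‖} := isOpen_lt continuous_const continuous_norm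

/-- The function `s (F (1/s) - c)`, completed by its limit `1` at `s = 0`. -/
noncomputable def psi (F : ℂ → ℂ) (c s : ℂ) : ℂ := 1 + s * (F s⁻¹ - s⁻¹ - c)

lemma psi_zero (F : ℂ → ℂ) (c : ℂ) : psi F c 0 = 1 := by simp [psi]

lemma psi_eq (F : ℂ → ℂ) (c : ℂ) {s : ℂ} (hs : s ≠ 0) : psi F c s = s * (F s⁻¹ - c) := by
  rw [psi]; field_simp; ring

lemma exists_outside {b : ℂ} (hb : ‖b‖ = 1) {V : Set ℂ} (hV : V ∈ 𝓝 b) : ∃ z ∈ V, 1 < ‖z‖ := by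
  have ht : Tendsto (fun t : ℝ => (t : ℂ) * b) (𝓝[>] 1) (𝓝 b) := by
    have h1 : Tendsto (fun t : ℝ => (t : ℂ) * b) (𝓝 1) (𝓝 (((1 : ℝ) : ℂ) * b)) :=
      (Continuous.tendsto (by fun_prop) 1)
    rw [ofReal_one, one_mul] at h1
    exact h1.mono_left nhdsWithin_le_nhds
  obtain ⟨t, ht1, ht2⟩ := ((ht.eventually hV).and self_mem_nhdsWithin).exists
  refine ⟨_, ht1, ?_⟩
  have : (1 : ℝ) < t := ht2
  rw [norm_mul, hb, mul_one, Complex.norm_real, Real.norm_eq_abs]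
  exact this.trans_le (le_abs_self t)

namespace Weld
variable {F : ℂ → ℂ}

lemma psi_cont (hF : Weld F) (c : ℂ) : Continuous (psi F c) := by
  rw [continuous_iff_continuousAt]
  intro s
  by_cases hs : s = 0
  · subst hs
    obtain ⟨B, hB⟩ := hF.bdd
    rw [ContinuousAt, psi_zero]
    have h1 : Tendsto (fun s : ℂ => s * (F s⁻¹ - s⁻¹ - c)) (𝓝 0) (𝓝 0) := by
      refine squeeze_zero_norm (a := fun s => ‖s‖ * (B + ‖c‖)) (fun s => ?_) ?_
      · rw [norm_mul]
        exact mul_le_mul_of_nonneg_left ((norm_sub_le _ _).trans (by linarith [hB s⁻¹])) (norm_nonneg _)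
      · have : Continuous fun s : ℂ => ‖s‖ * (B + ‖c‖) := by fun_prop
        simpa using this.tendsto 0
    have h2 := h1.const_add 1
    rw [add_zero] at h2
    exact h2
  · have h1 : ContinuousAt (fun s : ℂ => s⁻¹) s := continuousAt_inv₀ hs
    have h2 : ContinuousAt (fun s : ℂ => F s⁻¹) s := hF.cont.continuousAt.comp h1
    exact continuousAt_const.add (continuousAt_id.mul ((h2.sub h1).sub continuousAt_const))

lemma psi_diff (hF : Weld F) (c : ℂ) : DifferentiableOn ℂ (psi F c) (Metric.ball 0 1) := by
  refine (Complex.differentiableOn_compl_singleton_and_continuousAt_iff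
    (Metric.ball_mem_nhds (0 : ℂ) one_pos)).1 ⟨?_, (hF.psi_cont c).continuousAt⟩
  rintro s ⟨hs, hs0⟩
  have hs0 : s ≠ 0 := hs0
  have hs1 : 1 < ‖s⁻¹‖ := by
    rw [norm_inv]
    exact (one_lt_inv₀ (norm_pos_iff.2 hs0)).2 (by simpa using hs)
  have h1 : DifferentiableAt ℂ (fun s : ℂ => s⁻¹) s := differentiableAt_inv hs0
  have h2 : DifferentiableAt ℂ (fun s : ℂ => F s⁻¹) s :=
    (hF.diff.differentiableAt (isOpen_out.mem_nhds hs1)).comp s h1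
  exact ((differentiableAt_const _).fun_add (differentiableAt_fun_id.fun_mul
    ((h2.fun_sub h1).fun_sub (differentiableAt_const _)))).differentiableWithinAt

/-- `F` is not constant on any arc of the unit circle: otherwise a finite product of rotated
copies of `psi F c` would vanish on the whole circle, while its value at `0` is `1`. -/
lemma arc (hF : Weld F) (c : ℂ) {b : ℂ} (hb : ‖b‖ = 1) {V : Set ℂ} (hV : V ∈ 𝓝 b) :
    ∃ z ∈ V, ‖z‖ = 1 ∧ F z ≠ c := by
  by_contra! hcon
  have hb0 : b ≠ 0 := by rw [← norm_ne_zero_iff, hb]; norm_num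
  let N : ℂ → Set ℂ := fun s' => {s | s * (s' * b)⁻¹ ∈ (fun s => s⁻¹) ⁻¹' V}
  obtain ⟨t, ht, hcov⟩ := (isCompact_sphere (0 : ℂ) 1).elim_nhds_subcover N (fun s' hs' => by
    have hs0 : s' ≠ 0 := by
      rintro rfl; simp at hs'
    have h1 : s' * (s' * b)⁻¹ = b⁻¹ := by field_simp
    have h2 : Tendsto (fun s => (s * (s' * b)⁻¹)⁻¹) (𝓝 s') (𝓝 b) := by
      have : ContinuousAt (fun s => (s * (s' * b)⁻¹)⁻¹) s' :=
        ContinuousAt.inv₀ (by fun_prop) (by rw [h1]; exact inv_ne_zero hb0)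
      have h3 := this.tendsto
      rwa [h1, inv_inv] at h3
    exact h2 hV)
  let P : ℂ → ℂ := fun s => ∏ s' ∈ t, psi F c (s * (s' * b)⁻¹)
  have hnorm : ∀ s' ∈ t, ∀ s : ℂ, ‖s * (s' * b)⁻¹‖ = ‖s‖ := by
    intro s' hs' s
    have : ‖s'‖ = 1 := by simpa using ht s' hs'
    rw [norm_mul, norm_inv, norm_mul, this, hb]; simp
  have hPc : Continuous P := continuous_finsetProd _ fun s' _ =>
    (hF.psi_cont c).comp (by fun_prop)
  have hPd : DifferentiableOn ℂ P (Metric.ball 0 1) := by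
    refine DifferentiableOn.fun_finsetProd fun s' hs' => ?_
    refine (hF.psi_diff c).comp (by fun_prop) fun s hs => ?_
    rw [mem_ball_zero_iff] at hs ⊢
    rw [hnorm s' hs']; exact hs
  have hP0 : ∀ s ∈ frontier (Metric.ball (0 : ℂ) 1), ‖P s‖ ≤ 0 := by
    intro s hs
    rw [frontier_ball _ one_ne_zero] at hs
    obtain ⟨s', hs', h⟩ := mem_iUnion₂.1 (hcov hs)
    have hn : ‖s * (s' * b)⁻¹‖ = 1 := by rw [hnorm s' hs']; simpa using hs
    have : psi F c (s * (s' * b)⁻¹) = 0 := by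
      rw [psi_eq _ _ (by rw [← norm_ne_zero_iff, hn]; norm_num)]
      rw [hcon _ h (by rw [norm_inv, hn, inv_one]), sub_self, mul_zero]
    rw [norm_le_zero_iff]
    exact Finset.prod_eq_zero hs' this
  have := Complex.norm_le_of_forall_mem_frontier_norm_le Metric.isBounded_ball
    ⟨hPd, hPc.continuousOn⟩ hP0 (z := 0) (subset_closure (by simp))
  simp [P, psi_zero] at this
  linarith

end Weld

/-! ### Injectivity in the disc -/

/-- A homeomorphism `q` of the convex open set `U` onto the unit disc such that `F ∘ q` is
holomorphic, for `F` as in `Weld`. -/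
structure WeldData (F q : ℂ → ℂ) (U : Set ℂ) : Prop extends Weld F where
  isOpen : IsOpen U
  convex : Convex ℝ U
  injOn : InjOn q U
  img : q '' U = Metric.ball 0 1
  nhds : ∀ w ∈ U, map q (𝓝 w) = 𝓝 (q w)
  holo : DifferentiableOn ℂ (F ∘ q) U

namespace WeldData
variable {F q : ℂ → ℂ} {U : Set ℂ}

lemma not_const (h : WeldData F q U) : ¬ ∃ c, ∀ w ∈ U, (F ∘ q) w = c := by
  rintro ⟨c, hc⟩
  have h1 : ∀ z ∈ Metric.ball (0 : ℂ) 1, F z = c := by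
    intro z hz
    rw [← h.img] at hz
    obtain ⟨w, hw, rfl⟩ := hz
    exact hc w hw
  have h2 : ∀ z ∈ closure (Metric.ball (0 : ℂ) 1), F z = c := by
    have : IsClosed {z | F z = c} := isClosed_eq h.cont continuous_const
    exact closure_minimal h1 this
  rw [closure_ball _ one_ne_zero] at h2
  obtain ⟨z, -, hz, hne⟩ := h.arc c (b := 1) (by simp) univ_mem
  exact hne (h2 z (by simp [hz]))

lemma isOpen_image (h : WeldData F q U) : IsOpen ((F ∘ q) '' U) :=
  ((h.holo.analyticOnNhd h.isOpen).is_constant_or_isOpen h.convex.isPreconnected).resolve_left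
    h.not_const U Subset.rfl h.isOpen

lemma isOpen_ball_image (h : WeldData F q U) : IsOpen (F '' Metric.ball 0 1) := by
  rw [← h.img, ← image_comp]; exact h.isOpen_image

/-- A common value of the disc and the circle would, by openness, also be attained just
outside the disc. -/
lemma disj (h : WeldData F q U) {z b : ℂ} (hz : ‖z‖ < 1) (hb : ‖b‖ = 1) : F z ≠ F b := by
  intro heq
  have h1 : F '' Metric.ball 0 1 ∈ 𝓝 (F b) :=
    h.isOpen_ball_image.mem_nhds ⟨z, by simpa using hz, heq⟩
  obtain ⟨y, ⟨x, hx, hxy⟩, hy⟩ := exists_outside hb (h.cont.continuousAt h1)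
  refine h.inj y hy x ?_ hxy
  rintro rfl
  rw [mem_ball_zero_iff] at hx
  linarith

/-- The argument principle in disguise: if `F ∘ q` took the value `c` at least twice, then
`F - c` would be logarithmically equivalent on a circle to an `m`-th power, `m ≥ 2`, from the
inside and to `z` from the outside. -/
lemma inj_comp (h : WeldData F q U) : InjOn (F ∘ q) U := by
  intro w₁ hw₁ w₂ hw₂ heq
  by_contra hne
  set c : ℂ := (F ∘ q) w₁ with hc
  have hqmem : ∀ w ∈ U, ‖q w‖ < 1 := fun w hw => by
    have : q w ∈ Metric.ball (0 : ℂ) 1 := h.img ▸ mem_image_of_mem q hw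
    simpa using this
  -- `c` is not attained outside the open disc
  have hout : ∀ z, 1 ≤ ‖z‖ → F z ≠ c := by
    intro z hz
    rcases hz.lt_or_eq with hz | hz
    · intro h1
      refine h.inj z hz (q w₁) ?_ h1.symm
      rintro rfl; linarith [hqmem w₁ hw₁]
    · exact (h.disj (hqmem w₁ hw₁) hz.symm).symm
  have hqc : ContinuousOn q U := fun w hw =>
    (show Tendsto q (𝓝 w) (𝓝 (q w)) from (h.nhds w hw).le).mono_left nhdsWithin_le_nhds
  set p : ℂ → ℂ := Function.invFunOn q U with hp
  have hpq : ∀ w ∈ U, p (q w) = w := fun w hw => h.injOn.leftInvOn_invFunOn hw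
  have hpm : ∀ z, ‖z‖ < 1 → p z ∈ U ∧ q (p z) = z := by
    intro z hz
    have hz : z ∈ q '' U := by rw [h.img]; simpa using hz
    obtain ⟨w, hw, rfl⟩ := hz
    rw [hpq w hw]; exact ⟨hw, rfl⟩
  have hpc : ContinuousOn p (Metric.ball 0 1) := by
    intro z hz
    obtain ⟨h1, h2⟩ := hpm z (by simpa using hz)
    have h3 : Tendsto p (𝓝 z) (𝓝 (p z)) := by
      nth_rewrite 1 [← h2]
      rw [← h.nhds _ h1, tendsto_map'_iff]
      refine tendsto_id.congr' ?_
      filter_upwards [h.isOpen.mem_nhds h1] with w hw using (hpq w hw).symm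
    exact h3.mono_left nhdsWithin_le_nhds
  -- The preimages of `c` form a compact subset of the open disc, hence a finite set.
  set K : Set ℂ := {z | F z = c} ∩ Metric.closedBall 0 1 with hK
  have hKc : IsCompact K :=
    (isCompact_closedBall (0 : ℂ) 1).inter_left (isClosed_eq h.cont continuous_const)
  have hKb : K ⊆ Metric.ball 0 1 := by
    rintro z ⟨h1, -⟩
    rw [mem_ball_zero_iff]
    by_contra h2
    exact hout z (not_lt.1 h2) h1
  have hZc : IsCompact (p '' K) := hKc.image_of_continuousOn (hpc.mono hKb)
  have hZ : ∀ w ∈ U, (F ∘ q) w = c ↔ w ∈ p '' K := by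
    intro w hw
    constructor
    · intro h1
      exact ⟨q w, ⟨h1, by simpa using (hqmem w hw).le⟩, hpq w hw⟩
    · rintro ⟨z, hz, rfl⟩
      have := hpm z (by simpa using hKb hz)
      simp only [Function.comp_apply, this.2]
      exact hz.1
  have hZU : p '' K ⊆ U := by
    rintro _ ⟨z, hz, rfl⟩
    exact (hpm z (by simpa using hKb hz)).1
  have hfin : (p '' K).Finite := by
    by_contra hinf
    obtain ⟨x, hx, hacc⟩ := Set.Infinite.exists_accPt_of_subset_isCompact hinf hZc Subset.rfl
    have han : AnalyticOnNhd ℂ (F ∘ q) U := h.holo.analyticOnNhd h.isOpen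
    have hfr : ∃ᶠ w in 𝓝[≠] x, (F ∘ q) w = c := by
      rw [accPt_iff_frequently_nhdsNE] at hacc
      exact hacc.mono fun w hw => (hZ w (hZU hw)).2 hw
    exact h.not_const ⟨c, han.eqOn_of_preconnected_of_frequently_eq (g := fun _ => c)
      analyticOnNhd_const h.convex.isPreconnected (hZU hx) hfr⟩
  set s : Finset ℂ := hfin.toFinset with hs
  have hsm : ∀ w, w ∈ s ↔ w ∈ p '' K := fun w => hfin.mem_toFinset
  obtain ⟨d, e, hd, he, he0, hfac⟩ := factor_zeros h.isOpen s (fun w => (F ∘ q) w - c)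
    (h.holo.sub_const c) (fun w hw => by rw [sub_eq_zero, hsm]; exact hZ w hw)
    (fun w hw => hZU ((hsm w).1 hw))
  have hm : 2 ≤ ∑ u ∈ s, d u := by
    have h1 : w₁ ∈ s := (hsm _).2 ((hZ _ hw₁).1 rfl)
    have h2 : w₂ ∈ s := (hsm _).2 ((hZ _ hw₂).1 heq.symm)
    have h3 : 2 ≤ s.card := Finset.one_lt_card.2 ⟨w₁, h1, w₂, h2, hne⟩
    calc 2 ≤ s.card := h3
      _ = ∑ u ∈ s, 1 := by simp
      _ ≤ _ := Finset.sum_le_sum hd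
  -- a radius beyond all the solutions and all the segments joining them to `w₁`
  set L : Set ℂ := ⋃ u ∈ s, q '' segment ℝ w₁ u with hL
  have hseg : ∀ u ∈ s, segment ℝ w₁ u ⊆ U := fun u hu =>
    h.convex.segment_subset hw₁ (hZU ((hsm u).1 hu))
  have hLc : IsCompact L := by
    refine s.isCompact_biUnion fun u hu => ?_
    refine IsCompact.image_of_continuousOn ?_ (hqc.mono (hseg u hu))
    rw [← convexHull_pair]
    exact (Set.toFinite {w₁, u}).isCompact_convexHull ℝ
  have hLb : ∀ z ∈ L, ‖z‖ < 1 := by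
    intro z hz
    obtain ⟨u, hu, w, hw, rfl⟩ := mem_iUnion₂.1 hz
    exact hqmem w (hseg u hu hw)
  have hKL : K ⊆ L := by
    intro z hz
    refine mem_iUnion₂.2 ⟨p z, (hsm _).2 ⟨z, hz, rfl⟩, p z, right_mem_segment _ _ _, ?_⟩
    exact (hpm z (by simpa using hKb hz)).2
  have hLne : L.Nonempty := ⟨q w₁, hKL ⟨rfl, by simpa using (hqmem w₁ hw₁).le⟩⟩
  obtain ⟨y, hy, hymax⟩ := hLc.exists_isMaxOn hLne continuous_norm.continuousOn
  set M := ‖y‖ with hM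
  have hM1 : M < 1 := hLb y hy
  have hM0 : 0 ≤ M := norm_nonneg _
  have hLM : ∀ z ∈ L, ‖z‖ ≤ M := fun z hz => hymax hz
  clear_value M
  set r : ℝ := (M + 2) / 3 with hr
  set r' : ℝ := (2 * M + 1) / 3 with hr'
  have hr0 : 0 < r := by rw [hr]; linarith
  have hr1 : r < 1 := by rw [hr]; linarith
  have hr'0 : 0 < r' := by rw [hr']; linarith
  have hr'r : r' < r := by rw [hr, hr']; linarith
  have hMr' : M < r' := by rw [hr']; linarith
  clear_value r r'
  have hCb : Metric.sphere (0 : ℂ) r ⊆ Metric.ball 0 1 :=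
    fun z hz => by rw [mem_sphere_zero_iff_norm] at hz; rw [mem_ball_zero_iff, hz]; exact hr1
  have hpcC := hpc.mono hCb
  have hpC : ∀ z ∈ Metric.sphere (0 : ℂ) r, ∀ u ∈ s, p z ∉ segment ℝ w₁ u := by
    intro z hz u hu hmem
    rw [mem_sphere_zero_iff_norm] at hz
    have h1 : z ∈ L := mem_iUnion₂.2 ⟨u, hu, p z, hmem, (hpm z (by rw [hz]; exact hr1)).2⟩
    linarith [hLM z h1]
  have hw₁s : w₁ ∈ s := (hsm _).2 ((hZ _ hw₁).1 rfl)
  have hinner : LogEq (Metric.sphere 0 r) (fun z => F z - c)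
      (fun z => (p z - w₁) ^ (∑ u ∈ s, d u)) := by
    have h1 : LogEq (Metric.sphere 0 r) (fun z => ∏ u ∈ s, (p z - u) ^ d u)
        (fun z => (p z - w₁) ^ (∑ u ∈ s, d u)) := by
      refine LogEq.prod (a := fun u z => p z - u) fun u hu => ?_
      refine LogEq.of_slit (hpcC.sub continuousOn_const) (hpcC.sub continuousOn_const) ?_ ?_
      · intro z hz h0
        apply hpC z hz u hu
        rw [sub_eq_zero.1 h0]; exact left_mem_segment _ _ _
      · intro z hz
        exact div_mem_slitPlane (hpC z hz u hu)
    have h2 : LogEq (Metric.sphere 0 r) (fun z => e (p z)) (fun _ => 1) :=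
      LogEq.comp (b := fun _ => 1) (LogEq.of_convex h.isOpen h.convex ⟨w₁, hw₁⟩ he.continuousOn
        he0 Subset.rfl) hpcC fun z hz => (hpm z (by simpa using hCb hz)).1
    refine (h2.mul h1).congr (fun z hz => ?_) (fun z _ => one_mul _)
    obtain ⟨h3, h4⟩ := hpm z (by simpa using hCb hz)
    rw [← hfac _ h3]; simp [h4]
  have houter : LogEq (Metric.sphere 0 r) (fun z => F z - c) (fun z => z - 0) := by
    have h1 : LogEq (Metric.ball 0 r'⁻¹) (psi F c) (fun _ => 1) := by
      refine LogEq.of_convex Metric.isOpen_ball (convex_ball _ _) ⟨0, by simpa using hr'0⟩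
        (h.psi_cont c).continuousOn (fun t ht => ?_) Subset.rfl
      by_cases ht0 : t = 0
      · rw [ht0, psi_zero]; exact one_ne_zero
      rw [psi_eq _ _ ht0]
      refine mul_ne_zero ht0 (sub_ne_zero.2 fun h2 => ?_)
      have h3 : r' < ‖t⁻¹‖ := by
        rw [mem_ball_zero_iff] at ht
        rw [norm_inv]
        exact (lt_inv_comm₀ (norm_pos_iff.2 ht0) hr'0).1 ht
      by_cases h4 : ‖t⁻¹‖ ≤ 1
      · linarith [hLM _ (hKL ⟨h2, by simpa using h4⟩)]
      · exact hout _ (not_le.1 h4).le h2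
    have hz0 : ∀ z ∈ Metric.sphere (0 : ℂ) r, z ≠ 0 := fun z hz => by
      rw [← norm_ne_zero_iff, mem_sphere_zero_iff_norm.1 hz]; exact hr0.ne'
    have h2 : LogEq (Metric.sphere 0 r) (fun z => psi F c z⁻¹) (fun _ => 1) := by
      refine h1.comp (p := fun z => z⁻¹) (continuousOn_id.inv₀ hz0) fun z hz => ?_
      rw [mem_ball_zero_iff, norm_inv, mem_sphere_zero_iff_norm.1 hz]
      exact (inv_lt_inv₀ hr0 hr'0).2 hr'r
    refine ((LogEq.refl (a := fun z => z)).mul h2).congr (fun z hz => ?_) (fun z _ => by simp)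
    have := hz0 z hz
    rw [psi_eq _ _ (inv_ne_zero this), inv_inv]
    field_simp
  exact LogEq.no_pow hr0 hm (hpcC.sub continuousOn_const) (houter.symm.trans hinner)

end WeldData

/-! ### The Cayley transform and the point at infinity -/

/-- The Cayley transform, mapping the upper half-plane onto the unit disc. -/
noncomputable def cay (w : ℂ) : ℂ := (w - I) / (w + I)

lemma add_I_ne {w : ℂ} (hw : w ≠ -I) : w + I ≠ 0 := fun h => hw (eq_neg_of_add_eq_zero_left h)

lemma ne_neg_I {w : ℂ} (hw : -1 < w.im) : w ≠ -I := by
  rintro rfl; simp at hw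

lemma cay_ne_one {w : ℂ} (hw : w ≠ -I) : cay w ≠ 1 := by
  rw [cay, Ne, div_eq_one_iff_eq (add_I_ne hw)]
  intro h
  have h1 : (2 : ℂ) * I = 0 := by linear_combination -h
  exact (mul_ne_zero two_ne_zero I_ne_zero) h1

lemma normSq_cay (w : ℂ) : normSq (w + I) - normSq (w - I) = 4 * w.im := by
  simp [normSq_apply]; ring

lemma norm_cay_lt {w : ℂ} (hw : 0 < w.im) : ‖cay w‖ < 1 := by
  have h0 := add_I_ne (ne_neg_I (w := w) (by linarith))
  rw [cay, norm_div, div_lt_one (norm_pos_iff.2 h0)]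
  have := normSq_cay w
  rw [normSq_eq_norm_sq, normSq_eq_norm_sq] at this
  exact lt_of_pow_lt_pow_left₀ 2 (norm_nonneg _) (by linarith)

lemma norm_cay_gt {w : ℂ} (hw : w.im < 0) (hw' : w ≠ -I) : 1 < ‖cay w‖ := by
  have h0 := add_I_ne hw'
  rw [cay, norm_div, one_lt_div (norm_pos_iff.2 h0)]
  have := normSq_cay w
  rw [normSq_eq_norm_sq, normSq_eq_norm_sq] at this
  exact lt_of_pow_lt_pow_left₀ 2 (norm_nonneg _) (by linarith)

lemma norm_cay_eq {w : ℂ} (hw : w.im = 0) : ‖cay w‖ = 1 := by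
  have h0 := add_I_ne (ne_neg_I (w := w) (by linarith))
  rw [cay, norm_div, div_eq_one_iff_eq (norm_ne_zero_iff.2 h0)]
  have := normSq_cay w
  rw [normSq_eq_norm_sq, normSq_eq_norm_sq, hw] at this
  exact (pow_left_inj₀ (norm_nonneg _) (norm_nonneg _) two_ne_zero).1 (by linarith)

/-- The inverse of `cay`. -/
noncomputable def cayInv (z : ℂ) : ℂ := I * (1 + z) / (1 - z)

lemma cayInv_ne {z : ℂ} (hz : z ≠ 1) : cayInv z ≠ -I := by
  have h0 : 1 - z ≠ 0 := sub_ne_zero.2 hz.symm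
  rw [cayInv, Ne, div_eq_iff h0]
  intro h
  have h1 : (2 : ℂ) * I = 0 := by linear_combination h
  exact (mul_ne_zero two_ne_zero I_ne_zero) h1

lemma cay_cayInv {z : ℂ} (hz : z ≠ 1) : cay (cayInv z) = z := by
  have h0 : 1 - z ≠ 0 := sub_ne_zero.2 hz.symm
  have h1 := add_I_ne (cayInv_ne hz)
  rw [cay, div_eq_iff h1, cayInv]
  field_simp
  ring

lemma cayInv_cay {w : ℂ} (hw : w ≠ -I) : cayInv (cay w) = w := by
  have h0 := add_I_ne hw
  have h1 : 1 - cay w ≠ 0 := sub_ne_zero.2 (cay_ne_one hw).symm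
  rw [cayInv, div_eq_iff h1, cay]
  field_simp
  ring

lemma cay_inj {w w' : ℂ} (hw : w ≠ -I) (hw' : w' ≠ -I) (h : cay w = cay w') : w = w' := by
  rw [← cayInv_cay hw, h, cayInv_cay hw']

lemma cay_hasDerivAt {w : ℂ} (hw : w ≠ -I) : HasDerivAt cay (2 * I / (w + I) ^ 2) w := by
  have h0 := add_I_ne hw
  have h1 := ((hasDerivAt_id w).sub_const I).div ((hasDerivAt_id w).add_const I) h0
  refine h1.congr_deriv ?_
  simp only [id]
  congr 1; ring

lemma cay_deriv_ne {w : ℂ} (hw : w ≠ -I) : 2 * I / (w + I) ^ 2 ≠ 0 :=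
  div_ne_zero (mul_ne_zero two_ne_zero I_ne_zero) (pow_ne_zero _ (add_I_ne hw))

namespace Weld
variable {F : ℂ → ℂ}

lemma arc_real (hF : Weld F) (c : ℂ) {a b : ℝ} (hab : a < b) : ∃ y ∈ Ioo a b, F (cay (y : ℝ)) ≠ c := by
  set m : ℝ := (a + b) / 2 with hm
  have hmI : (m : ℂ) ≠ -I := ne_neg_I (by simp)
  have hm1 := cay_ne_one hmI
  have hcont : ContinuousAt cayInv (cay m) := by
    unfold cayInv
    exact ContinuousAt.div (by fun_prop) (by fun_prop) (sub_ne_zero.2 hm1.symm)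
  have hV : cayInv ⁻¹' Metric.ball (m : ℂ) ((b - a) / 2) ∩ {1}ᶜ ∈ 𝓝 (cay m) := by
    refine inter_mem (hcont ?_) (isOpen_compl_singleton.mem_nhds hm1)
    rw [cayInv_cay hmI]
    exact Metric.ball_mem_nhds _ (by linarith)
  obtain ⟨z, ⟨hz, hz1⟩, hzn, hzc⟩ := hF.arc c (norm_cay_eq (w := m) (by simp)) hV
  have hz1 : z ≠ 1 := hz1
  set w := cayInv z with hw
  have hwz : cay w = z := cay_cayInv hz1
  have him : w.im = 0 := by
    rcases lt_trichotomy w.im 0 with h | h | h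
    · have := norm_cay_gt h (cayInv_ne hz1); rw [hwz] at this; linarith
    · exact h
    · have := norm_cay_lt h; rw [hwz] at this; linarith
  have hre : (w.re : ℂ) = w := Complex.ext (by simp) (by simp [him])
  refine ⟨w.re, ?_, by rw [hre, hwz]; exact hzc⟩
  have h1 : ‖w - m‖ < (b - a) / 2 := by
    have : w ∈ Metric.ball (m : ℂ) ((b - a) / 2) := hz
    rwa [mem_ball_iff_norm] at this
  have h2 := (abs_re_le_norm (w - m)).trans_lt h1
  rw [sub_re, ofReal_re, abs_lt] at h2
  constructor <;> linarith

end Weld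

namespace WeldData
variable {F q : ℂ → ℂ} {U : Set ℂ}

/-- The boundary value at `∞` is not attained on the real axis: otherwise, on a small circle
around the real point, `w - m` would have a continuous logarithm. -/
lemma real_ne (h : WeldData F q U) (x : ℝ) : F (cay x) ≠ F 1 := by
  intro hx
  set c := F 1 with hc
  obtain ⟨x₁, hx₁, hx₁c⟩ := h.arc_real c (a := x - 1/2) (b := x) (by linarith)
  obtain ⟨x₂, hx₂, hx₂c⟩ := h.arc_real c (a := x) (b := x + 1/2) (by linarith)
  set m : ℝ := (x₁ + x₂) / 2 with hm
  set ρ : ℝ := (x₂ - x₁) / 2 with hρ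
  have hx1m : m - ρ = x₁ := by rw [hm, hρ]; ring
  have hx2m : m + ρ = x₂ := by rw [hm, hρ]; ring
  have hρ0 : 0 < ρ := by rw [hρ]; linarith [hx₁.2, hx₂.1]
  have hρ1 : ρ < 1 / 2 := by rw [hρ]; linarith [hx₁.1, hx₂.2]
  clear_value m ρ
  set G : ℂ → ℂ := fun w => F (cay w) with hG
  have hball : ∀ w ∈ Metric.closedBall (m : ℂ) (3/4), w ≠ -I := by
    intro w hw
    rw [mem_closedBall_iff_norm] at hw
    have := (abs_im_le_norm (w - m)).trans hw
    rw [sub_im, ofReal_im, abs_le] at this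
    exact ne_neg_I (by linarith)
  have hcayc : ContinuousOn cay (Metric.closedBall (m : ℂ) (3/4)) := fun w hw =>
    (cay_hasDerivAt (hball w hw)).continuousAt.continuousWithinAt
  have hGc' : ContinuousOn G (Metric.closedBall (m : ℂ) (3/4)) :=
    h.cont.comp_continuousOn hcayc
  have hGc : ContinuousOn G (Metric.ball (m : ℂ) (3/4)) := hGc'.mono Metric.ball_subset_closedBall
  set C := Metric.sphere (m : ℂ) ρ with hC
  have hCB : C ⊆ Metric.ball (m : ℂ) (3/4) := fun w hw => by
    rw [mem_sphere_iff_norm] at hw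
    rw [mem_ball_iff_norm, hw]; linarith
  have hCI : ∀ w ∈ C, w ≠ -I := fun w hw => hball w (Metric.ball_subset_closedBall (hCB hw))
  have hGC := hGc.mono hCB
  have hGne : ∀ w ∈ C, G w ≠ c := by
    intro w hw
    rcases lt_trichotomy w.im 0 with h1 | h1 | h1
    · have h2 := norm_cay_gt h1 (hCI w hw)
      exact (h.inj _ h2 1 (cay_ne_one (hCI w hw)).symm).symm
    · have hre : (w.re : ℂ) = w := Complex.ext (by simp) (by simp [h1])
      rw [mem_sphere_iff_norm, ← hre, ← ofReal_sub, Complex.norm_real, Real.norm_eq_abs] at hw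
      rcases (abs_eq hρ0.le).1 hw with h2 | h2
      · have : w.re = x₂ := by linarith
        rw [← hre, this]; exact hx₂c
      · have : w.re = x₁ := by linarith
        rw [← hre, this]; exact hx₁c
    · exact h.disj (norm_cay_lt h1) (by simp)
  have hCc : IsCompact C := isCompact_sphere _ _
  have hCne : C.Nonempty := ⟨(m + ρ : ℝ), by
    rw [hC, mem_sphere_iff_norm, ← ofReal_sub, Complex.norm_real, Real.norm_eq_abs]
    rw [add_sub_cancel_left, abs_of_pos hρ0]⟩
  obtain ⟨y, hy, hymin⟩ := hCc.exists_isMinOn hCne (f := fun w => ‖G w - c‖)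
    (hGC.sub continuousOn_const).norm
  set δ := ‖G y - c‖ with hδ
  have hδ0 : 0 < δ := norm_pos_iff.2 (sub_ne_zero.2 (hGne y hy))
  have hδC : ∀ w ∈ C, δ ≤ ‖G w - c‖ := fun w hw => hymin hw
  clear_value δ
  have hclose : ∀ v, ‖v - c‖ < δ → LogEq C (fun w => G w - v) (fun w => G w - c) := by
    intro v hv
    refine LogEq.of_close (hGC.sub continuousOn_const) (hGC.sub continuousOn_const) fun w hw => ?_
    rw [sub_sub_sub_cancel_left, norm_sub_rev]
    exact hv.trans_le (hδC w hw)
  -- Some value `F z` with `‖z‖ > 1`, as close to `c` as desired, is omitted by `G` on a whole ball,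
  -- so `G - c` has a continuous logarithm on `C`.
  have hlog : LogEq C (fun w => G w - c) (fun _ => 1) := by
    have hV : {z | ‖F z - c‖ < δ} ∩ (cay '' Metric.closedBall (m : ℂ) (3/4))ᶜ ∈ 𝓝 (1 : ℂ) := by
      refine inter_mem ?_ ?_
      · refine (isOpen_lt ((h.cont.sub continuous_const).norm) continuous_const).mem_nhds ?_
        simpa [hc] using hδ0
      · refine (((isCompact_closedBall _ _).image_of_continuousOn hcayc).isClosed.isOpen_compl).mem_nhds ?_
        rintro ⟨w, hw, hw1⟩
        exact cay_ne_one (hball w hw) hw1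
    obtain ⟨z, ⟨hz1, hz2⟩, hz⟩ := exists_outside (b := 1) (by simp) hV
    refine (hclose (F z) hz1).symm.trans ?_
    refine LogEq.of_convex Metric.isOpen_ball (convex_ball (m : ℂ) (3/4)) ⟨y, hCB hy⟩
      (hGc.sub continuousOn_const) (fun w hw => sub_ne_zero.2 ?_) hCB
    refine h.inj z hz _ fun h1 => hz2 ⟨w, Metric.ball_subset_closedBall hw, h1⟩
  -- For `z₀` in the lower half-plane near `x`, `G - G z₀` has a single simple zero in the ball,
  -- so `G - c` is in the class of `w - m` on `C`.
  have hxm : (x : ℂ) ∈ Metric.ball (m : ℂ) ρ := by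
    rw [mem_ball_iff_norm, ← ofReal_sub, Complex.norm_real, Real.norm_eq_abs, abs_lt]
    constructor <;> linarith [hx₁.2, hx₂.1]
  have hbb : Metric.ball (m : ℂ) ρ ⊆ Metric.ball (m : ℂ) (3/4) :=
    Metric.ball_subset_ball (by linarith)
  have hGx : ContinuousAt G x := hGc.continuousAt (Metric.isOpen_ball.mem_nhds (hbb hxm))
  have hev : ∀ᶠ w in 𝓝 (x : ℂ), ‖G w - c‖ < δ ∧ w ∈ Metric.ball (m : ℂ) ρ := by
    refine Filter.Eventually.and ?_ (Metric.isOpen_ball.mem_nhds hxm)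
    have h1 : Tendsto (fun w => ‖G w - c‖) (𝓝 (x : ℂ)) (𝓝 ‖G x - c‖) :=
      (hGx.sub continuousAt_const).norm
    refine h1.eventually_lt_const ?_
    have : G x = c := hx
    rw [this]; simpa using hδ0
  have ht : Tendsto (fun t : ℝ => (x : ℂ) + (t : ℂ) * I) (𝓝[<] 0) (𝓝 (x : ℂ)) := by
    have h1 : Continuous (fun t : ℝ => (x : ℂ) + (t : ℂ) * I) := by fun_prop
    have h2 := h1.tendsto 0
    simp only [ofReal_zero, zero_mul, add_zero] at h2
    exact h2.mono_left nhdsWithin_le_nhds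
  obtain ⟨t, ⟨ht1, ht2⟩, ht3⟩ := ((ht.eventually hev).and self_mem_nhdsWithin).exists
  set z₀ : ℂ := (x : ℂ) + (t : ℂ) * I with hz₀
  have hz₀im : z₀.im < 0 := by
    have : t < 0 := ht3
    simpa [hz₀] using this
  clear_value z₀
  have hz₀I := hball z₀ (Metric.ball_subset_closedBall (hbb ht2))
  have hz₀n := norm_cay_gt hz₀im hz₀I
  have hGd : HasDerivAt G (deriv F (cay z₀) * (2 * I / (z₀ + I) ^ 2)) z₀ :=
    ((h.diff.differentiableAt (isOpen_out.mem_nhds hz₀n)).hasDerivAt).comp z₀ (cay_hasDerivAt hz₀I)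
  have hds : LogEq C (dslope G z₀) (fun _ => 1) := by
    refine LogEq.of_convex Metric.isOpen_ball (convex_ball (m : ℂ) (3/4)) ⟨y, hCB hy⟩
      ((continuousOn_dslope (Metric.isOpen_ball.mem_nhds (hbb ht2))).2
        ⟨hGc, hGd.differentiableAt⟩) (fun w hw => ?_) hCB
    by_cases hwz : w = z₀
    · rw [hwz, dslope_same, hGd.deriv]
      exact mul_ne_zero (h.der _ hz₀n) (cay_deriv_ne hz₀I)
    · rw [dslope_of_ne _ hwz, slope_def_field]
      refine div_ne_zero (sub_ne_zero.2 ?_) (sub_ne_zero.2 hwz)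
      exact h.inj _ hz₀n _ fun h1 =>
        hwz (cay_inj (hball w (Metric.ball_subset_closedBall hw)) hz₀I h1)
  have h1 : LogEq C (fun w => (w - z₀) * dslope G z₀ w) (fun w => (w - m) * 1) := by
    refine LogEq.mul (LogEq.of_close (by fun_prop) (by fun_prop) fun w hw => ?_) hds
    rw [mem_sphere_iff_norm] at hw
    rw [mem_ball_iff_norm] at ht2
    rw [sub_sub_sub_cancel_left, hw, norm_sub_rev]; exact ht2
  have h2 : LogEq C (fun w => G w - G z₀) (fun w => w - m) := by
    refine h1.congr (fun w _ => ?_) (fun w _ => mul_one _)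
    rw [← smul_eq_mul, sub_smul_dslope]
  have h3 : LogEq C (fun w => w - m) (fun _ => (1 : ℂ) ^ 2) := by
    have := h2.symm.trans ((hclose _ ht1).trans hlog)
    simpa using this
  exact LogEq.no_pow (b := fun _ => 1) hρ0 le_rfl continuousOn_const h3

end WeldData

/-! ### Construction of the two conformal maps -/

lemma QS.of_quasisymmetricOn {k : ℝ} (hk : 0 < k) {f : ℝ → ℝ} (hf : QuasisymmetricOn f k univ) :
    QS f k := by
  obtain ⟨h1, h2, h3⟩ := hf
  have hm : StrictMono f := strictMonoOn_univ.1 h2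
  have hpos : ∀ x t, 0 < t → 0 < f x - f (x - t) := fun x t ht => sub_pos.2 (hm (by linarith))
  refine ⟨continuousOn_univ.1 h1, hm, ?_, fun x t ht => ?_, fun x t ht => ?_⟩
  · obtain ⟨h4, h5⟩ := h3 0 1 one_pos (mem_univ _) (mem_univ _) (mem_univ _)
    have h6 := h4.trans h5
    rw [div_le_iff₀ hk] at h6
    nlinarith
  · obtain ⟨h4, h5⟩ := h3 x t ht (mem_univ _) (mem_univ _) (mem_univ _)
    rwa [div_le_iff₀ (hpos x t ht)] at h5
  · obtain ⟨h4, h5⟩ := h3 x t ht (mem_univ _) (mem_univ _) (mem_univ _)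
    rw [div_le_div_iff₀ hk (hpos x t ht)] at h4
    linarith

lemma dee_dbar_holo_comp {T q : ℂ → ℂ} {w T' : ℂ} (hT : HasDerivAt T T' (q w))
    (hq : DifferentiableAt ℝ q w) :
    dee (T ∘ q) w = T' * dee q w ∧ dbar (T ∘ q) w = T' * dbar q w := by
  have h1 : HasFDerivAt T ((ContinuousLinearMap.toSpanSingleton ℂ T').restrictScalars ℝ) (q w) :=
    hT.hasFDerivAt.restrictScalars ℝ
  have h2 := (h1.comp w hq.hasFDerivAt).fderiv
  rw [dee, dbar, dee, dbar, h2]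
  simp
  constructor <;> ring

lemma isOpen_upper : IsOpen {w : ℂ | 0 < w.im} := isOpen_lt continuous_const continuous_im
lemma isOpen_lower : IsOpen {w : ℂ | w.im < 0} := isOpen_lt continuous_im continuous_const

/-- The solution of the Beltrami equation whose dilatation in the unit disc comes from the
Beurling–Ahlfors extension of `f`. -/
lemma QS.exists_weldData {f : ℝ → ℝ} {k : ℝ} (h : QS f k) :
    ∃ F, WeldData F (cay ∘ ba f) {w | 0 < w.im} := by
  have hk := h.one_le
  have hκ : √((2 * k * (k + 1) - 1) / (2 * k * (k + 1) + 1)) < 1 := by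
    rw [Real.sqrt_lt' one_pos, one_pow, div_lt_one (by positivity)]; linarith
  have hbI : ∀ w : ℂ, 0 < w.im → ba f w ≠ -I := fun w hw =>
    ne_neg_I (by linarith [h.ba_im_pos hw])
  have hinj : InjOn (cay ∘ ba f) {w | 0 < w.im} := fun w hw w' hw' heq =>
    h.ba_inj (cay_inj (hbI w hw) (hbI w' hw') heq)
  have himg : (cay ∘ ba f) '' {w | 0 < w.im} = Metric.ball 0 1 := by
    apply Subset.antisymm
    · rintro _ ⟨w, hw, rfl⟩
      rw [mem_ball_zero_iff]
      exact norm_cay_lt (h.ba_im_pos hw)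
    · intro z hz
      rw [mem_ball_zero_iff] at hz
      have hz1 : z ≠ 1 := by rintro rfl; simp at hz
      have him : 0 < (cayInv z).im := by
        by_contra hcon
        rcases (not_lt.1 hcon).lt_or_eq with h1 | h1
        · have := norm_cay_gt h1 (cayInv_ne hz1)
          rw [cay_cayInv hz1] at this; linarith
        · have := norm_cay_eq h1
          rw [cay_cayInv hz1] at this; linarith
      obtain ⟨w, hw, hwz⟩ := h.ba_surj him
      exact ⟨w, hw, by rw [Function.comp_apply, hwz, cay_cayInv hz1]⟩
  have hcay : ∀ w : ℂ, 0 < w.im → AnalyticAt ℂ cay (ba f w) := by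
    intro w hw
    have : DifferentiableOn ℂ cay {w | 0 < w.im} := fun v hv => by
      have hv : 0 < v.im := hv
      exact (cay_hasDerivAt (ne_neg_I (by linarith))).differentiableAt.differentiableWithinAt
    exact this.analyticAt (isOpen_upper.mem_nhds (h.ba_im_pos hw))
  have hnhds : ∀ w ∈ {w : ℂ | 0 < w.im}, map (cay ∘ ba f) (𝓝 w) = 𝓝 ((cay ∘ ba f) w) := by
    intro w hw
    rw [← Filter.map_map, h.ba_nhds hw]
    have hana := hcay w hw
    have hd : HasStrictDerivAt cay (deriv cay (ba f w)) (ba f w) := hana.hasStrictDerivAt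
    rw [(cay_hasDerivAt (hbI w hw)).deriv] at hd
    exact hd.map_nhds_eq (cay_deriv_ne (hbI w hw))
  have hchain : ∀ w : ℂ, 0 < w.im →
      dee (cay ∘ ba f) w = 2 * I / (ba f w + I) ^ 2 * dee (ba f) w ∧
      dbar (cay ∘ ba f) w = 2 * I / (ba f w + I) ^ 2 * dbar (ba f) w := fun w hw =>
    dee_dbar_holo_comp (cay_hasDerivAt (hbI w hw)) ((h.ba_contDiffAt hw).differentiableAt one_ne_zero)
  obtain ⟨F, h1, h2, h3, h4, h5⟩ := exists_F_of_q (q := cay ∘ ba f) (Real.sqrt_nonneg _) hκ isOpen_upper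
    (fun w hw => ((hcay w hw).contDiffAt.restrict_scalars ℝ).comp w (h.ba_contDiffAt hw))
    hinj himg hnhds
    (fun w hw => by
      rw [(hchain w hw).1]
      exact mul_ne_zero (cay_deriv_ne (hbI w hw)) (norm_pos_iff.1 (h.ba_dil hw).1))
    (fun w hw => by
      rw [(hchain w hw).1, (hchain w hw).2, norm_mul, norm_mul]
      have := mul_le_mul_of_nonneg_left (h.ba_dil hw).2 (norm_nonneg (2 * I / (ba f w + I) ^ 2))
      linarith)
  exact ⟨F, ⟨⟨h1, h2, h3, fun z hz => (h4 z hz).1, fun z hz => (h4 z hz).2⟩, isOpen_upper,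
    convex_halfSpace_im_gt 0, hinj, himg, hnhds, h5⟩⟩

lemma isOpen_image_of_injOn {g : ℂ → ℂ} {U : Set ℂ} (hU : IsOpen U) (hc : IsPreconnected U)
    (hg : DifferentiableOn ℂ g U) (hinj : InjOn g U) {a b : ℂ} (ha : a ∈ U) (hb : b ∈ U)
    (hab : a ≠ b) : IsOpen (g '' U) := by
  refine ((hg.analyticOnNhd hU).is_constant_or_isOpen hc).resolve_left ?_ U Subset.rfl hU
  rintro ⟨c, hcon⟩
  exact hab (hinj ha hb ((hcon a ha).trans (hcon b hb).symm))

/-- `1 / (F - F 1)` composed with the Cayley transform, written in the coordinate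
`s = 1 / cay w` so that it is also defined, with value `0`, at `w = -I`. -/
noncomputable def lowerMap (F : ℂ → ℂ) (w : ℂ) : ℂ :=
  (w + I) / (w - I) / psi F (F 1) ((w + I) / (w - I))

lemma sub_I_ne {w : ℂ} (hw : w.im ≤ 0) : w - I ≠ 0 := by
  intro h
  rw [sub_eq_zero.1 h] at hw
  simp at hw
  linarith

lemma lowerMap_neg_I (F : ℂ → ℂ) : lowerMap F (-I) = 0 := by simp [lowerMap]

lemma lowerMap_eq (F : ℂ → ℂ) {w : ℂ} (hw : w.im ≤ 0) (hw' : w ≠ -I) :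
    lowerMap F w = (F (cay w) - F 1)⁻¹ := by
  have h1 := add_I_ne hw'
  have h2 := sub_I_ne hw
  have h3 : (w + I) / (w - I) ≠ 0 := div_ne_zero h1 h2
  rw [lowerMap, psi_eq _ _ h3, inv_div, cay, div_mul_eq_div_div, div_self h3, one_div]

end Sewing

open Sewing in
/-- **Sewing theorem.** If `f : ℝ → ℝ` is `k`-quasisymmetric on the whole real
axis, then the upper and lower half-planes can be mapped conformally (i.e. by
injective holomorphic maps, continuous up to the real axis) onto disjoint
Jordan domains `D, Ω` by maps `φ, φ*` with `φ(x) = φ*(f(x))` for all real `x`. -/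
theorem sewing_theorem (k : ℝ) (hk : 0 < k) (f : ℝ → ℝ)
    (hf : QuasisymmetricOn f k Set.univ) :
    ∃ φ φstar : ℂ → ℂ,
      DifferentiableOn ℂ φ {z : ℂ | 0 < z.im}
      ∧ Set.InjOn φ {z : ℂ | 0 < z.im}
      ∧ DifferentiableOn ℂ φstar {z : ℂ | z.im < 0}
      ∧ Set.InjOn φstar {z : ℂ | z.im < 0}
      ∧ ContinuousOn φ {z : ℂ | 0 ≤ z.im}
      ∧ ContinuousOn φstar {z : ℂ | z.im ≤ 0}
      ∧ IsOpen (φ '' {z : ℂ | 0 < z.im})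
      ∧ IsOpen (φstar '' {z : ℂ | z.im < 0})
      ∧ Disjoint (φ '' {z : ℂ | 0 < z.im}) (φstar '' {z : ℂ | z.im < 0})
      ∧ ∀ x : ℝ, φ (x : ℂ) = φstar ((f x : ℝ) : ℂ) := by

  have hq := QS.of_quasisymmetricOn hk hf
  obtain ⟨F, h⟩ := hq.exists_weldData
  have hout : ∀ w : ℂ, w.im < 0 → w ≠ -I → F (cay w) ≠ F 1 := fun w hw hw' =>
    (h.inj _ (norm_cay_gt hw hw') 1 (cay_ne_one hw').symm).symm
  have hreal : ∀ w : ℂ, w.im = 0 → F (cay w) ≠ F 1 := fun w hw => by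
    have hre : (w.re : ℂ) = w := Complex.ext (by simp) (by simp [hw])
    rw [← hre]; exact h.real_ne _
  have hin : ∀ w : ℂ, 0 < w.im → F (cay w) ≠ F 1 := fun w hw =>
    h.disj (norm_cay_lt hw) (by simp)
  have hup : ∀ w : ℂ, 0 ≤ w.im → F (cay w) ≠ F 1 := fun w hw =>
    hw.lt_or_eq.elim (hin w) fun h1 => hreal w h1.symm
  have hba : ∀ w : ℂ, 0 ≤ w.im → 0 ≤ (ba f w).im := fun w hw => by
    rcases hw.lt_or_eq with h1 | h1
    · exact (hq.ba_im_pos h1).le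
    · have hre : (w.re : ℂ) = w := Complex.ext (by simp) (by simp [← h1])
      rw [← hre, QS.ba_real]; simp
  have hs : ∀ w : ℂ, w.im < 0 → (w + I) / (w - I) ∈ Metric.ball (0 : ℂ) 1 := fun w hw => by
    rw [mem_ball_zero_iff]
    by_cases h1 : w = -I
    · simp [h1]
    · have h2 := norm_cay_gt hw h1
      have h3 : (w + I) / (w - I) = (cay w)⁻¹ := by rw [cay, inv_div]
      rw [h3, norm_inv]
      exact inv_lt_one_of_one_lt₀ h2
  have hpsi : ∀ w : ℂ, w.im ≤ 0 → psi F (F 1) ((w + I) / (w - I)) ≠ 0 := fun w hw => by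
    by_cases h1 : w = -I
    · simp [h1, psi_zero]
    · rw [psi_eq _ _ (div_ne_zero (add_I_ne h1) (sub_I_ne hw)), inv_div]
      refine mul_ne_zero (div_ne_zero (add_I_ne h1) (sub_I_ne hw)) (sub_ne_zero.2 ?_)
      rcases hw.lt_or_eq with h2 | h2
      · exact hout w h2 h1
      · exact hreal w h2
  have hφd : DifferentiableOn ℂ (fun w => (F (cay (ba f w)) - F 1)⁻¹) {z : ℂ | 0 < z.im} :=
    (h.holo.sub_const (F 1)).fun_inv fun w hw => sub_ne_zero.2 (hin _ (hq.ba_im_pos hw))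
  have hφi : Set.InjOn (fun w => (F (cay (ba f w)) - F 1)⁻¹) {z : ℂ | 0 < z.im} := by
    intro w hw w' hw' heq
    exact h.inj_comp hw hw' (sub_left_injective (inv_injective heq))
  have hψd : DifferentiableOn ℂ (lowerMap F) {z : ℂ | z.im < 0} := by
    have h1 : DifferentiableOn ℂ (fun w : ℂ => (w + I) / (w - I)) {z : ℂ | z.im < 0} :=
      DifferentiableOn.fun_div (by fun_prop) (by fun_prop)
        fun w hw => sub_I_ne (le_of_lt hw)
    exact h1.fun_div ((h.psi_diff (F 1)).comp h1 hs) fun w hw => hpsi w (le_of_lt hw)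
  have hψi : Set.InjOn (lowerMap F) {z : ℂ | z.im < 0} := by
    have key : ∀ w : ℂ, w.im < 0 → w ≠ -I → lowerMap F w ≠ 0 := fun w hw h1 => by
      rw [lowerMap_eq F hw.le h1]; exact inv_ne_zero (sub_ne_zero.2 (hout w hw h1))
    intro w hw w' hw' heq
    have hw : w.im < 0 := hw
    have hw' : w'.im < 0 := hw'
    by_cases h1 : w = -I
    · by_contra h2
      rw [h1, lowerMap_neg_I] at heq
      exact key w' hw' (fun h3 => h2 (h1.trans h3.symm)) heq.symm
    by_cases h1' : w' = -I
    · rw [h1', lowerMap_neg_I] at heq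
      exact absurd heq (key w hw h1)
    rw [lowerMap_eq F hw.le h1, lowerMap_eq F hw'.le h1'] at heq
    have h2 : F (cay w) = F (cay w') := sub_left_injective (inv_injective heq)
    by_contra h3
    exact h.inj _ (norm_cay_gt hw' h1') _ (fun h4 => h3 (cay_inj h1 h1' h4)) h2
  refine ⟨fun w => (F (cay (ba f w)) - F 1)⁻¹, lowerMap F, hφd, hφi, hψd, hψi, ?_, ?_, ?_, ?_, ?_, ?_⟩
  · intro w hw
    have hb := hba w hw
    have h1 : ContinuousAt (fun w => F (cay (ba f w))) w :=
      h.cont.continuousAt.comp (ContinuousAt.comp (f := ba f) (g := cay)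
        (cay_hasDerivAt (ne_neg_I (by linarith))).continuousAt hq.ba_cont.continuousAt)
    exact ((h1.sub continuousAt_const).inv₀ (sub_ne_zero.2 (hup _ hb))).continuousWithinAt
  · intro w hw
    have h1 : ContinuousAt (fun w : ℂ => (w + I) / (w - I)) w :=
      ContinuousAt.div (by fun_prop) (by fun_prop) (sub_I_ne hw)
    exact (h1.div ((h.psi_cont (F 1)).continuousAt.comp h1) (hpsi w hw)).continuousWithinAt
  · exact isOpen_image_of_injOn isOpen_upper (convex_halfSpace_im_gt 0).isPreconnected hφd hφi
      (a := I) (b := I + I) (by simp) (by simp) (by simp)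
  · exact isOpen_image_of_injOn isOpen_lower (convex_halfSpace_im_lt 0).isPreconnected hψd hψi
      (a := -I) (b := -I + -I) (by simp) (by simp) (by simp)
  · rw [Set.disjoint_left]
    rintro _ ⟨w, hw, rfl⟩ ⟨w', hw', heq⟩
    have hw : 0 < w.im := hw
    have hw' : w'.im < 0 := hw'
    have hb := hq.ba_im_pos hw
    by_cases h1 : w' = -I
    · rw [h1, lowerMap_neg_I] at heq
      exact inv_ne_zero (sub_ne_zero.2 (hin _ hb)) heq.symm
    · rw [lowerMap_eq F hw'.le h1] at heq
      have h2 : F (cay w') = F (cay (ba f w)) := sub_left_injective (inv_injective heq)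
      have h3 := norm_cay_gt hw' h1
      refine h.inj _ h3 (cay (ba f w)) (fun h4 => ?_) h2.symm
      have := norm_cay_lt hb
      rw [h4] at this
      linarith
  · intro x
    rw [lowerMap_eq F (by simp) (ne_neg_I (by simp))]
    simp only [QS.ba_real]
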